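/- Let s > 11/2 and suppose (ξ_k)_{k≥1} satisfies Σ_{k≥1} ‖ξ_k‖_{H^σ} < ∞ for every σ ≥ 0. For ε ∈ (0,1) and X = (u,η) ∈ H^s(𝕋) × H^{s-1}(𝕋), set g_ε(X) = (−J_ε[J_ε u · ∂_x J_ε u] + ½ J_ε³ (1−∂²_x)^{-1} Σ_k 𝓛²_{ξ_k} (1−∂²_x) J_ε u, −J_ε[J_ε u · ∂_x J_ε η] + ½ J_ε³ Σ_k 𝓛²_{ξ_k} J_ε η) and h_ε^k(X) = (−J_ε (1−∂²_x)^{-1} 𝓛_{ξ_k} (1−∂²_x) J_ε u, −J_ε 𝓛_{ξ_k} J_ε η). Then there is a constant C > 0, independent of ε, such that for all X: 2 (g_ε(X), X)_{H^s×H^{s-1}} + Σ_{k=1}^∞ ‖h_ε^k(X)‖²_{H^s×H^{s-1}} ≤ C (1 + ‖∂_x u‖_{L^∞} + ‖∂_x η‖_{L^∞}) (‖u‖²_{H^s} + ‖η‖²_{H^{s-1}}). -/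

import Mathlib

noncomputable section
open scoped BigOperators

/-- A (complex-valued) function on the torus `𝕋 = ℝ/2πℤ`, represented by its sequence of
Fourier coefficients `f̂ : ℤ → ℂ`. -/
abbrev FC := ℤ → ℂ

namespace FC

/-- The Sobolev weight `(1+k²)^s`. -/
def wt (s : ℝ) (k : ℤ) : ℝ := (1 + (k : ℝ) ^ 2) ^ s

/-- `c` represents a function belonging to the Sobolev space `H^s(𝕋)`. -/
def memHs (s : ℝ) (c : FC) : Prop := Summable fun k : ℤ => wt s k * ‖c k‖ ^ 2

/-- The `H^s(𝕋)` norm: `‖f‖²_{H^s} = Σ_{k∈ℤ} (1+k²)^s |f̂(k)|²`. -/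
def hsNorm (s : ℝ) (c : FC) : ℝ := Real.sqrt (∑' k : ℤ, wt s k * ‖c k‖ ^ 2)

/-- The `H^s(𝕋)` inner product `(f,g)_{H^s} = Σ_{k∈ℤ} (1+k²)^s f̂(k) conj(ĝ(k))`
(its real part; the sum is real for real-valued functions). -/
def hsInner (s : ℝ) (c d : FC) : ℝ :=
  (∑' k : ℤ, ((wt s k : ℂ) * (c k * (starRingEnd ℂ) (d k)))).re

/-- `c` represents a real-valued function (conjugate-symmetric coefficients). -/
def isReal (c : FC) : Prop := ∀ k : ℤ, c (-k) = (starRingEnd ℂ) (c k)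

/-- The derivative `∂ₓ`, i.e. the Fourier multiplier `ik`. -/
def D1 (c : FC) : FC := fun k => Complex.I * (k : ℂ) * c k

/-- The pointwise product of functions, i.e. convolution of Fourier coefficients. -/
def mul (c d : FC) : FC := fun k => ∑' j : ℤ, c j * d (k - j)

/-- The represented function, evaluated at `x ∈ ℝ`. -/
def eval (c : FC) (x : ℝ) : ℂ := ∑' k : ℤ, c k * Complex.exp (Complex.I * (k : ℂ) * (x : ℂ))

/-- The `L^∞` norm (supremum of the represented periodic function over ℝ). -/
def linfty (c : FC) : ℝ := ⨆ x : ℝ, ‖eval c x‖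

/-- The `W^{1,∞}` norm. -/
def w1infty (c : FC) : ℝ := linfty c + linfty (D1 c)

/-- A Fourier multiplier operator with real symbol `m`. -/
def mult (m : ℤ → ℝ) (c : FC) : FC := fun k => (m k : ℂ) * c k

/-- The operator `(1-∂ₓ²)⁻¹`, i.e. the Fourier multiplier `(1+k²)⁻¹`. -/
def helmInv : FC → FC := mult fun k => (1 + (k : ℝ) ^ 2)⁻¹

/-- The operator `1-∂ₓ²`, i.e. the Fourier multiplier `1+k²`. -/
def helm : FC → FC := mult fun k => 1 + (k : ℝ) ^ 2

/-- The operator `T̃_ε = (1-ε²∂ₓ²)⁻¹`, i.e. the Fourier multiplier `(1+ε²k²)⁻¹`. -/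
def T (ε : ℝ) : FC → FC := mult fun k => (1 + ε ^ 2 * (k : ℝ) ^ 2)⁻¹

/-- The periodic Hilbert transform, i.e. the Fourier multiplier `-i·sgn(k)`. -/
def hilbert (c : FC) : FC := fun k => -Complex.I * (Int.sign k : ℂ) * c k

/-- The Friedrichs-type mollifier `J_ε`, the Fourier multiplier `ĵ(εk)`. -/
def Jmol (jhat : ℝ → ℝ) (ε : ℝ) : FC → FC := mult fun k => jhat (ε * (k : ℝ))

/-- The generalized Lie derivative `𝓛_ξ f = ξ ∂ₓ f + (∂ₓ ξ) f`. -/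
def lie (ξ c : FC) : FC := mul ξ (D1 c) + mul (D1 ξ) c

/-- `𝓛²_ξ f = 𝓛_ξ (𝓛_ξ f)`. -/
def lie2 (ξ c : FC) : FC := lie ξ (lie ξ c)

/-- The coefficientwise sum `Σ_{k∈ℕ} F k` of a sequence of functions. -/
def tsumFC (F : ℕ → FC) : FC := fun m => ∑' k : ℕ, F k m

/-- The norm on the product space `H^{s₁}×H^{s₂}`. -/
def pairNorm (s₁ s₂ : ℝ) (c d : FC) : ℝ := Real.sqrt (hsNorm s₁ c ^ 2 + hsNorm s₂ d ^ 2)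

/-- The inner product on the product space `H^{s₁}×H^{s₂}`:
`((c₁,d₁),(c₂,d₂)) ↦ (c₁,c₂)_{H^{s₁}} + (d₁,d₂)_{H^{s₂}}`. -/
def pairInner (s₁ s₂ : ℝ) (c₁ d₁ c₂ d₂ : FC) : ℝ := hsInner s₁ c₁ c₂ + hsInner s₂ d₁ d₂

end FC

/-- First component of the mollified diffusion coefficient `h_ε^k`:
`−J_ε (1−∂ₓ²)⁻¹ 𝓛_{ξ_k} (1−∂ₓ²) J_ε u`. -/
def hMol1 (jh : ℝ → ℝ) (ε : ℝ) (ξ : ℕ → FC) (k : ℕ) (u : FC) : FC :=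
  -(FC.Jmol jh ε (FC.helmInv (FC.lie (ξ k) (FC.helm (FC.Jmol jh ε u)))))

/-- Second component of the mollified diffusion coefficient `h_ε^k`:
`−J_ε 𝓛_{ξ_k} J_ε η`. -/
def hMol2 (jh : ℝ → ℝ) (ε : ℝ) (ξ : ℕ → FC) (k : ℕ) (η : FC) : FC :=
  -(FC.Jmol jh ε (FC.lie (ξ k) (FC.Jmol jh ε η)))

/-- First component of the mollified singular drift `g_ε`:
`−J_ε[J_ε u · ∂ₓ J_ε u] + ½ J_ε³ (1−∂ₓ²)⁻¹ Σ_k 𝓛²_{ξ_k} (1−∂ₓ²) J_ε u`. -/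
def gMol1 (jh : ℝ → ℝ) (ε : ℝ) (ξ : ℕ → FC) (u : FC) : FC :=
  -(FC.Jmol jh ε (FC.mul (FC.Jmol jh ε u) (FC.D1 (FC.Jmol jh ε u)))) +
    (1 / 2 : ℝ) • (FC.Jmol jh ε (FC.Jmol jh ε (FC.Jmol jh ε
      (FC.helmInv (FC.tsumFC fun k => FC.lie2 (ξ k) (FC.helm (FC.Jmol jh ε u)))))))

/-- Second component of the mollified singular drift `g_ε`:
`−J_ε[J_ε u · ∂ₓ J_ε η] + ½ J_ε³ Σ_k 𝓛²_{ξ_k} J_ε η`. -/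
def gMol2 (jh : ℝ → ℝ) (ε : ℝ) (ξ : ℕ → FC) (u η : FC) : FC :=
  -(FC.Jmol jh ε (FC.mul (FC.Jmol jh ε u) (FC.D1 (FC.Jmol jh ε η)))) +
    (1 / 2 : ℝ) • (FC.Jmol jh ε (FC.Jmol jh ε (FC.Jmol jh ε
      (FC.tsumFC fun k => FC.lie2 (ξ k) (FC.Jmol jh ε η)))))

/-!
Since the multiplier `J_ε` is self-adjoint, the transport term is `(f ∂ₓ g, g)_{H^σ}` with
`f = J_ε u` and `g = J_ε v`, a bilinear form in the coefficients of `g` with kernel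
`(1+k²)^σ m f̂(k-m)`. Off the diagonal the kernel splits by dyadic blocks into pieces in which the
low frequency factor `∂ₓ f` or `∂ₓ g` acts as a Toeplitz kernel, of norm its sup norm. Near the
diagonal, adding the complex conjugate replaces `(1+k²)^σ m` by `(1+k²)^σ m - (1+m²)^σ k`, which is
`k - m` times a Schur multiplier of order `2σ` by Löwner's integral representation of fractional
powers, so `‖∂ₓ f‖_{L^∞}` suffices again. As the profile of `J_ε` need not be even, `f` is real only
up to an error `O(ε ‖∂ₓ u‖_{L^∞})`, which pays for one derivative of `g`.

The Itô correction and the quadratic variation combine into a trilinear form in `ξ̂`, `ξ̂` and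
`w = (1-∂ₓ²)^p J_ε v` whose symbol involves `Q(x) = (1+x²)^{σ-2p} ĵ(εx)²`. Each of the two parts
loses two derivatives, but after symmetrization over the variables only first and mixed second
differences of `Q` survive. These gain the two derivatives back uniformly in `ε`, because
`x ↦ ĵ(εx)` satisfies the symbol estimates of order zero uniformly in `ε`.
-/

namespace FC

/-! ### Weights -/

/-- The weight `1 + |k|`, which unlike `(1 + k²)^{1/2}` is submultiplicative without a constant. -/
def bracket (k : ℤ) : ℝ := 1 + |(k : ℝ)|

lemma one_le_bracket (k : ℤ) : 1 ≤ bracket k := le_add_of_nonneg_right (abs_nonneg _)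

lemma bracket_pos (k : ℤ) : 0 < bracket k := one_pos.trans_le (one_le_bracket k)

lemma abs_le_bracket (k : ℤ) : |(k : ℝ)| ≤ bracket k := le_add_of_nonneg_left zero_le_one

lemma bracket_neg (k : ℤ) : bracket (-k) = bracket k := by simp [bracket]

lemma bracket_add_le_mul (k m : ℤ) : bracket (k + m) ≤ bracket k * bracket m := by
  simp only [bracket, Int.cast_add]
  nlinarith [abs_add_le (k : ℝ) (m : ℝ), mul_nonneg (abs_nonneg (k : ℝ)) (abs_nonneg (m : ℝ))]

lemma bracket_sub_le_mul (k m : ℤ) : bracket (k - m) ≤ bracket k * bracket m := by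
  simpa only [sub_eq_add_neg, bracket_neg] using bracket_add_le_mul k (-m)

lemma one_add_sq_pos (k : ℤ) : (0 : ℝ) < 1 + (k : ℝ) ^ 2 := by positivity

lemma wt_pos (s : ℝ) (k : ℤ) : 0 < wt s k := Real.rpow_pos_of_pos (one_add_sq_pos k) s

lemma wt_mul_wt (a b : ℝ) (k : ℤ) : wt a k * wt b k = wt (a + b) k :=
  (Real.rpow_add (one_add_sq_pos k) a b).symm

lemma wt_zero (k : ℤ) : wt 0 k = 1 := Real.rpow_zero _

lemma wt_one (k : ℤ) : wt 1 k = 1 + (k : ℝ) ^ 2 := Real.rpow_one _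

lemma wt_natCast (n : ℕ) (k : ℤ) : wt n k = (1 + (k : ℝ) ^ 2) ^ n := Real.rpow_natCast _ n

lemma wt_neg_one (k : ℤ) : wt (-1) k = (1 + (k : ℝ) ^ 2)⁻¹ := Real.rpow_neg_one _

lemma wt_mono {a b : ℝ} (h : a ≤ b) (k : ℤ) : wt a k ≤ wt b k :=
  Real.rpow_le_rpow_of_exponent_le (le_add_of_nonneg_right (sq_nonneg _)) h

lemma one_le_wt {a : ℝ} (h : 0 ≤ a) (k : ℤ) : 1 ≤ wt a k := by
  simpa only [wt_zero] using wt_mono h k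

lemma wt_half_sq (s : ℝ) (k : ℤ) : wt (s / 2) k ^ 2 = wt s k := by
  rw [sq, wt_mul_wt, add_halves]

lemma one_add_sq_le_bracket_sq (k : ℤ) : 1 + (k : ℝ) ^ 2 ≤ bracket k ^ 2 := by
  rw [← sq_abs (k : ℝ)]; unfold bracket; nlinarith [abs_nonneg (k : ℝ)]

lemma bracket_sq_le (k : ℤ) : bracket k ^ 2 ≤ 2 * (1 + (k : ℝ) ^ 2) := by
  rw [← sq_abs (k : ℝ)]; unfold bracket; nlinarith [sq_nonneg (|(k : ℝ)| - 1)]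

lemma exists_wt_le_bracket_pow (a : ℝ) : ∃ p : ℕ, ∀ k : ℤ, wt a k ≤ bracket k ^ p := by
  obtain ⟨n, hn⟩ := exists_nat_ge a
  refine ⟨2 * n, fun k => (wt_mono hn k).trans ?_⟩
  rw [wt_natCast, pow_mul]
  gcongr
  exact one_add_sq_le_bracket_sq k

lemma bracket_pow_le_wt (p : ℕ) (k : ℤ) : bracket k ^ p ≤ 2 ^ p * wt (p : ℝ) k := by
  rw [wt_natCast, ← mul_pow]
  gcongr
  · exact (bracket_pos k).le
  · exact (le_self_pow₀ (one_le_bracket k) two_ne_zero).trans (bracket_sq_le k)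

lemma summable_wt {b : ℝ} (hb : b < -1 / 2) : Summable (wt b) := by
  have hdom : Summable fun k : ℤ => |(k : ℝ)| ^ (-(-2 * b)) :=
    Real.summable_abs_int_rpow (by linarith)
  refine .of_norm_bounded_eventually hdom ?_
  filter_upwards [(Set.finite_singleton (0 : ℤ)).compl_mem_cofinite] with k hk
  have hk' : 0 < |(k : ℝ)| := abs_pos.2 (Int.cast_ne_zero.2 hk)
  calc ‖wt b k‖ = wt b k := Real.norm_of_nonneg (wt_pos b k).le
    _ ≤ (|(k : ℝ)| ^ 2) ^ b := Real.rpow_le_rpow_of_nonpos (by positivity)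
        (by rw [sq_abs]; linarith) (by linarith)
    _ = |(k : ℝ)| ^ (-(-2 * b)) := by
        rw [← Real.rpow_natCast, ← Real.rpow_mul hk'.le]; congr 1; push_cast; ring

lemma mul_bracket_pow_le_mul_wt_neg_one {x C : ℝ} {p : ℕ} {k : ℤ} (hx : 0 ≤ x)
    (h : x * bracket k ^ (p + 2) ≤ C) : x * bracket k ^ p ≤ C * wt (-1) k := by
  rw [wt_neg_one, ← div_eq_mul_inv, le_div_iff₀ (one_add_sq_pos k)]
  have hb := bracket_pos k
  calc x * bracket k ^ p * (1 + (k : ℝ) ^ 2) ≤ x * bracket k ^ p * bracket k ^ 2 := by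
        gcongr; exact one_add_sq_le_bracket_sq k
    _ = x * bracket k ^ (p + 2) := by ring
    _ ≤ C := h

/-! ### Rapidly decreasing coefficients and Sobolev norms -/

/-- Coefficients decaying faster than every polynomial, i.e. those of smooth functions. All
rearrangements of sums are carried out for such sequences. -/
def RapidDecay (c : FC) : Prop := ∀ p : ℕ, ∃ C : ℝ, ∀ k : ℤ, ‖c k‖ * bracket k ^ p ≤ C

namespace RapidDecay

variable {c d : FC}

lemma of_norm_le (hc : RapidDecay c) (q : ℕ) (A : ℝ)
    (h : ∀ k, ‖d k‖ ≤ A * bracket k ^ q * ‖c k‖) : RapidDecay d := by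
  intro p
  obtain ⟨C, hC⟩ := hc (q + p)
  refine ⟨|A| * C, fun k => ?_⟩
  have hb := bracket_pos k
  calc ‖d k‖ * bracket k ^ p ≤ (|A| * bracket k ^ q * ‖c k‖) * bracket k ^ p := by
        gcongr; exact (h k).trans (by gcongr; exact le_abs_self A)
    _ = |A| * (‖c k‖ * bracket k ^ (q + p)) := by rw [pow_add]; ring
    _ ≤ |A| * C := by gcongr; exact hC k

lemma summable_mul_bracket_pow (hc : RapidDecay c) (p : ℕ) :
    Summable fun k => ‖c k‖ * bracket k ^ p := by
  obtain ⟨C, hC⟩ := hc (p + 2)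
  exact .of_nonneg_of_le (fun k => mul_nonneg (norm_nonneg _) (pow_pos (bracket_pos k) _).le)
    (fun k => mul_bracket_pow_le_mul_wt_neg_one (norm_nonneg _) (hC k))
    ((summable_wt (b := -1) (by norm_num)).mul_left C)

lemma summable (hc : RapidDecay c) : Summable fun k => ‖c k‖ := by
  simpa only [pow_zero, mul_one] using hc.summable_mul_bracket_pow 0

lemma exists_norm_le (hc : RapidDecay c) : ∃ C : ℝ, 0 ≤ C ∧ ∀ k, ‖c k‖ ≤ C := by
  obtain ⟨C, hC⟩ := hc 0
  have hC' : ∀ k, ‖c k‖ ≤ C := by simpa only [pow_zero, mul_one] using hC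
  exact ⟨C, (norm_nonneg _).trans (hC' 0), hC'⟩

lemma summable_norm_sq (hc : RapidDecay c) : Summable fun k => ‖c k‖ ^ 2 := by
  obtain ⟨C, -, hC⟩ := hc.exists_norm_le
  refine .of_nonneg_of_le (fun k => sq_nonneg _) (fun k => ?_) (hc.summable.mul_left C)
  rw [sq]; gcongr; exact hC k

lemma wt_mul (hc : RapidDecay c) (a : ℝ) : RapidDecay fun k => (wt a k : ℂ) * c k := by
  obtain ⟨p, hp⟩ := exists_wt_le_bracket_pow a
  refine hc.of_norm_le p 1 fun k => ?_
  rw [norm_mul, Complex.norm_real, Real.norm_of_nonneg (wt_pos a k).le, one_mul]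
  gcongr; exact hp k

lemma D1 (hc : RapidDecay c) : RapidDecay (D1 c) := by
  refine hc.of_norm_le 1 1 fun k => ?_
  simp only [FC.D1, norm_mul, Complex.norm_I, one_mul, pow_one, Complex.norm_intCast]
  gcongr
  exact abs_le_bracket k

lemma memHs (hc : RapidDecay c) (s : ℝ) : memHs s c := by
  refine (hc.wt_mul (s / 2)).summable_norm_sq.congr fun k => ?_
  rw [norm_mul, mul_pow, Complex.norm_real, Real.norm_of_nonneg (wt_pos _ k).le, wt_half_sq]

end RapidDecay

lemma wt_mul_norm_sq_nonneg (s : ℝ) (c : FC) (k : ℤ) : 0 ≤ wt s k * ‖c k‖ ^ 2 :=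
  mul_nonneg (wt_pos s k).le (sq_nonneg _)

lemma hsNorm_sq (s : ℝ) (c : FC) : hsNorm s c ^ 2 = ∑' k, wt s k * ‖c k‖ ^ 2 :=
  Real.sq_sqrt (tsum_nonneg (wt_mul_norm_sq_nonneg s c))

lemma hsNorm_nonneg (s : ℝ) (c : FC) : 0 ≤ hsNorm s c := Real.sqrt_nonneg _

lemma memHs_and_hsNorm_sq_le {a b A : ℝ} {c d : FC} (hd : memHs b d)
    (h : ∀ k, wt a k * ‖c k‖ ^ 2 ≤ A * (wt b k * ‖d k‖ ^ 2)) :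
    memHs a c ∧ hsNorm a c ^ 2 ≤ A * hsNorm b d ^ 2 := by
  have hc : memHs a c := .of_nonneg_of_le (wt_mul_norm_sq_nonneg a c) h (hd.mul_left A)
  refine ⟨hc, ?_⟩
  rw [hsNorm_sq, hsNorm_sq, ← tsum_mul_left]
  exact hc.tsum_le_tsum h (hd.mul_left A)

lemma hsNorm_sq_mono {a b : ℝ} (hab : a ≤ b) {c : FC} (hc : memHs b c) :
    hsNorm a c ^ 2 ≤ hsNorm b c ^ 2 := by
  simpa only [one_mul] using (memHs_and_hsNorm_sq_le (A := 1) hc fun k => by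
    rw [one_mul]; exact mul_le_mul_of_nonneg_right (wt_mono hab k) (sq_nonneg _)).2

namespace memHs

variable {a b s : ℝ} {c : FC}

lemma wt_mul_norm_le_hsNorm (h : memHs s c) (k : ℤ) : wt (s / 2) k * ‖c k‖ ≤ hsNorm s c := by
  refine le_of_pow_le_pow_left₀ two_ne_zero (hsNorm_nonneg s c) ?_
  rw [mul_pow, wt_half_sq, hsNorm_sq]
  exact h.le_tsum k fun j _ => wt_mul_norm_sq_nonneg s c j

lemma norm_le_hsNorm (h : memHs s c) (hs : 0 ≤ s) (k : ℤ) : ‖c k‖ ≤ hsNorm s c :=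
  (le_mul_of_one_le_left (norm_nonneg _) (one_le_wt (by positivity) k)).trans
    (h.wt_mul_norm_le_hsNorm k)

lemma norm_mul_bracket_pow_le {p : ℕ} (h : memHs (2 * p) c) (k : ℤ) :
    ‖c k‖ * bracket k ^ p ≤ 2 ^ p * hsNorm (2 * p) c := by
  have hcoef := h.wt_mul_norm_le_hsNorm k
  rw [mul_div_cancel_left₀ _ two_ne_zero] at hcoef
  calc ‖c k‖ * bracket k ^ p ≤ ‖c k‖ * (2 ^ p * wt p k) := by gcongr; exact bracket_pow_le_wt p k
    _ = 2 ^ p * (wt p k * ‖c k‖) := by ring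
    _ ≤ 2 ^ p * hsNorm (2 * p) c := by gcongr

lemma mono (hab : a ≤ b) (h : memHs b c) : memHs a c :=
  (memHs_and_hsNorm_sq_le (A := 1) h fun k => by
    rw [one_mul]; exact mul_le_mul_of_nonneg_right (wt_mono hab k) (sq_nonneg _)).1

lemma summable_bracket_mul (ha : 3 / 2 < a) (h : memHs a c) :
    Summable fun k => bracket k * ‖c k‖ := by
  refine .of_nonneg_of_le (fun k => mul_nonneg (bracket_pos k).le (norm_nonneg _)) (fun k => ?_)
    ((summable_wt (b := 1 - a) (by linarith)).add h)
  have hb : bracket k ≤ 2 * wt (1 / 2) k :=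
    le_of_pow_le_pow_left₀ two_ne_zero (mul_pos two_pos (wt_pos _ k)).le <| by
      rw [mul_pow, wt_half_sq, wt_one]; linarith [bracket_sq_le k, sq_nonneg (k : ℝ)]
  have hsplit : wt (1 / 2) k = wt ((1 - a) / 2) k * wt (a / 2) k := by
    rw [wt_mul_wt]; congr 1; ring
  calc bracket k * ‖c k‖ ≤ 2 * wt ((1 - a) / 2) k * (wt (a / 2) k * ‖c k‖) := by
        rw [hsplit] at hb
        linarith [mul_le_mul_of_nonneg_right hb (norm_nonneg (c k))]
    _ ≤ wt ((1 - a) / 2) k ^ 2 + (wt (a / 2) k * ‖c k‖) ^ 2 := two_mul_le_add_sq _ _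
    _ = wt (1 - a) k + wt a k * ‖c k‖ ^ 2 := by rw [mul_pow, wt_half_sq, wt_half_sq]

lemma summable (ha : 3 / 2 < a) (h : memHs a c) : Summable fun k => ‖c k‖ :=
  .of_nonneg_of_le (fun _ => norm_nonneg _)
    (fun _ => le_mul_of_one_le_left (norm_nonneg _) (one_le_bracket _)) (h.summable_bracket_mul ha)

lemma summable_D1 (ha : 3 / 2 < a) (h : memHs a c) : Summable fun k => ‖D1 c k‖ := by
  refine .of_nonneg_of_le (fun k => norm_nonneg _) (fun k => ?_) (h.summable_bracket_mul ha)
  simp only [D1, norm_mul, Complex.norm_I, one_mul, Complex.norm_intCast]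
  gcongr
  exact abs_le_bracket k

end memHs

lemma rapidDecay_of_memHs {c : FC} (h : ∀ s : ℝ, 0 ≤ s → memHs s c) : RapidDecay c := fun p =>
  ⟨_, (h (2 * p) (by positivity)).norm_mul_bracket_pow_le⟩

/-! ### Mollifiers -/

lemma exists_abs_pow_mul_abs_le (j : SchwartzMap ℝ ℝ) (p : ℕ) :
    ∃ C > 0, ∀ x, |x| ^ p * |j x| ≤ C := by
  obtain ⟨C, hC0, hC⟩ := j.decay p 0
  exact ⟨C, hC0, fun x => by simpa using hC x⟩

lemma exists_abs_le (j : SchwartzMap ℝ ℝ) : ∃ C > 0, ∀ x, |j x| ≤ C := by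
  simpa only [pow_zero, one_mul] using exists_abs_pow_mul_abs_le j 0

lemma norm_Jmol (j : ℝ → ℝ) (ε : ℝ) (c : FC) (k : ℤ) :
    ‖Jmol j ε c k‖ = |j (ε * k)| * ‖c k‖ := by
  rw [Jmol, mult, norm_mul, Complex.norm_real, Real.norm_eq_abs]

lemma D1_Jmol (j : ℝ → ℝ) (ε : ℝ) (c : FC) : D1 (Jmol j ε c) = Jmol j ε (D1 c) := by
  funext k; simp only [D1, Jmol, mult]; ring

lemma rapidDecay_Jmol (j : SchwartzMap ℝ ℝ) {ε : ℝ} (hε : 0 < ε) {c : FC} {A : ℝ}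
    (hc : ∀ k, ‖c k‖ ≤ A) : RapidDecay (Jmol j ε c) := by
  intro p
  obtain ⟨C₀, hC₀, hj₀⟩ := exists_abs_le j
  obtain ⟨C₁, hC₁, hj₁⟩ := exists_abs_pow_mul_abs_le j p
  have hsymbol : ∀ k : ℤ, bracket k ^ p * |j (ε * k)| ≤ 2 ^ (p - 1) * (C₀ + C₁ / ε ^ p) := by
    intro k
    have hk : |(k : ℝ)| ^ p * |j (ε * k)| ≤ C₁ / ε ^ p := by
      have := hj₁ (ε * k)
      rw [abs_mul, abs_of_pos hε, mul_pow] at this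
      rw [le_div_iff₀ (by positivity)]; linarith
    calc bracket k ^ p * |j (ε * k)|
        ≤ 2 ^ (p - 1) * (1 ^ p + |(k : ℝ)| ^ p) * |j (ε * k)| := by
          gcongr; exact add_pow_le zero_le_one (abs_nonneg _) p
      _ = 2 ^ (p - 1) * (|j (ε * k)| + |(k : ℝ)| ^ p * |j (ε * k)|) := by rw [one_pow]; ring
      _ ≤ _ := by gcongr; exact hj₀ _
  refine ⟨2 ^ (p - 1) * (C₀ + C₁ / ε ^ p) * A, fun k => ?_⟩
  calc ‖Jmol j ε c k‖ * bracket k ^ p = bracket k ^ p * |j (ε * k)| * ‖c k‖ := by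
        rw [norm_Jmol]; ring
    _ ≤ _ := mul_le_mul (hsymbol k) (hc k) (norm_nonneg _) (by positivity)

lemma hsNorm_sq_Jmol_le {j : ℝ → ℝ} {C σ : ℝ} (hj : ∀ x, |j x| ≤ C) (ε : ℝ) {c : FC}
    (hc : memHs σ c) : hsNorm σ (Jmol j ε c) ^ 2 ≤ C ^ 2 * hsNorm σ c ^ 2 := by
  refine (memHs_and_hsNorm_sq_le hc fun k => ?_).2
  have := wt_pos σ k
  calc wt σ k * ‖Jmol j ε c k‖ ^ 2 = |j (ε * k)| ^ 2 * (wt σ k * ‖c k‖ ^ 2) := by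
        rw [norm_Jmol]; ring
    _ ≤ _ := by gcongr; exact hj _

/-! ### Bounded kernels -/

/-- The bilinear form of the matrix `F` is bounded on `ℓ²` by `B`. The bound is stated with the
sum of the squared norms instead of their product; the two forms are equivalent, up to a factor
`2`, by rescaling `x` and `y`, and this one is additive in the vectors. -/
structure KernelBound {ι κ : Type*} (F : ι → κ → ℂ) (B : ℝ) : Prop where
  nonneg : 0 ≤ B
  norm_sum_le : ∀ (S : Finset ι) (T : Finset κ) (x : ι → ℂ) (y : κ → ℂ),
    ‖∑ k ∈ S, ∑ m ∈ T, x k * F k m * y m‖ ≤ B * (∑ k ∈ S, ‖x k‖ ^ 2 + ∑ m ∈ T, ‖y m‖ ^ 2)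

namespace KernelBound

variable {ι κ : Type*} {F G : ι → κ → ℂ} {B C : ℝ}

lemma mono (h : KernelBound F B) (hB : B ≤ C) : KernelBound F C :=
  ⟨h.nonneg.trans hB, fun S T x y => (h.norm_sum_le S T x y).trans (by gcongr)⟩

lemma congr (h : KernelBound F B) (e : ∀ k m, F k m = G k m) : KernelBound G B := by
  rwa [← funext₂ e]

lemma transpose (h : KernelBound F B) : KernelBound (fun m k => F k m) B := by
  refine ⟨h.nonneg, fun S T x y => ?_⟩
  rw [Finset.sum_comm, add_comm]
  simpa only [mul_comm, mul_left_comm, mul_assoc] using h.norm_sum_le T S y x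

lemma add (hF : KernelBound F B) (hG : KernelBound G C) :
    KernelBound (fun k m => F k m + G k m) (B + C) := by
  refine ⟨add_nonneg hF.nonneg hG.nonneg, fun S T x y => ?_⟩
  simp only [mul_add, add_mul, Finset.sum_add_distrib]
  refine (norm_add_le _ _).trans ?_
  linarith [hF.norm_sum_le S T x y, hG.norm_sum_le S T x y]

lemma const_mul (h : KernelBound F B) (c : ℂ) : KernelBound (fun k m => c * F k m) (‖c‖ * B) := by
  refine ⟨mul_nonneg (norm_nonneg _) h.nonneg, fun S T x y => ?_⟩
  have hfactor : ∑ k ∈ S, ∑ m ∈ T, x k * (c * F k m) * y m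
      = c * ∑ k ∈ S, ∑ m ∈ T, x k * F k m * y m := by
    simp only [Finset.mul_sum]; congr! 2; ring
  rw [hfactor, norm_mul, mul_assoc]
  gcongr; exact h.norm_sum_le S T x y

lemma sub (hF : KernelBound F B) (hG : KernelBound G C) :
    KernelBound (fun k m => F k m - G k m) (B + C) := by
  have hneg : KernelBound (fun k m => -1 * G k m) C := by
    simpa only [norm_neg, norm_one, one_mul] using hG.const_mul (-1)
  exact (hF.add hneg).congr fun k m => by ring

lemma zero : KernelBound (fun (_ : ι) (_ : κ) => 0) 0 := ⟨le_rfl, fun S T x y => by simp⟩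

lemma sum {α : Type*} (s : Finset α) {F : α → ι → κ → ℂ} {B : α → ℝ}
    (h : ∀ i ∈ s, KernelBound (F i) (B i)) :
    KernelBound (fun k m => ∑ i ∈ s, F i k m) (∑ i ∈ s, B i) := by
  classical
  induction s using Finset.induction_on with
  | empty => simpa using zero
  | insert a s ha ih =>
    simp only [Finset.sum_insert ha]
    exact (h a (Finset.mem_insert_self a s)).add
      (ih fun i hi => h i (Finset.mem_insert_of_mem hi))

lemma mul_left_of_norm_le_one (h : KernelBound F B) {p : ι → ℂ} (hp : ∀ k, ‖p k‖ ≤ 1) :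
    KernelBound (fun k m => p k * F k m) B := by
  refine ⟨h.nonneg, fun S T x y => ?_⟩
  have hB := h.nonneg
  calc ‖∑ k ∈ S, ∑ m ∈ T, x k * (p k * F k m) * y m‖
      = ‖∑ k ∈ S, ∑ m ∈ T, x k * p k * F k m * y m‖ := by simp only [mul_assoc]
    _ ≤ B * (∑ k ∈ S, ‖x k * p k‖ ^ 2 + ∑ m ∈ T, ‖y m‖ ^ 2) :=
        h.norm_sum_le S T (fun k => x k * p k) y
    _ ≤ _ := by
        gcongr with k
        rw [norm_mul]
        exact mul_le_of_le_one_right (norm_nonneg _) (hp k)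

lemma mul_left (h : KernelBound F B) {p : ι → ℂ} {c : ℝ} (hc : 0 < c) (hp : ∀ k, ‖p k‖ ≤ c) :
    KernelBound (fun k m => p k * F k m) (c * B) := by
  have hp' : ∀ k, ‖p k / c‖ ≤ 1 := fun k => by
    rw [norm_div, Complex.norm_real, Real.norm_of_nonneg hc.le]
    exact div_le_one_of_le₀ (hp k) hc.le
  have hscaled := (h.mul_left_of_norm_le_one hp').const_mul (c : ℂ)
  rw [Complex.norm_real, Real.norm_of_nonneg hc.le] at hscaled
  have : (c : ℂ) ≠ 0 := Complex.ofReal_ne_zero.2 hc.ne'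
  exact hscaled.congr fun k m => by field_simp

lemma mul_right (h : KernelBound F B) {p : κ → ℂ} {c : ℝ} (hc : 0 < c) (hp : ∀ m, ‖p m‖ ≤ c) :
    KernelBound (fun k m => p m * F k m) (c * B) :=
  (h.transpose.mul_left hc hp).transpose

lemma of_hasSum {α : Type*} {F : α → ι → κ → ℂ} {b : α → ℝ} (h : ∀ i, KernelBound (F i) (b i))
    (hb : HasSum b B) (hG : ∀ k m, HasSum (fun i => F i k m) (G k m)) : KernelBound G B := by
  refine ⟨hb.nonneg fun i => (h i).nonneg, fun S T x y => ?_⟩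
  have hform : HasSum (fun i => ∑ k ∈ S, ∑ m ∈ T, x k * F i k m * y m)
      (∑ k ∈ S, ∑ m ∈ T, x k * G k m * y m) :=
    hasSum_sum fun k _ => hasSum_sum fun m _ => ((hG k m).mul_left _).mul_right _
  rw [← hform.tsum_eq]
  exact tsum_of_norm_bounded (hb.mul_right _) fun i => (h i).norm_sum_le S T x y

-- The columns are grouped by the value of `a`; the groups are orthogonal in `y`, and the factors
-- `Y k n` are what makes the corresponding copies of `x` almost orthogonal.
lemma block {α : Type*} {F : α → ι → κ → ℂ} (hB : 0 ≤ B) (hF : ∀ n, KernelBound (F n) B)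
    (a : κ → α) (Y : ι → α → ℂ) (hC : 1 ≤ C)
    (hY : ∀ k (N : Finset α), ∑ n ∈ N, ‖Y k n‖ ^ 2 ≤ C) :
    KernelBound (fun k m => Y k (a m) * F (a m) k m) (B * C) := by
  classical
  refine ⟨mul_nonneg hB (zero_le_one.trans hC), fun S T x y => ?_⟩
  set N := T.image a
  have hmaps : ∀ m ∈ T, a m ∈ N := fun m hm => Finset.mem_image_of_mem a hm
  have hgroup : ∑ k ∈ S, ∑ m ∈ T, x k * (Y k (a m) * F (a m) k m) * y m
      = ∑ n ∈ N, ∑ k ∈ S, ∑ m ∈ T with a m = n, x k * Y k n * F n k m * y m := by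
    rw [Finset.sum_comm (s := N)]
    refine Finset.sum_congr rfl fun k _ => ?_
    rw [← Finset.sum_fiberwise_of_maps_to hmaps]
    refine Finset.sum_congr rfl fun n _ => Finset.sum_congr rfl fun m hm => ?_
    rw [(Finset.mem_filter.1 hm).2]; ring
  have hx : ∑ k ∈ S, ‖x k‖ ^ 2 * ∑ n ∈ N, ‖Y k n‖ ^ 2 ≤ C * ∑ k ∈ S, ‖x k‖ ^ 2 := by
    rw [mul_comm C, Finset.sum_mul]
    gcongr with k
    exact hY k N
  have hy : ∑ m ∈ T, ‖y m‖ ^ 2 ≤ C * ∑ m ∈ T, ‖y m‖ ^ 2 :=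
    le_mul_of_one_le_left (Finset.sum_nonneg fun m _ => sq_nonneg _) hC
  rw [hgroup]
  calc _ ≤ ∑ n ∈ N, ‖∑ k ∈ S, ∑ m ∈ T with a m = n, x k * Y k n * F n k m * y m‖ :=
        _root_.norm_sum_le _ _
    _ ≤ ∑ n ∈ N, B * (∑ k ∈ S, ‖x k * Y k n‖ ^ 2 + ∑ m ∈ T with a m = n, ‖y m‖ ^ 2) := by
        gcongr with n
        exact (hF n).norm_sum_le S _ (fun k => x k * Y k n) y
    _ = B * (∑ k ∈ S, ‖x k‖ ^ 2 * ∑ n ∈ N, ‖Y k n‖ ^ 2 + ∑ m ∈ T, ‖y m‖ ^ 2) := by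
        rw [← Finset.mul_sum, Finset.sum_add_distrib, Finset.sum_fiberwise_of_maps_to hmaps,
          Finset.sum_comm]
        simp only [Finset.mul_sum, norm_mul, mul_pow]
    _ ≤ B * C * (∑ k ∈ S, ‖x k‖ ^ 2 + ∑ m ∈ T, ‖y m‖ ^ 2) := by
        rw [mul_assoc, mul_add C]; gcongr

lemma norm_tsum_le (h : KernelBound F B) {x : ι → ℂ} {y : κ → ℂ}
    (hx : Summable fun k => ‖x k‖ ^ 2) (hy : Summable fun m => ‖y m‖ ^ 2)
    (hs : Summable fun p : ι × κ => x p.1 * F p.1 p.2 * y p.2) :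
    ‖∑' p : ι × κ, x p.1 * F p.1 p.2 * y p.2‖ ≤ B * (∑' k, ‖x k‖ ^ 2 + ∑' m, ‖y m‖ ^ 2) := by
  classical
  have hlim := hs.hasSum.comp Filter.tendsto_finsetProd_atTop
  refine le_of_tendsto hlim.norm (.of_forall fun P => ?_)
  have hB := h.nonneg
  calc _ = ‖∑ k ∈ P.1, ∑ m ∈ P.2, x k * F k m * y m‖ := by
        rw [Function.comp_apply, Finset.sum_product]
    _ ≤ _ := h.norm_sum_le P.1 P.2 x y
    _ ≤ _ := by
        gcongr
        · exact hx.sum_le_tsum _ fun _ _ => sq_nonneg _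
        · exact hy.sum_le_tsum _ fun _ _ => sq_nonneg _

end KernelBound

/-! ### Fourier series and Toeplitz kernels -/

section FourierSeries

open MeasureTheory FourierTransform

/-- The character `e^{ikx}`, for which `eval c x = ∑' k, c k * character k x` by definition. -/
def character (k : ℤ) (x : ℝ) : ℂ := Complex.exp (Complex.I * (k : ℂ) * (x : ℂ))

lemma character_eq (k : ℤ) (x : ℝ) :
    character k x = Complex.exp (Complex.I * ((k * x : ℝ) : ℂ)) := by
  rw [character, mul_assoc]; push_cast; rfl

lemma norm_character (k : ℤ) (x : ℝ) : ‖character k x‖ = 1 := by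
  rw [character_eq, mul_comm]; exact Complex.norm_exp_ofReal_mul_I _

lemma norm_mul_character (z : ℂ) (k : ℤ) (x : ℝ) : ‖z * character k x‖ = ‖z‖ := by
  rw [norm_mul, norm_character, mul_one]

lemma character_add (k m : ℤ) (x : ℝ) : character (k + m) x = character k x * character m x := by
  rw [character, character, character, ← Complex.exp_add]; congr 1; push_cast; ring

lemma character_apply_add (k : ℤ) (x y : ℝ) :
    character k (x + y) = character k x * character k y := by
  rw [character, character, character, ← Complex.exp_add]; congr 1; push_cast; ring

lemma conj_character (k : ℤ) (x : ℝ) : (starRingEnd ℂ) (character k x) = character (-k) x := by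
  rw [character, character, ← Complex.exp_conj]; congr 1; simp

lemma continuous_character (k : ℤ) : Continuous (character k) := by unfold character; fun_prop

lemma hasDerivAt_character (k : ℤ) (x : ℝ) :
    HasDerivAt (character k) (Complex.I * k * character k x) x := by
  have hlin : HasDerivAt (fun x : ℝ => Complex.I * (k : ℂ) * (x : ℂ)) (Complex.I * k) x := by
    simpa using (Complex.ofRealCLM.hasDerivAt (x := x)).const_mul (Complex.I * (k : ℂ))
  exact hlin.cexp.congr_deriv (mul_comm _ _)

lemma integral_character (n : ℤ) :
    ∫ x in (0 : ℝ)..(2 * Real.pi), character n x = if n = 0 then (2 * Real.pi : ℂ) else 0 := by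
  split_ifs with hn
  · simp [character, hn]
  · have hexp : Complex.exp (Complex.I * n * ((2 * Real.pi : ℝ) : ℂ)) = 1 :=
      Complex.exp_eq_one_iff.2 ⟨n, by push_cast; ring⟩
    simp only [character]
    rw [integral_exp_mul_complex (mul_ne_zero Complex.I_ne_zero (Int.cast_ne_zero.2 hn)), hexp]
    simp

lemma linfty_nonneg (c : FC) : 0 ≤ linfty c := Real.iSup_nonneg fun _ => norm_nonneg _

section AbsolutelyConvergent

variable {c : FC}

lemma summable_mul_character (hc : Summable fun k => ‖c k‖) (x : ℝ) :
    Summable fun k => c k * character k x :=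
  .of_norm (by simpa only [norm_mul_character] using hc)

lemma norm_eval_le_tsum (hc : Summable fun k => ‖c k‖) (x : ℝ) : ‖eval c x‖ ≤ ∑' k, ‖c k‖ :=
  tsum_of_norm_bounded hc.hasSum fun k => (norm_mul_character (c k) k x).le

lemma norm_eval_le_linfty (hc : Summable fun k => ‖c k‖) (x : ℝ) : ‖eval c x‖ ≤ linfty c :=
  le_ciSup (f := fun x => ‖eval c x‖)
    ⟨∑' k, ‖c k‖, Set.forall_mem_range.2 fun y => norm_eval_le_tsum hc y⟩ x

lemma continuous_eval (hc : Summable fun k => ‖c k‖) : Continuous (eval c) :=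
  continuous_tsum (fun k => continuous_const.mul (continuous_character k)) hc
    fun k x => (norm_mul_character (c k) k x).le

lemma hasDerivAt_eval (hc : Summable fun k => ‖c k‖) (hd : Summable fun k => ‖D1 c k‖) (x : ℝ) :
    HasDerivAt (eval c) (eval (D1 c) x) x :=
  hasDerivAt_tsum (𝕜 := ℝ) (g := fun k x => c k * character k x)
    (g' := fun k x => D1 c k * character k x) (y₀ := 0) hd
    (fun k y => ((hasDerivAt_character k y).const_mul (c k)).congr_deriv (by unfold D1; ring))
    (fun k y => (norm_mul_character (D1 c k) k y).le) (summable_mul_character hc 0) x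

lemma norm_eval_sub_le (hc : Summable fun k => ‖c k‖) (hd : Summable fun k => ‖D1 c k‖)
    (x y : ℝ) : ‖eval c y - eval c x‖ ≤ linfty (D1 c) * |y - x| :=
  convex_univ.norm_image_sub_le_of_norm_hasDerivWithin_le
    (fun z _ => (hasDerivAt_eval hc hd z).hasDerivWithinAt)
    (fun z _ => norm_eval_le_linfty hd z) trivial trivial

lemma integral_eval_mul_character (hc : Summable fun k => ‖c k‖) (n : ℤ) :
    ∫ x in (0 : ℝ)..(2 * Real.pi), eval c x * character (-n) x = 2 * Real.pi * c n := by
  have hsum := intervalIntegral.hasSum_integral_of_dominated_convergence (μ := volume)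
    (a := 0) (b := 2 * Real.pi) (F := fun k x => c k * character k x * character (-n) x)
    (f := fun x => eval c x * character (-n) x) (fun k _ => ‖c k‖)
    (fun k => ((continuous_const.mul (continuous_character k)).mul
      (continuous_character (-n))).aestronglyMeasurable)
    (fun k => .of_forall fun x _ => by rw [norm_mul_character, norm_mul_character])
    (.of_forall fun x _ => hc) (by simp)
    (.of_forall fun x _ => (summable_mul_character hc x).hasSum.mul_right _)
  have hterm : ∀ k, ∫ x in (0 : ℝ)..(2 * Real.pi), c k * character k x * character (-n) x
      = if k = n then 2 * Real.pi * c n else 0 := by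
    intro k
    have hmul : ∀ x, c k * character k x * character (-n) x = c k * character (k - n) x :=
      fun x => by rw [sub_eq_add_neg, character_add, mul_assoc]
    simp only [hmul, intervalIntegral.integral_const_mul, integral_character, sub_eq_zero]
    split_ifs with hk
    · rw [hk]; ring
    · ring
  simp only [hterm] at hsum
  exact hsum.unique (hasSum_ite_eq n _)

end AbsolutelyConvergent

/-- The trigonometric polynomial with coefficients `x k`, `k ∈ S`. -/
def trigPoly (S : Finset ℤ) (x : ℤ → ℂ) (t : ℝ) : ℂ := ∑ k ∈ S, x k * character k t

lemma continuous_trigPoly (S : Finset ℤ) (x : ℤ → ℂ) : Continuous (trigPoly S x) :=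
  continuous_finsetSum _ fun k _ => continuous_const.mul (continuous_character k)

lemma integral_eval_mul_conj_trigPoly_mul {c : FC} (hc : Summable fun k => ‖c k‖)
    (S T : Finset ℤ) (x y : ℤ → ℂ) :
    ∫ t in (0 : ℝ)..(2 * Real.pi), eval c t * ((starRingEnd ℂ) (trigPoly S x t) * trigPoly T y t)
      = 2 * Real.pi * ∑ k ∈ S, ∑ m ∈ T, (starRingEnd ℂ) (x k) * c (k - m) * y m := by
  have hexpand : ∀ t, eval c t * ((starRingEnd ℂ) (trigPoly S x t) * trigPoly T y t)
      = ∑ k ∈ S, ∑ m ∈ T, (starRingEnd ℂ) (x k) * y m * (eval c t * character (-(k - m)) t) := by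
    intro t
    rw [trigPoly, trigPoly, map_sum, Finset.sum_mul_sum, Finset.mul_sum]
    refine Finset.sum_congr rfl fun k _ => ?_
    rw [Finset.mul_sum]
    refine Finset.sum_congr rfl fun m _ => ?_
    rw [map_mul, conj_character, neg_sub, sub_eq_neg_add, character_add]; ring
  have hcont : ∀ k m, Continuous
      fun t => (starRingEnd ℂ) (x k) * y m * (eval c t * character (-(k - m)) t) := fun k m =>
    continuous_const.mul ((continuous_eval hc).mul (continuous_character _))
  simp only [hexpand]
  rw [intervalIntegral.integral_finsetSum fun k _ =>
    (continuous_finsetSum _ fun m _ => hcont k m).intervalIntegrable _ _, Finset.mul_sum]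
  refine Finset.sum_congr rfl fun k _ => ?_
  rw [intervalIntegral.integral_finsetSum fun m _ => (hcont k m).intervalIntegrable _ _,
    Finset.mul_sum]
  refine Finset.sum_congr rfl fun m _ => ?_
  rw [intervalIntegral.integral_const_mul, integral_eval_mul_character hc]; ring

lemma integral_norm_trigPoly_sq (S : Finset ℤ) (x : ℤ → ℂ) :
    ∫ t in (0 : ℝ)..(2 * Real.pi), ‖trigPoly S x t‖ ^ 2 = 2 * Real.pi * ∑ k ∈ S, ‖x k‖ ^ 2 := by
  have hone : ∀ t, eval (Pi.single 0 1) t = 1 := fun t => by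
    rw [eval, tsum_eq_single 0 fun k hk => by simp [hk]]; simp
  have hsummable : Summable fun k => ‖(Pi.single 0 1 : FC) k‖ :=
    summable_of_ne_finset_zero (s := {0}) fun k hk => by
      rw [Pi.single_eq_of_ne (Finset.notMem_singleton.1 hk), norm_zero]
  have h := integral_eval_mul_conj_trigPoly_mul hsummable S S x x
  simp only [hone, one_mul, Complex.conj_mul', Pi.single_apply, sub_eq_zero, mul_ite, ite_mul,
    mul_one, mul_zero, zero_mul, Finset.sum_ite_eq] at h
  rw [Finset.sum_congr rfl fun k hk => if_pos hk] at h
  apply Complex.ofReal_injective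
  rw [← intervalIntegral.integral_ofReal]
  push_cast
  exact h

lemma KernelBound.toeplitz {c : FC} (hc : Summable fun k => ‖c k‖) :
    KernelBound (fun k m => c (k - m)) (linfty c) := by
  refine ⟨linfty_nonneg c, fun S T x y => ?_⟩
  set X := trigPoly S fun k => (starRingEnd ℂ) (x k) with hX
  set Y := trigPoly T y with hY
  have hXc : Continuous X := continuous_trigPoly _ _
  have hYc : Continuous Y := continuous_trigPoly _ _
  have hpi : (0 : ℝ) < 2 * Real.pi := Real.two_pi_pos
  have hform : ((2 * Real.pi : ℝ) : ℂ) * ∑ k ∈ S, ∑ m ∈ T, x k * c (k - m) * y m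
      = ∫ t in (0 : ℝ)..(2 * Real.pi), eval c t * ((starRingEnd ℂ) (X t) * Y t) := by
    rw [hX, hY, integral_eval_mul_conj_trigPoly_mul hc]
    simp only [Complex.conj_conj]; push_cast; rfl
  refine le_of_mul_le_mul_left ?_ hpi
  calc 2 * Real.pi * ‖∑ k ∈ S, ∑ m ∈ T, x k * c (k - m) * y m‖
      = ‖∫ t in (0 : ℝ)..(2 * Real.pi), eval c t * ((starRingEnd ℂ) (X t) * Y t)‖ := by
        rw [← hform, norm_mul, Complex.norm_real, Real.norm_of_nonneg hpi.le]
    _ ≤ ∫ t in (0 : ℝ)..(2 * Real.pi), linfty c * (‖X t‖ ^ 2 + ‖Y t‖ ^ 2) := by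
        refine intervalIntegral.norm_integral_le_of_norm_le hpi.le (.of_forall fun t _ => ?_)
          (Continuous.intervalIntegrable (by fun_prop) _ _)
        rw [norm_mul, norm_mul, RCLike.norm_conj]
        have := linfty_nonneg c
        gcongr
        · exact norm_eval_le_linfty hc t
        · nlinarith [two_mul_le_add_sq ‖X t‖ ‖Y t‖, sq_nonneg ‖X t‖, sq_nonneg ‖Y t‖]
    _ = 2 * Real.pi * (linfty c * (∑ k ∈ S, ‖x k‖ ^ 2 + ∑ m ∈ T, ‖y m‖ ^ 2)) := by
        rw [intervalIntegral.integral_const_mul, intervalIntegral.integral_add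
          (Continuous.intervalIntegrable (by fun_prop) _ _)
          (Continuous.intervalIntegrable (by fun_prop) _ _),
          integral_norm_trigPoly_sq, integral_norm_trigPoly_sq]
        simp only [RCLike.norm_conj]; ring

/-! ### Mollifiers and the sup norm -/

lemma exists_fourier_representation (ψ : SchwartzMap ℝ ℝ) : ∃ G : ℝ → ℂ, Integrable G ∧
    Integrable (fun ξ => |ξ| * ‖G ξ‖) ∧ ∀ x : ℝ, ((ψ x : ℝ) : ℂ)
      = ∫ ξ, G ξ * Complex.exp (Complex.I * ((x * (2 * Real.pi * ξ) : ℝ) : ℂ)) := by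
  set f : SchwartzMap ℝ ℂ := SchwartzMap.postcompCLM Complex.ofRealCLM ψ
  refine ⟨(𝓕 f : SchwartzMap ℝ ℂ), (𝓕 f).integrable, ?_, fun x => ?_⟩
  · exact ((𝓕 f).integrable_pow_mul volume 1).congr (.of_forall fun ξ => by
      simp only [pow_one, Real.norm_eq_abs])
  · have hinv : 𝓕⁻ (𝓕 f) = f := FourierTransform.fourierInv_fourier_eq f
    change f x = _
    rw [← hinv, SchwartzMap.fourierInv_coe, Real.fourierInv_eq', hinv]
    congr 1 with ξ
    rw [smul_eq_mul, mul_comm, mul_comm Complex.I]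
    congr 4
    simp only [RCLike.inner_apply, conj_trivial]; ring

/-- A mollifier averages translates against a density with a finite first moment. -/
lemma exists_eval_Jmol_eq_integral (ψ : SchwartzMap ℝ ℝ) : ∃ G : ℝ → ℂ, Integrable G ∧
    Integrable (fun ξ => |ξ| * ‖G ξ‖) ∧ ∀ (ε : ℝ) (c : FC), (Summable fun k => ‖c k‖) → ∀ x,
      eval (Jmol ψ ε c) x = ∫ ξ, G ξ * eval c (x + 2 * Real.pi * ε * ξ) := by
  obtain ⟨G, hG, hG₁, hψ⟩ := exists_fourier_representation ψ
  refine ⟨G, hG, hG₁, fun ε c hc x => ?_⟩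
  have hsymbol : ∀ k : ℤ, ((ψ (ε * k) : ℝ) : ℂ)
      = ∫ ξ, G ξ * character k (2 * Real.pi * ε * ξ) := fun k => by
    rw [hψ]; congr 1 with ξ; rw [character_eq]; congr 4; ring
  have hint : ∀ k : ℤ, Integrable fun ξ =>
      G ξ * (c k * character k (x + 2 * Real.pi * ε * ξ)) := fun k =>
    hG.mul_bdd (c := ‖c k‖)
      (continuous_const.mul ((continuous_character k).comp (by fun_prop))).aestronglyMeasurable
      (.of_forall fun ξ => (norm_mul_character _ _ _).le)
  have hsum := hasSum_integral_of_summable_integral_norm hint (by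
    simp only [norm_mul, norm_character, mul_one, integral_mul_const]
    exact hc.mul_left _)
  simp only [tsum_mul_left] at hsum
  refine Eq.trans (tsum_congr fun k => ?_) hsum.tsum_eq
  change (ψ (ε * k) : ℂ) * c k * character k x = _
  rw [hsymbol, mul_assoc, ← integral_mul_const]
  congr 1 with ξ
  rw [character_apply_add]; ring

lemma summable_norm_Jmol (ψ : SchwartzMap ℝ ℝ) (ε : ℝ) {c : FC} (hc : Summable fun k => ‖c k‖) :
    Summable fun k => ‖Jmol ψ ε c k‖ := by
  obtain ⟨C, -, hC⟩ := exists_abs_le ψ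
  refine .of_nonneg_of_le (fun _ => norm_nonneg _) (fun k => ?_) (hc.mul_left C)
  rw [norm_Jmol]
  gcongr
  exact hC _

lemma exists_linfty_Jmol_le (ψ : SchwartzMap ℝ ℝ) : ∃ C : ℝ, 0 ≤ C ∧ ∀ (ε : ℝ) (c : FC),
    (Summable fun k => ‖c k‖) → linfty (Jmol ψ ε c) ≤ C * linfty c := by
  obtain ⟨G, hG, -, hJ⟩ := exists_eval_Jmol_eq_integral ψ
  have hG₀ : 0 ≤ ∫ ξ, ‖G ξ‖ := integral_nonneg fun _ => norm_nonneg _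
  refine ⟨∫ ξ, ‖G ξ‖, hG₀, fun ε c hc =>
    Real.iSup_le (fun x => ?_) (mul_nonneg hG₀ (linfty_nonneg c))⟩
  rw [hJ ε c hc, ← integral_mul_const]
  refine norm_integral_le_of_norm_le (hG.norm.mul_const _) (.of_forall fun ξ => ?_)
  rw [norm_mul]
  gcongr
  exact norm_eval_le_linfty hc _

lemma exists_linfty_Jmol_sub_Jmol_neg_le (ψ : SchwartzMap ℝ ℝ) : ∃ C : ℝ, 0 ≤ C ∧
    ∀ (ε : ℝ) (c : FC), (Summable fun k => ‖c k‖) → (Summable fun k => ‖D1 c k‖) →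
      linfty (Jmol ψ ε c - Jmol ψ (-ε) c) ≤ C * |ε| * linfty (D1 c) := by
  obtain ⟨G, hG, hG₁, hJ⟩ := exists_eval_Jmol_eq_integral ψ
  have _hmoment : 0 ≤ ∫ ξ, |ξ| * ‖G ξ‖ := integral_nonneg fun _ => by positivity
  refine ⟨4 * Real.pi * ∫ ξ, |ξ| * ‖G ξ‖, by positivity, fun ε c hc hd => ?_⟩
  have hD := linfty_nonneg (D1 c)
  refine Real.iSup_le (fun x => ?_) (by positivity)
  have hsub : eval (Jmol ψ ε c - Jmol ψ (-ε) c) x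
      = eval (Jmol ψ ε c) x - eval (Jmol ψ (-ε) c) x := by
    refine Eq.trans (tsum_congr fun k => sub_mul _ _ _) ?_
    exact (summable_mul_character (summable_norm_Jmol ψ ε hc) x).tsum_sub
      (summable_mul_character (summable_norm_Jmol ψ (-ε) hc) x)
  have hint : ∀ δ : ℝ, Integrable fun ξ => G ξ * eval c (x + 2 * Real.pi * δ * ξ) := fun δ =>
    hG.mul_bdd (c := linfty c) ((continuous_eval hc).comp (by fun_prop)).aestronglyMeasurable
      (.of_forall fun ξ => norm_eval_le_linfty hc _)
  have htranslate : ∀ ξ, ‖eval c (x + 2 * Real.pi * ε * ξ) - eval c (x + 2 * Real.pi * (-ε) * ξ)‖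
      ≤ linfty (D1 c) * (4 * Real.pi * |ε| * |ξ|) := fun ξ => by
    refine (norm_eval_sub_le hc hd _ _).trans_eq ?_
    rw [show x + 2 * Real.pi * ε * ξ - (x + 2 * Real.pi * (-ε) * ξ) = 4 * Real.pi * (ε * ξ) by ring,
      abs_mul (4 * Real.pi), abs_mul ε, abs_of_pos (by positivity : 0 < 4 * Real.pi),
      mul_assoc _ |ε|]
  calc ‖eval (Jmol ψ ε c - Jmol ψ (-ε) c) x‖
      = ‖∫ ξ, G ξ * (eval c (x + 2 * Real.pi * ε * ξ)
          - eval c (x + 2 * Real.pi * (-ε) * ξ))‖ := by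
        simp only [mul_sub]
        rw [hsub, hJ ε c hc, hJ (-ε) c hc, integral_sub (hint _) (hint _)]
    _ ≤ ∫ ξ, 4 * Real.pi * |ε| * linfty (D1 c) * (|ξ| * ‖G ξ‖) := by
        refine norm_integral_le_of_norm_le (hG₁.const_mul _) (.of_forall fun ξ => ?_)
        rw [norm_mul]
        linarith [mul_le_mul_of_nonneg_left (htranslate ξ) (norm_nonneg (G ξ))]
    _ = 4 * Real.pi * (∫ ξ, |ξ| * ‖G ξ‖) * |ε| * linfty (D1 c) := by
        rw [integral_const_mul]; ring

end FourierSeries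

/-! ### Divided differences of fractional powers -/

section Gram

open MeasureTheory

variable {ι κ Ω : Type*} [MeasurableSpace Ω] {μ : Measure Ω} {H : ι → Ω → ℝ} {G : κ → Ω → ℝ}

lemma integrable_sum_norm_mul_sq (hH : ∀ k, MemLp (H k) 2 μ) (S : Finset ι) (x : ι → ℂ) :
    Integrable (fun t => ∑ k ∈ S, ‖x k * H k t‖ ^ 2) μ := by
  simp only [norm_mul, mul_pow, Complex.norm_real, Real.norm_eq_abs, sq_abs]
  exact integrable_finsetSum _ fun k _ => (hH k).integrable_sq.const_mul _

lemma integral_sum_norm_mul_sq_le (hH : ∀ k, MemLp (H k) 2 μ) (hH1 : ∀ k, ∫ t, H k t ^ 2 ∂μ ≤ 1)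
    (S : Finset ι) (x : ι → ℂ) :
    ∫ t, ∑ k ∈ S, ‖x k * H k t‖ ^ 2 ∂μ ≤ ∑ k ∈ S, ‖x k‖ ^ 2 := by
  simp only [norm_mul, mul_pow, Complex.norm_real, Real.norm_eq_abs, sq_abs]
  rw [integral_finsetSum _ fun k _ => (hH k).integrable_sq.const_mul _]
  gcongr with k
  rw [integral_const_mul]
  exact mul_le_of_le_one_right (sq_nonneg _) (hH1 k)

/-- For each parameter `t` the factors `H k t` and `G m t` only rescale the vectors against which
the kernel is tested. -/
lemma KernelBound.mul_gram {F : ι → κ → ℂ} {B : ℝ} (hF : KernelBound F B)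
    (hH : ∀ k, MemLp (H k) 2 μ) (hG : ∀ m, MemLp (G m) 2 μ) (hH1 : ∀ k, ∫ t, H k t ^ 2 ∂μ ≤ 1)
    (hG1 : ∀ m, ∫ t, G m t ^ 2 ∂μ ≤ 1) :
    KernelBound (fun k m => ((∫ t, H k t * G m t ∂μ : ℝ) : ℂ) * F k m) B := by
  refine ⟨hF.nonneg, fun S T x y => ?_⟩
  have hint : ∀ k m, Integrable (fun t => (x k * H k t) * F k m * (y m * G m t)) μ := fun k m => by
    have hprod : Integrable (fun t => x k * F k m * y m * ((H k t * G m t : ℝ) : ℂ)) μ :=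
      ((hH k).integrable_mul (hG m)).ofReal.const_mul _
    exact hprod.congr (.of_forall fun t => by push_cast; ring)
  have hswap : ∑ k ∈ S, ∑ m ∈ T, x k * (((∫ t, H k t * G m t ∂μ : ℝ) : ℂ) * F k m) * y m
      = ∫ t, ∑ k ∈ S, ∑ m ∈ T, (x k * H k t) * F k m * (y m * G m t) ∂μ := by
    rw [integral_finsetSum _ fun k _ => integrable_finsetSum _ fun m _ => hint k m]
    refine Finset.sum_congr rfl fun k _ => ?_
    rw [integral_finsetSum _ fun m _ => hint k m]
    refine Finset.sum_congr rfl fun m _ => ?_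
    rw [← integral_complex_ofReal, ← integral_mul_const, ← integral_const_mul,
      ← integral_mul_const]
    congr 1 with t
    push_cast; ring
  have hB := hF.nonneg
  have hintH := integrable_sum_norm_mul_sq hH S x
  have hintG := integrable_sum_norm_mul_sq hG T y
  rw [hswap]
  calc ‖∫ t, ∑ k ∈ S, ∑ m ∈ T, (x k * H k t) * F k m * (y m * G m t) ∂μ‖
      ≤ ∫ t, B * (∑ k ∈ S, ‖x k * H k t‖ ^ 2 + ∑ m ∈ T, ‖y m * G m t‖ ^ 2) ∂μ :=
        norm_integral_le_of_norm_le ((hintH.add hintG).const_mul B)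
          (.of_forall fun t => hF.norm_sum_le S T _ _)
    _ ≤ B * (∑ k ∈ S, ‖x k‖ ^ 2 + ∑ m ∈ T, ‖y m‖ ^ 2) := by
        rw [integral_const_mul, integral_add hintH hintG]
        gcongr
        · exact integral_sum_norm_mul_sq_le hH hH1 S x
        · exact integral_sum_norm_mul_sq_le hG hG1 T y

end Gram

section Loewner

open MeasureTheory

/-- A square root of `t ^ r / (t + A) ^ 2`; products of two of these are the integrand in Löwner's
formula for the divided difference of `A ^ r`. -/
def loewnerFactor (r A t : ℝ) : ℝ := t ^ (r / 2) / (t + A)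

lemma loewnerFactor_mul {r t : ℝ} (ht : 0 < t) (A B : ℝ) :
    loewnerFactor r A t * loewnerFactor r B t = t ^ r / ((t + A) * (t + B)) := by
  rw [loewnerFactor, loewnerFactor, div_mul_div_comm, ← Real.rpow_add ht, add_halves]

lemma rpowIntegrand₀₁_eq {r t A : ℝ} (ht : 0 < t) (hA : 0 < A) :
    Real.rpowIntegrand₀₁ r t A = A * (t ^ r / (t * (t + A))) := by
  have : t + A ≠ 0 := by positivity
  rw [Real.rpowIntegrand₀₁]
  field_simp; ring

lemma div_mul_le_div_mul_left {a t A B : ℝ} (ha : 0 ≤ a) (ht : 0 < t) (hA : 0 < A) (hB : 0 < B) :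
    a / ((t + A) * (t + B)) ≤ a / (t * (t + B)) := by
  gcongr; linarith

lemma exists_loewner_measure {r : ℝ} (hr : r ∈ Set.Ioo (0 : ℝ) 1) : ∃ μ : Measure ℝ, ∀ A > 0,
    MemLp (loewnerFactor r A) 2 μ ∧ ∫ t, loewnerFactor r A t ^ 2 ∂μ ≤ A ^ (r - 1) ∧
      ∀ B > 0, A ^ r - B ^ r = (A - B) * ∫ t, loewnerFactor r A t * loewnerFactor r B t ∂μ := by
  obtain ⟨μ, hμ⟩ := Real.exists_measure_rpow_eq_integral_rpowIntegrand₀₁ hr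
  have hint : ∀ A > 0, IntegrableOn (fun t => t ^ r / (t * (t + A))) (Set.Ioi 0) μ :=
    fun A hA => IntegrableOn.congr_fun ((hμ A hA.le).1.const_mul A⁻¹)
      (fun t ht => by rw [rpowIntegrand₀₁_eq ht hA, inv_mul_cancel_left₀ hA.ne']) measurableSet_Ioi
  have hle : ∀ A > 0, ∀ t ∈ Set.Ioi (0 : ℝ), loewnerFactor r A t ^ 2 ≤ t ^ r / (t * (t + A)) := by
    intro A hA t ht
    rw [sq, loewnerFactor_mul ht]
    exact div_mul_le_div_mul_left (Real.rpow_nonneg (le_of_lt ht) r) ht hA hA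
  have hmeas : ∀ A, Measurable (loewnerFactor r A) := fun A => by
    unfold loewnerFactor; fun_prop
  have hsq : ∀ A > 0, IntegrableOn (fun t => loewnerFactor r A t ^ 2) (Set.Ioi 0) μ :=
    fun A hA => Integrable.mono' (hint A hA) ((hmeas A).pow_const 2).aestronglyMeasurable <|
      (ae_restrict_iff' measurableSet_Ioi).2 <| .of_forall fun t ht => by
        rw [Real.norm_of_nonneg (sq_nonneg _)]; exact hle A hA t ht
  refine ⟨μ.restrict (Set.Ioi 0), fun A hA => ⟨?_, ?_, fun B hB => ?_⟩⟩
  · exact (memLp_two_iff_integrable_sq (hmeas A).aestronglyMeasurable).2 (hsq A hA)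
  · have hAr : A ^ r = A * ∫ t in Set.Ioi 0, t ^ r / (t * (t + A)) ∂μ := by
      rw [(hμ A hA.le).2, ← integral_const_mul]
      exact setIntegral_congr_fun measurableSet_Ioi fun t ht => rpowIntegrand₀₁_eq ht hA
    rw [Real.rpow_sub_one hA.ne', hAr, mul_div_cancel_left₀ _ hA.ne']
    exact setIntegral_mono_on (hsq A hA) (hint A hA) measurableSet_Ioi (hle A hA)
  · rw [(hμ A hA.le).2, (hμ B hB.le).2, ← integral_sub (hμ A hA.le).1 (hμ B hB.le).1,
      ← integral_const_mul]
    refine setIntegral_congr_fun measurableSet_Ioi fun t (ht : 0 < t) => ?_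
    have hA' : t + A ≠ 0 := by positivity
    have hB' : t + B ≠ 0 := by positivity
    rw [loewnerFactor_mul ht, Real.rpowIntegrand₀₁, Real.rpowIntegrand₀₁]
    field_simp; ring

/-- Löwner: the divided differences of an operator monotone power, suitably normalised, form a
contractive Schur multiplier. -/
lemma KernelBound.exists_mul_rpow_divided_difference {r : ℝ} (hr : r ∈ Set.Ioo (0 : ℝ) 1) :
    ∃ Λ : ℝ → ℝ → ℝ, (∀ A > 0, ∀ B > 0, A ^ r - B ^ r = (A - B) * Λ A B) ∧
      ∀ {ι κ : Type} {a : ι → ℝ} {b : κ → ℝ} {F : ι → κ → ℂ} {B : ℝ}, (∀ k, 0 < a k) →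
        (∀ m, 0 < b m) → KernelBound F B → KernelBound (fun k m =>
          ((a k ^ ((1 - r) / 2) * b m ^ ((1 - r) / 2) * Λ (a k) (b m) : ℝ) : ℂ) * F k m) B := by
  obtain ⟨μ, hμ⟩ := exists_loewner_measure hr
  refine ⟨fun A B => ∫ t, loewnerFactor r A t * loewnerFactor r B t ∂μ,
    fun A hA B hB => (hμ A hA).2.2 B hB, fun {ι κ a b F B} ha hb hF => ?_⟩
  have hunit : ∀ A > 0, ∫ t, (A ^ ((1 - r) / 2) * loewnerFactor r A t) ^ 2 ∂μ ≤ 1 := by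
    intro A hA
    have hpow : (A ^ ((1 - r) / 2)) ^ 2 * A ^ (r - 1) = 1 := by
      rw [← Real.rpow_natCast, ← Real.rpow_mul hA.le, ← Real.rpow_add hA,
        show (1 - r) / 2 * ((2 : ℕ) : ℝ) + (r - 1) = 0 by push_cast; ring, Real.rpow_zero]
    simp only [mul_pow]
    rw [integral_const_mul]
    exact (mul_le_mul_of_nonneg_left (hμ A hA).2.1 (sq_nonneg _)).trans_eq hpow
  have hgram := hF.mul_gram (fun k => (hμ _ (ha k)).1.const_mul (a k ^ ((1 - r) / 2)))
    (fun m => (hμ _ (hb m)).1.const_mul (b m ^ ((1 - r) / 2))) (fun k => hunit _ (ha k))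
    (fun m => hunit _ (hb m))
  refine hgram.congr fun k m => ?_
  rw [← integral_const_mul]
  congr 3 with t
  ring

end Loewner

/-! ### Dyadic blocks -/

/-- The dyadic block of a frequency: `2 ^ n ≤ |k| < 2 ^ (n + 1)` for `k ≠ 0`, and `0` lies in
block `0`. -/
def dyadicIndex (k : ℤ) : ℕ := Nat.log 2 k.natAbs

lemma two_pow_dyadicIndex_le {k : ℤ} (hk : k ≠ 0) : (2 : ℝ) ^ dyadicIndex k ≤ |(k : ℝ)| := by
  have hlog := Nat.pow_log_le_self 2 (Int.natAbs_ne_zero.2 hk)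
  rw [← Int.cast_abs, ← Nat.cast_natAbs]; exact_mod_cast hlog

lemma abs_add_one_le_two_pow_dyadicIndex (k : ℤ) :
    |(k : ℝ)| + 1 ≤ (2 : ℝ) ^ (dyadicIndex k + 1) := by
  have hlog := Nat.lt_pow_succ_log_self (b := 2) (by norm_num) k.natAbs
  rw [← Int.cast_abs, ← Nat.cast_natAbs]; exact_mod_cast hlog

lemma dyadicIndex_zero : dyadicIndex 0 = 0 := by simp [dyadicIndex]

lemma four_pow_dyadicIndex_le (k : ℤ) : (4 : ℝ) ^ dyadicIndex k ≤ 1 + (k : ℝ) ^ 2 := by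
  rcases eq_or_ne k 0 with rfl | hk
  · simp [dyadicIndex_zero]
  · calc (4 : ℝ) ^ dyadicIndex k = (2 ^ dyadicIndex k) ^ 2 := by
          rw [← pow_mul, mul_comm, pow_mul]; norm_num
      _ ≤ |(k : ℝ)| ^ 2 := by gcongr; exact two_pow_dyadicIndex_le hk
      _ ≤ 1 + (k : ℝ) ^ 2 := by rw [sq_abs]; linarith

lemma one_add_sq_le_four_pow_dyadicIndex (k : ℤ) :
    1 + (k : ℝ) ^ 2 ≤ 4 * (4 : ℝ) ^ dyadicIndex k := by
  calc 1 + (k : ℝ) ^ 2 ≤ (|(k : ℝ)| + 1) ^ 2 := by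
        rw [← sq_abs (k : ℝ)]; nlinarith [abs_nonneg (k : ℝ)]
    _ ≤ (2 ^ (dyadicIndex k + 1)) ^ 2 := by gcongr; exact abs_add_one_le_two_pow_dyadicIndex k
    _ = 4 * (4 : ℝ) ^ dyadicIndex k := by
        rw [← pow_mul, mul_comm (dyadicIndex k + 1), pow_mul, pow_succ]; norm_num; ring

/-- The Sobolev weight of order `α`, up to constants, on the `n`-th dyadic block. -/
def dyadicWeight (α : ℝ) (n : ℕ) : ℝ := ((4 : ℝ) ^ n) ^ α

lemma dyadicWeight_pos (α : ℝ) (n : ℕ) : 0 < dyadicWeight α n := by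
  unfold dyadicWeight; positivity

lemma dyadicWeight_mul_neg (α : ℝ) (n : ℕ) : dyadicWeight α n * dyadicWeight (-α) n = 1 := by
  rw [dyadicWeight, dyadicWeight, ← Real.rpow_add (by positivity), add_neg_cancel, Real.rpow_zero]

lemma wt_mul_wt_neg (α : ℝ) (k : ℤ) : wt α k * wt (-α) k = 1 := by
  rw [wt_mul_wt, add_neg_cancel, wt_zero]

lemma wt_le_dyadicWeight (α : ℝ) (k : ℤ) :
    wt α k ≤ 4 ^ |α| * dyadicWeight α (dyadicIndex k) := by
  have hpow : (0 : ℝ) < 4 ^ dyadicIndex k := by positivity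
  rcases le_total 0 α with hα | hα
  · rw [wt, dyadicWeight, abs_of_nonneg hα, ← Real.mul_rpow (by norm_num) hpow.le]
    exact Real.rpow_le_rpow (one_add_sq_pos k).le (one_add_sq_le_four_pow_dyadicIndex k) hα
  · calc wt α k ≤ dyadicWeight α (dyadicIndex k) :=
          Real.rpow_le_rpow_of_nonpos hpow (four_pow_dyadicIndex_le k) hα
      _ ≤ 4 ^ |α| * dyadicWeight α (dyadicIndex k) :=
          le_mul_of_one_le_left (dyadicWeight_pos _ _).le
            (Real.one_le_rpow (by norm_num) (abs_nonneg _))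

lemma dyadicWeight_le_wt (α : ℝ) (k : ℤ) :
    dyadicWeight α (dyadicIndex k) ≤ 4 ^ |α| * wt α k := by
  have hd := dyadicWeight_pos α (dyadicIndex k)
  have hw := wt_pos α k
  have hneg := wt_le_dyadicWeight (-α) k
  rw [abs_neg] at hneg
  calc dyadicWeight α (dyadicIndex k)
      = dyadicWeight α (dyadicIndex k) * wt α k * wt (-α) k := by
        rw [mul_assoc, wt_mul_wt_neg, mul_one]
    _ ≤ dyadicWeight α (dyadicIndex k) * wt α k
          * (4 ^ |α| * dyadicWeight (-α) (dyadicIndex k)) := by gcongr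
    _ = 4 ^ |α| * wt α k
          * (dyadicWeight α (dyadicIndex k) * dyadicWeight (-α) (dyadicIndex k)) := by ring
    _ = 4 ^ |α| * wt α k := by rw [dyadicWeight_mul_neg, mul_one]

/-- Dyadic blocks that are at most four apart. -/
def NearBlocks (n m : ℕ) : Prop := n ≤ m + 4 ∧ m ≤ n + 4

instance (n m : ℕ) : Decidable (NearBlocks n m) := inferInstanceAs (Decidable (_ ∧ _))

lemma NearBlocks.symm {n m : ℕ} (h : NearBlocks n m) : NearBlocks m n := ⟨h.2, h.1⟩

lemma card_filter_nearBlocks_le (n : ℕ) (N : Finset ℕ) :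
    (N.filter (NearBlocks n)).card ≤ 9 := by
  have hsub : N.filter (NearBlocks n) ⊆ Finset.Icc (n - 4) (n + 4) := by
    intro m hm
    obtain ⟨hnm, hmn⟩ := (Finset.mem_filter.1 hm).2
    rw [Finset.mem_Icc]; omega
  refine (Finset.card_le_card hsub).trans ?_
  rw [Nat.card_Icc]; omega

lemma NearBlocks.dyadicWeight_mul_neg_le (α : ℝ) {n m : ℕ} (h : NearBlocks n m) :
    dyadicWeight α n * dyadicWeight (-α) m ≤ (256 : ℝ) ^ |α| := by
  have hdist : |(n : ℝ) - m| ≤ 4 := by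
    have hnm : (n : ℝ) ≤ m + 4 := by exact_mod_cast h.1
    have hmn : (m : ℝ) ≤ n + 4 := by exact_mod_cast h.2
    exact abs_sub_le_iff.2 ⟨by linarith, by linarith⟩
  calc dyadicWeight α n * dyadicWeight (-α) m = (4 : ℝ) ^ (((n : ℝ) - m) * α) := by
        rw [dyadicWeight, dyadicWeight, ← Real.rpow_natCast, ← Real.rpow_natCast,
          ← Real.rpow_mul (by norm_num), ← Real.rpow_mul (by norm_num),
          ← Real.rpow_add (by norm_num)]
        congr 1; ring
    _ ≤ (4 : ℝ) ^ (4 * |α|) := by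
        refine Real.rpow_le_rpow_of_exponent_le (by norm_num) ((le_abs_self _).trans ?_)
        rw [abs_mul]; gcongr
    _ = (256 : ℝ) ^ |α| := by rw [Real.rpow_mul (by norm_num)]; norm_num

/-- The coefficient `p k` restricted to the blocks near `k` and renormalised by the weight of the
block, so that it becomes bounded. -/
def blockCoeff (α : ℝ) (p : ℤ → ℂ) (k : ℤ) (n : ℕ) : ℂ :=
  if NearBlocks (dyadicIndex k) n then p k * (dyadicWeight (-α) n : ℂ) else 0

lemma norm_blockCoeff_le {α : ℝ} {p : ℤ → ℂ} (hp : ∀ k, ‖p k‖ ≤ wt α k) (k : ℤ) (n : ℕ) :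
    ‖blockCoeff α p k n‖ ≤ 4 ^ |α| * 256 ^ |α| := by
  have hd := dyadicWeight_pos (-α) n
  rw [blockCoeff]
  split_ifs with h
  · calc ‖p k * (dyadicWeight (-α) n : ℂ)‖ = ‖p k‖ * dyadicWeight (-α) n := by
          rw [norm_mul, Complex.norm_real, Real.norm_of_nonneg hd.le]
      _ ≤ 4 ^ |α| * dyadicWeight α (dyadicIndex k) * dyadicWeight (-α) n := by
          gcongr; exact (hp k).trans (wt_le_dyadicWeight α k)
      _ = 4 ^ |α| * (dyadicWeight α (dyadicIndex k) * dyadicWeight (-α) n) := by ring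
      _ ≤ 4 ^ |α| * 256 ^ |α| := by gcongr; exact h.dyadicWeight_mul_neg_le α
  · rw [norm_zero]; positivity

lemma sum_norm_blockCoeff_sq_le {α : ℝ} {p : ℤ → ℂ} (hp : ∀ k, ‖p k‖ ≤ wt α k) (k : ℤ)
    (N : Finset ℕ) : ∑ n ∈ N, ‖blockCoeff α p k n‖ ^ 2 ≤ 9 * (4 ^ |α| * 256 ^ |α|) ^ 2 := by
  calc ∑ n ∈ N, ‖blockCoeff α p k n‖ ^ 2
      = ∑ n ∈ N with NearBlocks (dyadicIndex k) n, ‖blockCoeff α p k n‖ ^ 2 := by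
        refine (Finset.sum_filter_of_ne fun n _ hn => ?_).symm
        by_contra h
        exact hn (by rw [blockCoeff, if_neg h]; simp)
    _ ≤ ∑ n ∈ N with NearBlocks (dyadicIndex k) n, (4 ^ |α| * 256 ^ |α|) ^ 2 := by
        gcongr with n
        exact norm_blockCoeff_le hp k n
    _ = (N.filter (NearBlocks (dyadicIndex k))).card * (4 ^ |α| * 256 ^ |α|) ^ 2 := by
        rw [Finset.sum_const, nsmul_eq_mul]
    _ ≤ 9 * (4 ^ |α| * 256 ^ |α|) ^ 2 := by
        gcongr
        exact_mod_cast card_filter_nearBlocks_le _ N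

/-- Near the diagonal the weights `p` and `q` balance, and the blocks are almost orthogonal, so a
different kernel may be used on every block. -/
lemma KernelBound.exists_nearBlocks (α : ℝ) : ∃ C : ℝ, 0 ≤ C ∧ ∀ (F : ℕ → ℤ → ℤ → ℂ) (B : ℝ),
    (∀ n, KernelBound (F n) B) → ∀ p q : ℤ → ℂ, (∀ k, ‖p k‖ ≤ wt α k) →
      (∀ k, ‖q k‖ ≤ wt (-α) k) → KernelBound (fun k m =>
        if NearBlocks (dyadicIndex k) (dyadicIndex m) then p k * q m * F (dyadicIndex m) k m
        else 0) (C * B) := by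
  have hfour : (1 : ℝ) ≤ 4 ^ |α| := Real.one_le_rpow (by norm_num) (abs_nonneg _)
  have h256 : (1 : ℝ) ≤ 256 ^ |α| := Real.one_le_rpow (by norm_num) (abs_nonneg _)
  refine ⟨4 ^ |α| * (9 * (4 ^ |α| * 256 ^ |α|) ^ 2), by positivity, fun F B hF p q hp hq => ?_⟩
  have hblock := KernelBound.block (hF 0).nonneg hF dyadicIndex (blockCoeff α p)
    (by nlinarith [one_le_mul_of_one_le_of_one_le hfour h256]) (sum_norm_blockCoeff_sq_le hp)
  have hscale : ∀ m, ‖q m * (dyadicWeight α (dyadicIndex m) : ℂ)‖ ≤ 4 ^ |α| := fun m => by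
    have hw := wt_pos (-α) m
    have hd := dyadicWeight_pos α (dyadicIndex m)
    calc ‖q m * (dyadicWeight α (dyadicIndex m) : ℂ)‖
        = ‖q m‖ * dyadicWeight α (dyadicIndex m) := by
          rw [norm_mul, Complex.norm_real, Real.norm_of_nonneg hd.le]
      _ ≤ wt (-α) m * (4 ^ |α| * wt α m) := by
          gcongr
          · exact hq m
          · exact dyadicWeight_le_wt α m
      _ = 4 ^ |α| * (wt α m * wt (-α) m) := by ring
      _ = 4 ^ |α| := by rw [wt_mul_wt_neg, mul_one]
  refine ((hblock.mul_right (by positivity) hscale).congr fun k m => ?_).mono (le_of_eq (by ring))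
  rw [blockCoeff]
  split_ifs
  · have hcancel : (dyadicWeight α (dyadicIndex m) : ℂ) * (dyadicWeight (-α) (dyadicIndex m) : ℂ)
        = 1 := by exact_mod_cast dyadicWeight_mul_neg α (dyadicIndex m)
    linear_combination (p k * q m * F (dyadicIndex m) k m) * hcancel
  · simp

/-! ### Frequency cutoffs -/

/-- The profile of the low-frequency cutoffs: equal to `1` on `|x| ≤ 1/8`, vanishing for
`1/4 ≤ |x|`. -/
def cutoffBump : ContDiffBump (0 : ℝ) := ⟨1 / 8, 1 / 4, by norm_num, by norm_num⟩

/-- `cutoffBump` as a Schwartz function. -/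
def cutoffProfile : SchwartzMap ℝ ℝ :=
  cutoffBump.hasCompactSupport.toSchwartzMap cutoffBump.contDiff

/-- The smooth cutoff to frequencies far below the `n`-th dyadic block. -/
def lowCutoff (n : ℕ) (k : ℤ) : ℝ := cutoffProfile (((2 : ℝ) ^ n)⁻¹ * k)

lemma norm_lowCutoff_le (n : ℕ) (k : ℤ) : ‖(lowCutoff n k : ℂ)‖ ≤ 1 := by
  have hnonneg : 0 ≤ lowCutoff n k := cutoffBump.nonneg
  rw [Complex.norm_real, Real.norm_of_nonneg hnonneg]; exact cutoffBump.le_one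

lemma lowCutoff_eq_one {n : ℕ} {k : ℤ} (h : 8 * |(k : ℝ)| ≤ 2 ^ n) : lowCutoff n k = 1 := by
  refine cutoffBump.one_of_mem_closedBall ?_
  rw [mem_closedBall_zero_iff, Real.norm_eq_abs, abs_mul, abs_of_pos (by positivity),
    inv_mul_le_iff₀ (by positivity), cutoffBump]
  linarith

lemma lowCutoff_eq_zero {n : ℕ} {k : ℤ} (h : 2 ^ n ≤ 4 * |(k : ℝ)|) : lowCutoff n k = 0 := by
  refine cutoffBump.zero_of_le_dist ?_
  rw [dist_zero_right, Real.norm_eq_abs, abs_mul, abs_of_pos (by positivity),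
    le_inv_mul_iff₀ (by positivity), cutoffBump]
  linarith

lemma four_mul_abs_lt_of_lowCutoff_ne_zero {n : ℕ} {k : ℤ} (h : lowCutoff n k ≠ 0) :
    4 * |(k : ℝ)| < 2 ^ n :=
  not_le.1 (mt lowCutoff_eq_zero h)

/-- The cutoff to pairs of comparable frequencies. -/
def diagCutoff (k m : ℤ) : ℝ := 1 - lowCutoff (dyadicIndex k) m - lowCutoff (dyadicIndex m) k

lemma diagCutoff_comm (k m : ℤ) : diagCutoff k m = diagCutoff m k := by
  unfold diagCutoff; ring

lemma diagCutoff_eq_zero {k m : ℤ} (h : dyadicIndex m + 4 < dyadicIndex k) :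
    diagCutoff k m = 0 := by
  have hk : k ≠ 0 := by rintro rfl; rw [dyadicIndex_zero] at h; omega
  have hlarge := two_pow_dyadicIndex_le hk
  have hsmall := abs_add_one_le_two_pow_dyadicIndex m
  have hsep : (2 : ℝ) ^ (dyadicIndex m + 5) ≤ 2 ^ dyadicIndex k :=
    pow_le_pow_right₀ (by norm_num) (by omega)
  have hpos : (0 : ℝ) < 2 ^ dyadicIndex m := by positivity
  rw [pow_add] at hsep
  rw [pow_succ] at hsmall
  rw [diagCutoff, lowCutoff_eq_one (by linarith), lowCutoff_eq_zero (by linarith)]; ring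

lemma nearBlocks_of_diagCutoff_ne_zero {k m : ℤ} (h : diagCutoff k m ≠ 0) :
    NearBlocks (dyadicIndex k) (dyadicIndex m) := by
  refine ⟨?_, ?_⟩ <;> by_contra hfar
  · exact h (diagCutoff_eq_zero (by omega))
  · exact h (by rw [diagCutoff_comm]; exact diagCutoff_eq_zero (by omega))

lemma KernelBound.exists_diagCutoff (α : ℝ) : ∃ C : ℝ, 0 ≤ C ∧ ∀ (F : ℤ → ℤ → ℂ) (B : ℝ),
    KernelBound F B → ∀ p q : ℤ → ℂ, (∀ k, ‖p k‖ ≤ wt α k) → (∀ k, ‖q k‖ ≤ wt (-α) k) →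
      KernelBound (fun k m => (diagCutoff k m : ℂ) * (p k * q m * F k m)) (C * B) := by
  obtain ⟨C₁, hC₁, hnear⟩ := KernelBound.exists_nearBlocks α
  obtain ⟨C₂, hC₂, hnear'⟩ := KernelBound.exists_nearBlocks (-α)
  refine ⟨C₁ + C₂ + C₁, by positivity, fun F B hF p q hp hq => ?_⟩
  have hfull := hnear (fun _ => F) B (fun _ => hF) p q hp hq
  have hrow := hnear (fun n k m => (lowCutoff n k : ℂ) * F k m) B
    (fun n => hF.mul_left_of_norm_le_one (norm_lowCutoff_le n)) p q hp hq
  have hcol := (hnear' (fun n k m => (lowCutoff n k : ℂ) * F m k) B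
    (fun n => hF.transpose.mul_left_of_norm_le_one (norm_lowCutoff_le n)) q p hq
    (by simpa only [neg_neg] using hp)).transpose
  refine (((hfull.sub hcol).sub hrow).congr fun k m => ?_).mono (le_of_eq (by ring))
  by_cases h : NearBlocks (dyadicIndex k) (dyadicIndex m)
  · rw [if_pos h, if_pos h.symm, if_pos h, diagCutoff]
    push_cast; ring
  · rw [if_neg h, if_neg (mt NearBlocks.symm h), if_neg h,
      not_not.1 (mt nearBlocks_of_diagCutoff_ne_zero h)]
    simp

/-! ### The three frequency regimes -/

lemma norm_wt (α : ℝ) (k : ℤ) : ‖(wt α k : ℂ)‖ = wt α k := by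
  rw [Complex.norm_real, Real.norm_of_nonneg (wt_pos _ _).le]

lemma eq_zero_of_abs_lt_one {k : ℤ} (h : |(k : ℝ)| < 1) : k = 0 :=
  Int.abs_lt_one_iff.1 (by exact_mod_cast h)

lemma nearBlocks_of_lowCutoff_sub_ne_zero {k j : ℤ} (h : lowCutoff (dyadicIndex k) (k - j) ≠ 0) :
    NearBlocks (dyadicIndex j) (dyadicIndex k) := by
  have hlow := four_mul_abs_lt_of_lowCutoff_ne_zero h
  push_cast at hlow
  rcases eq_or_ne k 0 with rfl | hk
  · have hj : j = 0 := eq_zero_of_abs_lt_one <| by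
      rw [dyadicIndex_zero, Int.cast_zero, zero_sub, abs_neg] at hlow; linarith
    subst hj; exact ⟨by omega, by omega⟩
  have hk₁ := two_pow_dyadicIndex_le hk
  have hk₂ := abs_add_one_le_two_pow_dyadicIndex k
  have hj₂ := abs_add_one_le_two_pow_dyadicIndex j
  have hpos : (0 : ℝ) < 2 ^ dyadicIndex k := by positivity
  have hkj : |(k : ℝ)| ≤ |(k : ℝ) - j| + |(j : ℝ)| := by
    simpa only [sub_add_cancel] using abs_add_le ((k : ℝ) - j) j
  have hjk : |(j : ℝ)| ≤ |(k : ℝ) - j| + |(k : ℝ)| := by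
    simpa only [sub_add_cancel, abs_sub_comm] using abs_add_le ((j : ℝ) - k) k
  rw [pow_succ] at hk₂ hj₂
  refine ⟨?_, ?_⟩ <;> by_contra hfar
  · have hsep : (2 : ℝ) ^ (dyadicIndex k + 5) ≤ 2 ^ dyadicIndex j :=
      pow_le_pow_right₀ (by norm_num) (by omega)
    rw [pow_add] at hsep
    have hj : j ≠ 0 := by rintro rfl; rw [dyadicIndex_zero] at hfar; omega
    linarith [two_pow_dyadicIndex_le hj]
  · have hsep : (2 : ℝ) ^ (dyadicIndex j + 5) ≤ 2 ^ dyadicIndex k :=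
      pow_le_pow_right₀ (by norm_num) (by omega)
    rw [pow_add] at hsep
    linarith [abs_nonneg (j : ℝ)]

lemma KernelBound.exists_lowHigh (σ : ℝ) : ∃ C : ℝ, 0 ≤ C ∧ ∀ g : FC, (Summable fun k => ‖g k‖) →
    KernelBound (fun k j => (lowCutoff (dyadicIndex k) (k - j) : ℂ) * g (k - j) * (wt σ k : ℂ)
      * (wt (-σ) j : ℂ)) (C * linfty g) := by
  obtain ⟨C₁, hC₁, hnear⟩ := KernelBound.exists_nearBlocks (-σ)
  obtain ⟨C₂, hC₂, hmol⟩ := exists_linfty_Jmol_le cutoffProfile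
  refine ⟨C₁ * C₂, by positivity, fun g hg => ?_⟩
  have hlow : ∀ n : ℕ, KernelBound (fun j k : ℤ => (lowCutoff n (k - j) : ℂ) * g (k - j))
      (C₂ * linfty g) := fun n =>
    (KernelBound.toeplitz (summable_norm_Jmol cutoffProfile ((2 : ℝ) ^ n)⁻¹ hg)).transpose.mono
      (hmol _ g hg)
  have hmain := (hnear (fun n j k => (lowCutoff n (k - j) : ℂ) * g (k - j)) _ hlow
    (fun j => (wt (-σ) j : ℂ)) (fun k => (wt σ k : ℂ)) (fun k => (norm_wt _ _).le)
    (fun k => by rw [norm_wt, neg_neg])).transpose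
  refine (hmain.congr fun k j => ?_).mono (le_of_eq (by ring))
  split_ifs with h
  · ring
  · rw [not_not.1 (mt nearBlocks_of_lowCutoff_sub_ne_zero h)]; simp

lemma sum_geometric_tail_le (a : ℕ) (N : Finset ℕ) :
    ∑ n ∈ N, (if a ≤ n then (4 : ℝ) * (1 / 4) ^ (n - a) else 0) ≤ 6 := by
  have hsum : Summable fun n : ℕ => (4 : ℝ) * (1 / 4) ^ n :=
    (summable_geometric_of_lt_one (by norm_num) (by norm_num)).mul_left _
  have hinj : Set.InjOn (fun n => n - a) (N.filter (a ≤ ·) : Set ℕ) := by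
    intro x hx y hy hxy
    have hx' := (Finset.mem_filter.1 hx).2
    have hy' := (Finset.mem_filter.1 hy).2
    simp only at hxy
    omega
  rw [← Finset.sum_filter, ← Finset.sum_image (f := fun n => (4 : ℝ) * (1 / 4) ^ n) hinj]
  calc ∑ n ∈ (N.filter (a ≤ ·)).image (fun n => n - a), (4 : ℝ) * (1 / 4) ^ n
      ≤ ∑' n : ℕ, (4 : ℝ) * (1 / 4) ^ n := hsum.sum_le_tsum _ fun _ _ => by positivity
    _ ≤ 6 := by
        rw [tsum_mul_left, tsum_geometric_of_lt_one (by norm_num) (by norm_num)]; norm_num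

lemma dyadicIndex_le_of_lt {k : ℤ} {n : ℕ} (h : 4 * |(k : ℝ)| < 2 ^ n) : dyadicIndex k ≤ n := by
  rcases eq_or_ne k 0 with rfl | hk
  · rw [dyadicIndex_zero]; exact n.zero_le
  · have hk₁ := two_pow_dyadicIndex_le hk
    have hlt : (2 : ℝ) ^ dyadicIndex k < 2 ^ n := by linarith [abs_nonneg (k : ℝ)]
    exact ((pow_lt_pow_iff_right₀ (by norm_num)).1 hlt).le

lemma one_add_sq_le_of_lt {k : ℤ} {n : ℕ} (h : 4 * |(k : ℝ)| < 2 ^ n) :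
    1 + (k : ℝ) ^ 2 ≤ 4 ^ n := by
  rcases eq_or_ne k 0 with rfl | hk
  · simpa using one_le_pow₀ (by norm_num : (1 : ℝ) ≤ 4)
  · have hk₁ : (1 : ℝ) ≤ |(k : ℝ)| := by exact_mod_cast Int.one_le_abs hk
    have hfour : (4 : ℝ) ^ n = (2 ^ n) ^ 2 := by rw [← pow_mul, mul_comm, pow_mul]; norm_num
    rw [hfour, ← sq_abs (k : ℝ)]; nlinarith

lemma wt_mul_dyadicWeight_sq_le {σ : ℝ} (hσ : 1 ≤ σ) {k : ℤ} {n : ℕ} (h : 4 * |(k : ℝ)| < 2 ^ n) :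
    (wt (σ / 2) k * dyadicWeight (-(σ / 2)) n) ^ 2 ≤ 4 * (1 / 4) ^ (n - dyadicIndex k) := by
  have hpos : (0 : ℝ) < 4 ^ n := by positivity
  calc (wt (σ / 2) k * dyadicWeight (-(σ / 2)) n) ^ 2 = ((1 + (k : ℝ) ^ 2) / 4 ^ n) ^ σ := by
        rw [mul_pow, wt_half_sq, wt, dyadicWeight,
          ← Real.rpow_natCast (((4 : ℝ) ^ n) ^ (-(σ / 2))) 2, ← Real.rpow_mul hpos.le,
          show -(σ / 2) * ((2 : ℕ) : ℝ) = -σ by push_cast; ring,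
          Real.div_rpow (one_add_sq_pos k).le hpos.le, Real.rpow_neg hpos.le, ← div_eq_mul_inv]
    _ ≤ (1 + (k : ℝ) ^ 2) / 4 ^ n :=
        Real.rpow_le_self_of_le_one (div_nonneg (one_add_sq_pos k).le hpos.le)
          (div_le_one_of_le₀ (one_add_sq_le_of_lt h) hpos.le) hσ
    _ ≤ 4 * 4 ^ dyadicIndex k / 4 ^ n := by gcongr; exact one_add_sq_le_four_pow_dyadicIndex k
    _ = 4 * (1 / 4) ^ (n - dyadicIndex k) := by
        have hsplit : (4 : ℝ) ^ n = 4 ^ (n - dyadicIndex k) * 4 ^ dyadicIndex k := by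
          rw [← pow_add, Nat.sub_add_cancel (dyadicIndex_le_of_lt h)]
        rw [hsplit, one_div, inv_pow]; field_simp

/-- Row factor of the `i`-th term in the geometric expansion of the high-low kernel. -/
def highLowRow (σ : ℝ) (i : ℕ) (k : ℤ) (n : ℕ) : ℝ :=
  lowCutoff n k * (wt (σ / 2) k * dyadicWeight (-(σ / 2)) n) * (4 * k / 2 ^ n) ^ i

/-- Column factor of the `i`-th term in the geometric expansion of the high-low kernel. -/
def highLowCol (σ : ℝ) (i : ℕ) (m : ℤ) : ℝ :=
  wt (-(σ / 2)) m * dyadicWeight (σ / 2) (dyadicIndex m) * (2 ^ dyadicIndex m / (m : ℝ)) ^ i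

lemma highLowRow_sq_le {σ : ℝ} (hσ : 1 ≤ σ) (i : ℕ) (k : ℤ) (n : ℕ) : highLowRow σ i k n ^ 2
    ≤ if dyadicIndex k ≤ n then 4 * (1 / 4) ^ (n - dyadicIndex k) else 0 := by
  by_cases h : lowCutoff n k = 0
  · rw [highLowRow, h, zero_mul, zero_mul, zero_pow two_ne_zero]
    split_ifs <;> positivity
  have hlow := four_mul_abs_lt_of_lowCutoff_ne_zero h
  have hcut : lowCutoff n k ^ 2 ≤ 1 := by
    have hnorm := norm_lowCutoff_le n k
    rw [Complex.norm_real, Real.norm_eq_abs] at hnorm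
    exact (sq_le_one_iff_abs_le_one _).2 hnorm
  have hratio : ((4 * (k : ℝ) / 2 ^ n) ^ i) ^ 2 ≤ 1 := by
    refine (sq_le_one_iff_abs_le_one _).2 ?_
    rw [abs_pow, abs_div, abs_mul, abs_of_pos (by positivity : (0 : ℝ) < 2 ^ n),
      abs_of_pos (by norm_num : (0 : ℝ) < 4)]
    exact pow_le_one₀ (by positivity) (div_le_one_of_le₀ hlow.le (by positivity))
  rw [if_pos (dyadicIndex_le_of_lt hlow), highLowRow, mul_pow, mul_pow]
  calc lowCutoff n k ^ 2 * (wt (σ / 2) k * dyadicWeight (-(σ / 2)) n) ^ 2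
        * ((4 * (k : ℝ) / 2 ^ n) ^ i) ^ 2
      ≤ 1 * (4 * (1 / 4 : ℝ) ^ (n - dyadicIndex k)) * 1 := by
        gcongr; exact wt_mul_dyadicWeight_sq_le hσ hlow
    _ = 4 * (1 / 4 : ℝ) ^ (n - dyadicIndex k) := by rw [one_mul, mul_one]

lemma abs_highLowCol_le (σ : ℝ) (i : ℕ) (m : ℤ) : |highLowCol σ i m| ≤ 4 ^ |σ / 2| := by
  have hw := wt_pos (-(σ / 2)) m
  have hd := dyadicWeight_pos (σ / 2) (dyadicIndex m)
  have hweight : wt (-(σ / 2)) m * dyadicWeight (σ / 2) (dyadicIndex m) ≤ 4 ^ |σ / 2| := by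
    calc wt (-(σ / 2)) m * dyadicWeight (σ / 2) (dyadicIndex m)
        ≤ wt (-(σ / 2)) m * (4 ^ |σ / 2| * wt (σ / 2) m) := by
          gcongr; exact dyadicWeight_le_wt _ m
      _ = 4 ^ |σ / 2| * (wt (σ / 2) m * wt (-(σ / 2)) m) := by ring
      _ = 4 ^ |σ / 2| := by rw [wt_mul_wt_neg, mul_one]
  have hratio : |2 ^ dyadicIndex m / (m : ℝ)| ≤ 1 := by
    rcases eq_or_ne m 0 with rfl | hm
    · simp
    · rw [abs_div, abs_of_pos (by positivity : (0 : ℝ) < 2 ^ dyadicIndex m)]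
      exact div_le_one_of_le₀ (two_pow_dyadicIndex_le hm) (abs_nonneg _)
  rw [highLowCol, abs_mul, abs_pow, abs_of_pos (mul_pos hw hd)]
  calc wt (-(σ / 2)) m * dyadicWeight (σ / 2) (dyadicIndex m) * |2 ^ dyadicIndex m / (m : ℝ)| ^ i
      ≤ 4 ^ |σ / 2| * 1 := by gcongr; exact pow_le_one₀ (abs_nonneg _) hratio
    _ = 4 ^ |σ / 2| := mul_one _

/-- The geometric expansion of `m / (k - m)` in powers of `k / m`; on the support of the cutoff
`|k| < |m|`, except at `k = m = 0`, where `f 0 = 0`. -/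
lemma hasSum_highLow (σ : ℝ) {f : FC} (hf : f 0 = 0) (k m : ℤ) :
    HasSum (fun i : ℕ => (-(1 / 4) ^ i : ℂ)
        * ((highLowCol σ i m : ℂ) * ((highLowRow σ i k (dyadicIndex m) : ℂ) * f (k - m))))
      ((lowCutoff (dyadicIndex m) k : ℂ) * (wt (σ / 2) k : ℂ) * (wt (-(σ / 2)) m : ℂ)
        * ((m : ℂ) / ((k : ℂ) - m)) * f (k - m)) := by
  by_cases h : lowCutoff (dyadicIndex m) k = 0
  · simp [highLowRow, h]
  have hlow := four_mul_abs_lt_of_lowCutoff_ne_zero h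
  rcases eq_or_ne m 0 with rfl | hm
  · have hk : k = 0 := eq_zero_of_abs_lt_one <| by
      rw [dyadicIndex_zero] at hlow; linarith [abs_nonneg (k : ℝ)]
    simp [hk, hf]
  have hm' : (m : ℂ) ≠ 0 := by exact_mod_cast hm
  have hlt : |(k : ℝ)| < |(m : ℝ)| := by
    linarith [abs_nonneg (k : ℝ), two_pow_dyadicIndex_le hm,
      abs_pos.2 (Int.cast_ne_zero.2 hm : (m : ℝ) ≠ 0)]
  have hratio : ‖(k : ℂ) / m‖ < 1 := by
    rwa [norm_div, div_lt_one (norm_pos_iff.2 hm'), Complex.norm_intCast, Complex.norm_intCast]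
  have hquot : (m : ℂ) / ((k : ℂ) - m) = -(1 - (k : ℂ) / m)⁻¹ := by
    rw [← inv_neg, neg_sub, show (k : ℂ) / m - 1 = (k - m) / m by field_simp, inv_div]
  have hgeom := (hasSum_geometric_of_norm_lt_one hratio).mul_left
    (-((lowCutoff (dyadicIndex m) k : ℂ) * (wt (σ / 2) k : ℂ) * (wt (-(σ / 2)) m : ℂ) * f (k - m)))
  have hd : (dyadicWeight (σ / 2) (dyadicIndex m) : ℂ) * dyadicWeight (-(σ / 2)) (dyadicIndex m)
      = 1 := by exact_mod_cast dyadicWeight_mul_neg (σ / 2) (dyadicIndex m)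
  rw [hquot, show ∀ a b c d e : ℂ, a * b * c * -d * e = -(a * b * c * e) * d by intros; ring]
  refine hgeom.congr_fun fun i => ?_
  have hpow : (1 / 4 : ℂ) ^ i * ((2 ^ dyadicIndex m / (m : ℂ)) ^ i
      * (4 * (k : ℂ) / 2 ^ dyadicIndex m) ^ i) = ((k : ℂ) / m) ^ i := by
    rw [← mul_pow, ← mul_pow]; congr 1; field_simp
  rw [← hpow, highLowRow, highLowCol]
  push_cast
  linear_combination (-(1 / 4 : ℂ) ^ i * (wt (-(σ / 2)) m) * (2 ^ dyadicIndex m / (m : ℂ)) ^ i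
    * (lowCutoff (dyadicIndex m) k) * (wt (σ / 2) k) * (4 * (k : ℂ) / 2 ^ dyadicIndex m) ^ i
    * f (k - m)) * hd

lemma KernelBound.exists_highLow {σ : ℝ} (hσ : 1 ≤ σ) : ∃ C : ℝ, 0 ≤ C ∧ ∀ f : FC,
    (Summable fun k => ‖f k‖) → f 0 = 0 → KernelBound (fun k m =>
      (lowCutoff (dyadicIndex m) k : ℂ) * (wt (σ / 2) k : ℂ) * (wt (-(σ / 2)) m : ℂ)
        * ((m : ℂ) / ((k : ℂ) - m)) * f (k - m)) (C * linfty f) := by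
  refine ⟨4 / 3 * (4 ^ |σ / 2| * 6), by positivity, fun f hf hf₀ => ?_⟩
  have hrow : ∀ i k (N : Finset ℕ), ∑ n ∈ N, ‖(highLowRow σ i k n : ℂ)‖ ^ 2 ≤ 6 := by
    intro i k N
    simp only [Complex.norm_real, Real.norm_eq_abs, sq_abs]
    exact (Finset.sum_le_sum fun n _ => highLowRow_sq_le hσ i k n).trans
      (sum_geometric_tail_le (dyadicIndex k) N)
  have hcol : ∀ i m, ‖(highLowCol σ i m : ℂ)‖ ≤ 4 ^ |σ / 2| := fun i m => by
    rw [Complex.norm_real]; exact abs_highLowCol_le σ i m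
  have hterm : ∀ i : ℕ, KernelBound (fun k m => (-(1 / 4) ^ i : ℂ)
      * ((highLowCol σ i m : ℂ) * ((highLowRow σ i k (dyadicIndex m) : ℂ) * f (k - m))))
      ((1 / 4) ^ i * (4 ^ |σ / 2| * (linfty f * 6))) := fun i => by
    have hblock := KernelBound.block (linfty_nonneg f) (fun _ => KernelBound.toeplitz hf)
      dyadicIndex (fun k n => (highLowRow σ i k n : ℂ)) (by norm_num) (hrow i)
    refine ((hblock.mul_right (by positivity) (hcol i)).const_mul (-(1 / 4) ^ i : ℂ)).mono ?_
    rw [norm_neg, norm_pow]; norm_num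
  have hgeom : HasSum (fun i : ℕ => (1 / 4 : ℝ) ^ i * (4 ^ |σ / 2| * (linfty f * 6)))
      (4 / 3 * (4 ^ |σ / 2| * 6) * linfty f) := by
    rw [show 4 / 3 * ((4 : ℝ) ^ |σ / 2| * 6) * linfty f
      = (1 - 1 / 4)⁻¹ * (4 ^ |σ / 2| * (linfty f * 6)) by ring]
    exact (hasSum_geometric_of_lt_one (by norm_num) (by norm_num)).mul_right _
  exact KernelBound.of_hasSum hterm hgeom (hasSum_highLow σ hf₀)

lemma abs_le_wt_half (k : ℤ) : |(k : ℝ)| ≤ wt (1 / 2) k := by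
  rw [wt, ← Real.sqrt_eq_rpow]
  exact Real.abs_le_sqrt (by linarith)

lemma KernelBound.exists_diagCutoff_mul_add {α β : ℝ} (hαβ : α + β = -1) : ∃ C : ℝ, 0 ≤ C ∧
    ∀ (F : ℤ → ℤ → ℂ) (B : ℝ), KernelBound F B → KernelBound (fun k m =>
      (diagCutoff k m : ℂ) * (((wt α k * wt β m * (m * (k + m)) : ℝ) : ℂ) * F k m)) (C * B) := by
  obtain ⟨C₁, hC₁, hcross⟩ := KernelBound.exists_diagCutoff (α + 1 / 2)
  obtain ⟨C₂, hC₂, hsquare⟩ := KernelBound.exists_diagCutoff α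
  refine ⟨C₁ + C₂, by positivity, fun F B hF => ?_⟩
  have hweight : ∀ γ k, ‖((k * wt γ k : ℝ) : ℂ)‖ ≤ wt (γ + 1 / 2) k := fun γ k => by
    rw [Complex.norm_real, Real.norm_eq_abs, abs_mul, abs_of_pos (wt_pos γ k), add_comm,
      ← wt_mul_wt]
    exact mul_le_mul_of_nonneg_right (abs_le_wt_half k) (wt_pos γ k).le
  have hweight_sq : ∀ k : ℤ, ‖((k ^ 2 * wt β k : ℝ) : ℂ)‖ ≤ wt (-α) k := fun k => by
    rw [Complex.norm_real, Real.norm_eq_abs, abs_mul, abs_of_pos (wt_pos β k),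
      show -α = 1 + β by linarith, ← wt_mul_wt, wt_one, abs_of_nonneg (sq_nonneg _)]
    exact mul_le_mul_of_nonneg_right (by linarith) (wt_pos β k).le
  have hkm := hcross F B hF (fun k => ((k * wt α k : ℝ) : ℂ)) (fun m => ((m * wt β m : ℝ) : ℂ))
    (hweight α) fun m => (hweight β m).trans_eq (by congr 1; linarith)
  have hmm := hsquare F B hF (fun k => (wt α k : ℂ)) (fun m => ((m ^ 2 * wt β m : ℝ) : ℂ))
    (fun k => (norm_wt α k).le) hweight_sq
  refine ((hkm.add hmm).congr fun k m => ?_).mono (le_of_eq (by ring))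
  push_cast; ring

/-- Writing `σ = n r` with `0 < r < 1`, the divided difference of the `σ`-th power is Löwner's
kernel for the exponent `r` times a geometric sum. -/
lemma KernelBound.exists_diagCutoff_wt_divided_difference {σ : ℝ} (hσ : 0 < σ) :
    ∃ Q : ℤ → ℤ → ℝ, (∀ k m, wt σ k - wt σ m = (k ^ 2 - m ^ 2) * Q k m) ∧
      ∃ C : ℝ, 0 ≤ C ∧ ∀ (F : ℤ → ℤ → ℂ) (B : ℝ), KernelBound F B → KernelBound (fun k m =>
        (diagCutoff k m : ℂ) * (((wt (-(σ / 2)) k * wt (-(σ / 2)) m * (m * (k + m)) * Q k m : ℝ)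
          : ℂ) * F k m)) (C * B) := by
  obtain ⟨n, hn⟩ := exists_nat_gt σ
  have hn₀ : (0 : ℝ) < n := hσ.trans hn
  obtain ⟨r, hrn⟩ : ∃ r : ℝ, r * n = σ := ⟨σ / n, div_mul_cancel₀ _ hn₀.ne'⟩
  have hr : r ∈ Set.Ioo (0 : ℝ) 1 :=
    ⟨pos_of_mul_pos_left (hrn ▸ hσ) hn₀.le, by by_contra! h; nlinarith⟩
  obtain ⟨Λ, hΛ, hschur⟩ := KernelBound.exists_mul_rpow_divided_difference hr
  let L : ℤ → ℤ → ℝ := fun k m => Λ (1 + (k : ℝ) ^ 2) (1 + (m : ℝ) ^ 2)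
  let α : ℕ → ℝ := fun i => -(σ / 2) + r * i - (1 - r) / 2
  choose C hC hdiag using fun i =>
    KernelBound.exists_diagCutoff_mul_add (α := α i) (β := -1 - α i) (by ring)
  have hpow : ∀ (l : ℤ) (i : ℕ), wt (r * i) l = wt r l ^ i := fun l i => by
    rw [wt, wt, Real.rpow_mul (one_add_sq_pos l).le, Real.rpow_natCast]
  refine ⟨fun k m => L k m * ∑ i ∈ Finset.range n, wt r k ^ i * wt r m ^ (n - 1 - i),
    fun k m => ?_, ∑ i ∈ Finset.range n, C i, Finset.sum_nonneg fun i _ => hC i,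
    fun F B hF => ?_⟩
  · have hgeom := geom_sum₂_mul (wt r k) (wt r m) n
    have hdiff : wt r k - wt r m = (1 + (k : ℝ) ^ 2 - (1 + (m : ℝ) ^ 2)) * L k m :=
      hΛ _ (one_add_sq_pos k) _ (one_add_sq_pos m)
    rw [← hpow, ← hpow, hrn, hdiff] at hgeom
    linear_combination -hgeom
  · have hF' := hschur one_add_sq_pos one_add_sq_pos hF
    have hsum := KernelBound.sum (Finset.range n) fun i _ => hdiag i _ _ hF'
    refine (hsum.congr fun k m => ?_).mono (Finset.sum_mul (Finset.range n) C B).ge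
    simp only [Finset.mul_sum, Complex.ofReal_sum, Finset.sum_mul]
    refine Finset.sum_congr rfl fun i hi => ?_
    have hrow : wt (α i) k * wt ((1 - r) / 2) k = wt (-(σ / 2)) k * wt r k ^ i := by
      rw [← hpow, wt_mul_wt, wt_mul_wt]; congr 1; ring
    have hcol : wt (-1 - α i) m * wt ((1 - r) / 2) m = wt (-(σ / 2)) m * wt r m ^ (n - 1 - i) := by
      rw [← hpow, wt_mul_wt, wt_mul_wt, Nat.sub_sub,
        Nat.cast_sub (by have := Finset.mem_range.1 hi; omega)]
      congr 1; push_cast; linear_combination (-1 : ℝ) * hrn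
    have hterm : wt (α i) k * wt (-1 - α i) m * (m * (k + m))
        * (wt ((1 - r) / 2) k * wt ((1 - r) / 2) m * L k m) = wt (-(σ / 2)) k * wt (-(σ / 2)) m
        * (m * (k + m)) * (L k m * (wt r k ^ i * wt r m ^ (n - 1 - i))) := by
      linear_combination (m * (k + m) * L k m) * (wt (-1 - α i) m * wt ((1 - r) / 2) m * hrow
        + wt (-(σ / 2)) k * wt r k ^ i * hcol)
    rw [← hterm]
    push_cast [wt, L]
    ring

/-- Near the diagonal the symbol is a commutator: `wt σ k * m - k * wt σ m` is
`m * (wt σ k - wt σ m) - (k - m) * wt σ m`, which supplies the factor `k - m` that turns `f` into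
its derivative. -/
lemma KernelBound.exists_nearDiagonal {σ : ℝ} (hσ : 0 < σ) : ∃ C : ℝ, 0 ≤ C ∧ ∀ f : FC,
    (Summable fun k => ‖D1 f k‖) → KernelBound (fun k m => (diagCutoff k m : ℂ)
      * ((wt (-(σ / 2)) k : ℂ) * (wt (-(σ / 2)) m : ℂ)
        * (Complex.I * ((wt σ k : ℂ) * m - k * (wt σ m : ℂ)) * f (k - m))))
      (C * linfty (D1 f)) := by
  obtain ⟨Q, hQ, C₁, hC₁, hquot⟩ := KernelBound.exists_diagCutoff_wt_divided_difference hσ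
  obtain ⟨C₀, hC₀, hdiag⟩ := KernelBound.exists_diagCutoff (-(σ / 2))
  refine ⟨C₁ + C₀, by positivity, fun f hf => ?_⟩
  have hT := KernelBound.toeplitz hf
  have hmain := (hquot _ _ hT).sub (hdiag _ _ hT (fun k => (wt (-(σ / 2)) k : ℂ))
    (fun m => (wt (σ / 2) m : ℂ)) (fun k => (norm_wt _ _).le) fun k => by rw [norm_wt, neg_neg])
  refine (hmain.congr fun k m => ?_).mono (le_of_eq (by ring))
  have hhalf : (wt (σ / 2) m : ℂ) = wt (-(σ / 2)) m * wt σ m := by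
    rw [← Complex.ofReal_mul, wt_mul_wt]; congr 2; ring
  have hQ' : (wt σ k : ℂ) - wt σ m = (k ^ 2 - m ^ 2) * Q k m := by exact_mod_cast hQ k m
  rw [hhalf, D1]
  push_cast
  linear_combination (-(diagCutoff k m : ℂ) * (wt (-(σ / 2)) k : ℂ) * (wt (-(σ / 2)) m : ℂ)
    * (m : ℂ) * Complex.I * f (k - m)) * hQ'

/-! ### The transport term -/

lemma KernelBound.norm_tsum_le_rescaled {ι κ : Type*} {F : ι → κ → ℂ} {B : ℝ}
    (h : KernelBound F B) {x : ι → ℂ} {y : κ → ℂ} (hx : Summable fun k => ‖x k‖ ^ 2)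
    (hy : Summable fun m => ‖y m‖ ^ 2)
    (hs : Summable fun p : ι × κ => x p.1 * F p.1 p.2 * y p.2) {t : ℝ} (ht : 0 < t) :
    ‖∑' p : ι × κ, x p.1 * F p.1 p.2 * y p.2‖
      ≤ B * (t * ∑' k, ‖x k‖ ^ 2 + t⁻¹ * ∑' m, ‖y m‖ ^ 2) := by
  set r : ℝ := √t
  have hr : 0 < r := Real.sqrt_pos.2 ht
  have hr₂ : r ^ 2 = t := Real.sq_sqrt ht.le
  have hx' : ∀ k, ‖(r : ℂ) * x k‖ ^ 2 = t * ‖x k‖ ^ 2 := fun k => by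
    rw [norm_mul, mul_pow, Complex.norm_real, Real.norm_of_nonneg hr.le, hr₂]
  have hy' : ∀ m, ‖((r⁻¹ : ℝ) : ℂ) * y m‖ ^ 2 = t⁻¹ * ‖y m‖ ^ 2 := fun m => by
    rw [norm_mul, mul_pow, Complex.norm_real, Real.norm_of_nonneg (inv_nonneg.2 hr.le), inv_pow,
      hr₂]
  have hcancel : ∀ p : ι × κ, (r : ℂ) * x p.1 * F p.1 p.2 * (((r⁻¹ : ℝ) : ℂ) * y p.2)
      = x p.1 * F p.1 p.2 * y p.2 := fun p => by
    have hr₀ : (r : ℂ) ≠ 0 := by exact_mod_cast hr.ne'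
    rw [Complex.ofReal_inv]; field_simp
  have hmain := h.norm_tsum_le (x := fun k => (r : ℂ) * x k) (y := fun m => ((r⁻¹ : ℝ) : ℂ) * y m)
    (by simpa only [hx'] using hx.mul_left t) (by simpa only [hy'] using hy.mul_left t⁻¹)
    (by simpa only [hcancel] using hs)
  simpa only [hcancel, hx', hy', tsum_mul_left] using hmain

lemma RapidDecay.conj {c : FC} (hc : RapidDecay c) :
    RapidDecay fun k => (starRingEnd ℂ) (c k) :=
  hc.of_norm_le 0 1 fun k => by simp

lemma RapidDecay.summable_mul_mul_sub {x c y : FC} (hx : RapidDecay x) (hc : RapidDecay c)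
    (hy : RapidDecay y) {P : ℤ → ℤ → ℂ} {A : ℝ} (hP : ∀ k m, ‖P k m‖ ≤ A) :
    Summable fun q : ℤ × ℤ => P q.1 q.2 * (x q.1 * c (q.1 - q.2) * y q.2) := by
  obtain ⟨B, _hB, hcB⟩ := hc.exists_norm_le
  have hA : 0 ≤ A := (norm_nonneg _).trans (hP 0 0)
  refine .of_norm_bounded ((hx.summable.mul_of_nonneg hy.summable (fun _ => norm_nonneg _)
    fun _ => norm_nonneg _).mul_left (A * B)) fun q => ?_
  rw [norm_mul, norm_mul, norm_mul]
  calc ‖P q.1 q.2‖ * (‖x q.1‖ * ‖c (q.1 - q.2)‖ * ‖y q.2‖)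
      ≤ A * (‖x q.1‖ * B * ‖y q.2‖) := by gcongr; exacts [hP _ _, hcB _]
    _ = A * B * (‖x q.1‖ * ‖y q.2‖) := by ring

lemma tsum_norm_wt_half_mul_sq (σ : ℝ) {c d : FC} (h : ∀ k, ‖d k‖ = ‖c k‖) :
    ∑' k, ‖(wt (σ / 2) k : ℂ) * d k‖ ^ 2 = hsNorm σ c ^ 2 := by
  rw [hsNorm_sq]
  exact tsum_congr fun k => by rw [norm_mul, mul_pow, norm_wt, wt_half_sq, h]

/-- The summand of the double series `(f ∂ₓg, g)_{H^σ} = Σ_{k,m} wt σ k f̂(k-m) (∂ₓg)^(m) ĝ(k)*`. -/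
def transportTerm (σ : ℝ) (f g : FC) (k m : ℤ) : ℂ :=
  (wt σ k : ℂ) * (starRingEnd ℂ) (g k) * f (k - m) * D1 g m

lemma summable_mul_transportTerm (σ : ℝ) {f g : FC} (hf : RapidDecay f) (hg : RapidDecay g)
    {P : ℤ → ℤ → ℂ} {A : ℝ} (hP : ∀ k m, ‖P k m‖ ≤ A) :
    Summable fun q : ℤ × ℤ => P q.1 q.2 * transportTerm σ f g q.1 q.2 :=
  (hg.conj.wt_mul σ).summable_mul_mul_sub hf hg.D1 hP

lemma norm_diagCutoff_le (k m : ℤ) : ‖(diagCutoff k m : ℂ)‖ ≤ 3 := by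
  rw [diagCutoff, Complex.ofReal_sub, Complex.ofReal_sub, Complex.ofReal_one]
  refine (norm_sub_le _ _).trans ?_
  linarith [norm_sub_le (1 : ℂ) (lowCutoff (dyadicIndex k) m), norm_one (α := ℂ),
    norm_lowCutoff_le (dyadicIndex k) m, norm_lowCutoff_le (dyadicIndex m) k]

lemma ofReal_wt_eq_sq (σ : ℝ) (k : ℤ) : (wt σ k : ℂ) = (wt (σ / 2) k : ℂ) ^ 2 := by
  rw [← wt_half_sq, Complex.ofReal_pow]

lemma ofReal_wt_mul_wt_neg (σ : ℝ) (k : ℤ) : (wt σ k : ℂ) * (wt (-σ) k : ℂ) = 1 := by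
  exact_mod_cast wt_mul_wt_neg σ k

lemma exists_norm_tsum_lowHigh_transportTerm_le (σ : ℝ) : ∃ C : ℝ, 0 ≤ C ∧ ∀ f g : FC,
    RapidDecay f → RapidDecay g →
    ‖∑' q : ℤ × ℤ, (lowCutoff (dyadicIndex q.1) q.2 : ℂ) * transportTerm σ f g q.1 q.2‖
      ≤ C * (linfty (D1 g) * (hsNorm σ f ^ 2 + hsNorm σ g ^ 2)) := by
  obtain ⟨C, hC, hkernel⟩ := KernelBound.exists_lowHigh (σ / 2)
  refine ⟨C, hC, fun f g hf hg => ?_⟩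
  have hsum := summable_mul_transportTerm σ hf hg fun k m => norm_lowCutoff_le (dyadicIndex k) m
  let e : ℤ × ℤ ≃ ℤ × ℤ :=
    ⟨fun q => (q.1, q.1 - q.2), fun q => (q.1, q.1 - q.2), fun q => by simp, fun q => by simp⟩
  have hfactor : ∀ q : ℤ × ℤ,
      (lowCutoff (dyadicIndex (e q).1) (e q).2 : ℂ) * transportTerm σ f g (e q).1 (e q).2
        = (wt (σ / 2) q.1 * (starRingEnd ℂ) (g q.1))
          * ((lowCutoff (dyadicIndex q.1) (q.1 - q.2) : ℂ) * D1 g (q.1 - q.2)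
            * (wt (σ / 2) q.1 : ℂ) * (wt (-(σ / 2)) q.2 : ℂ))
          * (wt (σ / 2) q.2 * f q.2) := fun ⟨k, m⟩ => by
    simp only [e, Equiv.coe_fn_mk, transportTerm, sub_sub_cancel, ofReal_wt_eq_sq σ]
    linear_combination (-(lowCutoff (dyadicIndex k) (k - m) : ℂ) * (starRingEnd ℂ) (g k)
      * (wt (σ / 2) k : ℂ) ^ 2 * f m * D1 g (k - m)) * ofReal_wt_mul_wt_neg (σ / 2) m
  rw [← e.tsum_eq, tsum_congr hfactor]
  refine ((hkernel (D1 g) hg.D1.summable).norm_tsum_le (hg.conj.wt_mul _).summable_norm_sq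
    (hf.wt_mul _).summable_norm_sq ((e.summable_iff.2 hsum).congr hfactor)).trans_eq ?_
  rw [tsum_norm_wt_half_mul_sq σ fun k => RCLike.norm_conj (g k),
    tsum_norm_wt_half_mul_sq σ fun _ => rfl]
  ring

lemma lowCutoff_mul_eq_lowCutoff_mul_div (k m : ℤ) :
    (lowCutoff (dyadicIndex m) k : ℂ) * m
      = (lowCutoff (dyadicIndex m) k : ℂ) * ((m : ℂ) / ((k : ℂ) - m) * ((k : ℂ) - m)) := by
  rcases eq_or_ne (lowCutoff (dyadicIndex m) k) 0 with h | h
  · simp [h]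
  rcases eq_or_ne k m with rfl | hkm
  · have hk : k = 0 := by
      by_contra hk
      linarith [four_mul_abs_lt_of_lowCutoff_ne_zero h, two_pow_dyadicIndex_le hk,
        abs_nonneg (k : ℝ)]
    simp [hk]
  · rw [div_mul_cancel₀ _ (sub_ne_zero.2 (by exact_mod_cast hkm))]

lemma exists_norm_tsum_highLow_transportTerm_le {σ : ℝ} (hσ : 1 ≤ σ) : ∃ C : ℝ, 0 ≤ C ∧
    ∀ f g : FC, RapidDecay f → RapidDecay g →
    ‖∑' q : ℤ × ℤ, (lowCutoff (dyadicIndex q.2) q.1 : ℂ) * transportTerm σ f g q.1 q.2‖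
      ≤ C * (linfty (D1 f) * hsNorm σ g ^ 2) := by
  obtain ⟨C, hC, hkernel⟩ := KernelBound.exists_highLow hσ
  refine ⟨2 * C, by positivity, fun f g hf hg => ?_⟩
  have hsum := summable_mul_transportTerm σ hf hg fun k m => norm_lowCutoff_le (dyadicIndex m) k
  have hfactor : ∀ q : ℤ × ℤ,
      (lowCutoff (dyadicIndex q.2) q.1 : ℂ) * transportTerm σ f g q.1 q.2
        = (wt (σ / 2) q.1 * (starRingEnd ℂ) (g q.1))
          * ((lowCutoff (dyadicIndex q.2) q.1 : ℂ) * (wt (σ / 2) q.1 : ℂ)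
            * (wt (-(σ / 2)) q.2 : ℂ) * ((q.2 : ℂ) / ((q.1 : ℂ) - q.2)) * D1 f (q.1 - q.2))
          * (wt (σ / 2) q.2 * g q.2) := fun ⟨k, m⟩ => by
    simp only [transportTerm, D1, ofReal_wt_eq_sq σ]
    push_cast
    linear_combination ((starRingEnd ℂ) (g k) * (wt (σ / 2) k : ℂ) ^ 2 * f (k - m) * Complex.I
        * g m) * lowCutoff_mul_eq_lowCutoff_mul_div k m
      - ((lowCutoff (dyadicIndex m) k : ℂ) * (starRingEnd ℂ) (g k) * (wt (σ / 2) k : ℂ) ^ 2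
        * f (k - m) * Complex.I * g m * ((m : ℂ) / ((k : ℂ) - m) * ((k : ℂ) - m)))
        * ofReal_wt_mul_wt_neg (σ / 2) m
  rw [tsum_congr hfactor]
  refine ((hkernel (D1 f) hf.D1.summable (by simp [D1])).norm_tsum_le
    (hg.conj.wt_mul _).summable_norm_sq (hg.wt_mul _).summable_norm_sq
    (hsum.congr hfactor)).trans_eq ?_
  rw [tsum_norm_wt_half_mul_sq σ fun k => RCLike.norm_conj (g k),
    tsum_norm_wt_half_mul_sq σ fun _ => rfl]
  ring

/-- `f` minus its complex conjugate. It vanishes when `f` is real; for `f = J_ε u` with `u` real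
it measures how far the profile of the mollifier is from being even. -/
def realityDefect (f : FC) : FC := fun n => f n - (starRingEnd ℂ) (f (-n))

lemma RapidDecay.realityDefect {f : FC} (hf : RapidDecay f) : RapidDecay (realityDefect f) := by
  intro p
  obtain ⟨C, hC⟩ := hf p
  refine ⟨C + C, fun k => ?_⟩
  have hneg := hC (-k)
  rw [bracket_neg] at hneg
  have hb := bracket_pos k
  calc ‖f k - (starRingEnd ℂ) (f (-k))‖ * bracket k ^ p
      ≤ (‖f k‖ + ‖f (-k)‖) * bracket k ^ p := by
        gcongr; exact (norm_sub_le _ _).trans_eq (by rw [RCLike.norm_conj])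
    _ ≤ C + C := by rw [add_mul]; exact add_le_add (hC k) hneg

/-- The factor of the symmetrized near-diagonal sum that is a commutator. -/
def commutatorTerm (σ : ℝ) (f g : FC) (k m : ℤ) : ℂ :=
  (wt (σ / 2) k * (starRingEnd ℂ) (g k))
    * ((diagCutoff k m : ℂ) * ((wt (-(σ / 2)) k : ℂ) * (wt (-(σ / 2)) m : ℂ)
      * (Complex.I * ((wt σ k : ℂ) * m - k * (wt σ m : ℂ)) * f (k - m))))
    * (wt (σ / 2) m * g m)

/-- The part of the symmetrized near-diagonal sum that comes from the reality defect of `f`. -/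
def defectTerm (σ : ℝ) (f g : FC) (k m : ℤ) : ℂ :=
  (wt (σ / 2) k * (starRingEnd ℂ) (D1 g k))
    * ((diagCutoff k m : ℂ) * ((wt (-(σ / 2)) k : ℂ) * (wt (σ / 2) m : ℂ)
      * realityDefect f (k - m)))
    * (wt (σ / 2) m * g m)

lemma diagCutoff_mul_transportTerm_add_conj (σ : ℝ) (f g : FC) (k m : ℤ) :
    (diagCutoff k m : ℂ) * transportTerm σ f g k m
        + (starRingEnd ℂ) ((diagCutoff m k : ℂ) * transportTerm σ f g m k)
      = commutatorTerm σ f g k m - defectTerm σ f g k m := by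
  have hk := ofReal_wt_mul_wt_neg (σ / 2) k
  have hm := ofReal_wt_mul_wt_neg (σ / 2) m
  have hcomm : commutatorTerm σ f g k m = (diagCutoff k m : ℂ) * (starRingEnd ℂ) (g k) * g m
      * (Complex.I * ((wt σ k : ℂ) * m - k * (wt σ m : ℂ)) * f (k - m)) := by
    calc _ = (diagCutoff k m : ℂ) * (starRingEnd ℂ) (g k) * g m
          * (Complex.I * ((wt σ k : ℂ) * m - k * (wt σ m : ℂ)) * f (k - m))
          * ((wt (σ / 2) k : ℂ) * (wt (-(σ / 2)) k : ℂ))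
          * ((wt (σ / 2) m : ℂ) * (wt (-(σ / 2)) m : ℂ)) := by unfold commutatorTerm; ring
      _ = _ := by rw [hk, hm, mul_one, mul_one]
  have hdefect : defectTerm σ f g k m = -((diagCutoff k m : ℂ) * (starRingEnd ℂ) (g k) * g m
      * (Complex.I * k * (wt σ m : ℂ) * realityDefect f (k - m))) := by
    simp only [defectTerm, D1, map_mul, Complex.conj_I, map_intCast, ofReal_wt_eq_sq σ m]
    linear_combination (-((diagCutoff k m : ℂ) * (starRingEnd ℂ) (g k) * g m
      * (Complex.I * k * (wt (σ / 2) m : ℂ) ^ 2 * realityDefect f (k - m)))) * hk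
  rw [hcomm, hdefect, diagCutoff_comm m k]
  simp only [transportTerm, D1, realityDefect, map_mul, Complex.conj_conj, Complex.conj_I,
    Complex.conj_ofReal, map_intCast, neg_sub]
  ring

lemma summable_defectTerm (σ : ℝ) {f g : FC} (hf : RapidDecay f) (hg : RapidDecay g) :
    Summable fun q : ℤ × ℤ => defectTerm σ f g q.1 q.2 := by
  refine (hg.D1.conj.summable_mul_mul_sub hf.realityDefect (hg.wt_mul σ)
    norm_diagCutoff_le).congr fun ⟨k, m⟩ => ?_
  simp only [defectTerm, ofReal_wt_eq_sq σ m]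
  linear_combination (-((diagCutoff k m : ℂ) * (starRingEnd ℂ) (D1 g k) * realityDefect f (k - m)
    * (wt (σ / 2) m : ℂ) ^ 2 * g m)) * ofReal_wt_mul_wt_neg (σ / 2) k

lemma summable_commutatorTerm_and_two_mul_re_eq (σ : ℝ) {f g : FC} (hf : RapidDecay f)
    (hg : RapidDecay g) :
    Summable (fun q : ℤ × ℤ => commutatorTerm σ f g q.1 q.2) ∧
      ((2 * (∑' q : ℤ × ℤ, (diagCutoff q.1 q.2 : ℂ) * transportTerm σ f g q.1 q.2).re : ℝ) : ℂ)
        = ∑' q : ℤ × ℤ, commutatorTerm σ f g q.1 q.2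
          - ∑' q : ℤ × ℤ, defectTerm σ f g q.1 q.2 := by
  have hsum := summable_mul_transportTerm σ hf hg norm_diagCutoff_le
  have hswap : Summable fun q : ℤ × ℤ =>
      (starRingEnd ℂ) ((diagCutoff q.2 q.1 : ℂ) * transportTerm σ f g q.2 q.1) :=
    (Equiv.prodComm ℤ ℤ).summable_iff.2 hsum.star
  have hconj : (starRingEnd ℂ)
        (∑' q : ℤ × ℤ, (diagCutoff q.1 q.2 : ℂ) * transportTerm σ f g q.1 q.2)
      = ∑' q : ℤ × ℤ,
        (starRingEnd ℂ) ((diagCutoff q.2 q.1 : ℂ) * transportTerm σ f g q.2 q.1) := by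
    rw [Complex.conj_tsum, ← (Equiv.prodComm ℤ ℤ).tsum_eq]
    rfl
  have hdefect := summable_defectTerm σ hf hg
  have hidentity := fun q : ℤ × ℤ => diagCutoff_mul_transportTerm_add_conj σ f g q.1 q.2
  have hcomm : Summable fun q : ℤ × ℤ => commutatorTerm σ f g q.1 q.2 :=
    ((hsum.add hswap).add hdefect).congr fun q => (eq_sub_iff_add_eq.1 (hidentity q)).symm ▸ rfl
  refine ⟨hcomm, ?_⟩
  rw [← Complex.add_conj, hconj, ← hcomm.tsum_sub hdefect, ← hsum.tsum_add hswap]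
  exact tsum_congr hidentity

lemma exists_abs_re_tsum_nearDiagonal_transportTerm_le {σ : ℝ} (hσ : 0 < σ) : ∃ C : ℝ, 0 ≤ C ∧
    ∀ f g : FC, RapidDecay f → RapidDecay g → ∀ t : ℝ, 0 < t →
    |(∑' q : ℤ × ℤ, (diagCutoff q.1 q.2 : ℂ) * transportTerm σ f g q.1 q.2).re|
      ≤ C * (linfty (D1 f) * hsNorm σ g ^ 2
        + linfty (realityDefect f) * (t * hsNorm σ (D1 g) ^ 2 + t⁻¹ * hsNorm σ g ^ 2)) := by
  obtain ⟨C₁, hC₁, hcommutator⟩ := KernelBound.exists_nearDiagonal hσ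
  obtain ⟨C₂, hC₂, hdiag⟩ := KernelBound.exists_diagCutoff (-(σ / 2))
  refine ⟨C₁ + C₂, by positivity, fun f g hf hg t ht => ?_⟩
  obtain ⟨hcomm, hre⟩ := summable_commutatorTerm_and_two_mul_re_eq σ hf hg
  have hgσ := tsum_norm_wt_half_mul_sq σ fun k => rfl (a := ‖g k‖)
  have hcomm_le : ‖∑' q : ℤ × ℤ, commutatorTerm σ f g q.1 q.2‖
      ≤ C₁ * linfty (D1 f) * (hsNorm σ g ^ 2 + hsNorm σ g ^ 2) := by
    refine ((hcommutator f hf.D1.summable).norm_tsum_le (hg.conj.wt_mul _).summable_norm_sq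
      (hg.wt_mul _).summable_norm_sq hcomm).trans_eq ?_
    rw [tsum_norm_wt_half_mul_sq σ fun k => RCLike.norm_conj (g k), hgσ]
  have hdefect_le : ‖∑' q : ℤ × ℤ, defectTerm σ f g q.1 q.2‖ ≤ C₂ * linfty (realityDefect f)
      * (t * hsNorm σ (D1 g) ^ 2 + t⁻¹ * hsNorm σ g ^ 2) := by
    have hkernel := hdiag _ _ (KernelBound.toeplitz hf.realityDefect.summable)
      (fun k => (wt (-(σ / 2)) k : ℂ)) (fun k => (wt (σ / 2) k : ℂ)) (fun k => (norm_wt _ _).le)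
      fun k => by rw [norm_wt, neg_neg]
    refine (hkernel.norm_tsum_le_rescaled (hg.D1.conj.wt_mul _).summable_norm_sq
      (hg.wt_mul _).summable_norm_sq (summable_defectTerm σ hf hg) ht).trans_eq ?_
    rw [tsum_norm_wt_half_mul_sq σ fun k => RCLike.norm_conj (D1 g k), hgσ]
  have htwo : 2 * |(∑' q : ℤ × ℤ, (diagCutoff q.1 q.2 : ℂ) * transportTerm σ f g q.1 q.2).re|
      ≤ C₁ * linfty (D1 f) * (hsNorm σ g ^ 2 + hsNorm σ g ^ 2) + C₂ * linfty (realityDefect f)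
        * (t * hsNorm σ (D1 g) ^ 2 + t⁻¹ * hsNorm σ g ^ 2) := by
    have hnorm := congrArg norm hre
    rw [Complex.norm_real, Real.norm_eq_abs, abs_mul, abs_two] at hnorm
    rw [hnorm]
    exact (norm_sub_le _ _).trans (add_le_add hcomm_le hdefect_le)
  have hD := mul_nonneg (linfty_nonneg (D1 f)) (sq_nonneg (hsNorm σ g))
  have hR : 0 ≤ linfty (realityDefect f) * (t * hsNorm σ (D1 g) ^ 2 + t⁻¹ * hsNorm σ g ^ 2) :=
    mul_nonneg (linfty_nonneg _) (by positivity)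
  nlinarith [mul_nonneg hC₂ hD, mul_nonneg hC₁ hR, mul_nonneg hC₂ hR]

lemma exists_abs_re_tsum_transportTerm_le {σ : ℝ} (hσ : 1 ≤ σ) : ∃ C : ℝ, 0 ≤ C ∧
    ∀ f g : FC, RapidDecay f → RapidDecay g → ∀ t : ℝ, 0 < t →
    |(∑' q : ℤ × ℤ, transportTerm σ f g q.1 q.2).re|
      ≤ C * (linfty (D1 f) * hsNorm σ g ^ 2 + linfty (D1 g) * (hsNorm σ f ^ 2 + hsNorm σ g ^ 2)
        + linfty (realityDefect f) * (t * hsNorm σ (D1 g) ^ 2 + t⁻¹ * hsNorm σ g ^ 2)) := by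
  obtain ⟨C₁, hC₁, hnear⟩ := exists_abs_re_tsum_nearDiagonal_transportTerm_le (σ := σ) (by linarith)
  obtain ⟨C₂, hC₂, hlowHigh⟩ := exists_norm_tsum_lowHigh_transportTerm_le σ
  obtain ⟨C₃, hC₃, hhighLow⟩ := exists_norm_tsum_highLow_transportTerm_le hσ
  refine ⟨C₁ + C₂ + C₃, by positivity, fun f g hf hg t ht => ?_⟩
  have hsum₁ := summable_mul_transportTerm σ hf hg norm_diagCutoff_le
  have hsum₂ := summable_mul_transportTerm σ hf hg fun k m => norm_lowCutoff_le (dyadicIndex k) m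
  have hsum₃ := summable_mul_transportTerm σ hf hg fun k m => norm_lowCutoff_le (dyadicIndex m) k
  have hsplit : ∑' q : ℤ × ℤ, transportTerm σ f g q.1 q.2
      = ∑' q : ℤ × ℤ, (diagCutoff q.1 q.2 : ℂ) * transportTerm σ f g q.1 q.2
      + ∑' q : ℤ × ℤ, (lowCutoff (dyadicIndex q.1) q.2 : ℂ) * transportTerm σ f g q.1 q.2
      + ∑' q : ℤ × ℤ, (lowCutoff (dyadicIndex q.2) q.1 : ℂ) * transportTerm σ f g q.1 q.2 := by
    rw [← hsum₁.tsum_add hsum₂, ← (hsum₁.add hsum₂).tsum_add hsum₃]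
    refine tsum_congr fun q => ?_
    rw [diagCutoff]; push_cast; ring
  set a := linfty (D1 f) * hsNorm σ g ^ 2
  set b := linfty (D1 g) * (hsNorm σ f ^ 2 + hsNorm σ g ^ 2)
  set c := linfty (realityDefect f) * (t * hsNorm σ (D1 g) ^ 2 + t⁻¹ * hsNorm σ g ^ 2)
  have ha : 0 ≤ a := mul_nonneg (linfty_nonneg _) (sq_nonneg _)
  have hb : 0 ≤ b := mul_nonneg (linfty_nonneg _) (by positivity)
  have hc : 0 ≤ c := mul_nonneg (linfty_nonneg _) (by positivity)
  rw [hsplit, Complex.add_re, Complex.add_re]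
  calc _ ≤ C₁ * (a + c) + C₂ * b + C₃ * a :=
        (abs_add_three _ _ _).trans (add_le_add_three (hnear f g hf hg t ht)
          ((Complex.abs_re_le_norm _).trans (hlowHigh f g hf hg))
          ((Complex.abs_re_le_norm _).trans (hhighLow f g hf hg)))
    _ ≤ C₁ * (a + b + c) + C₂ * (a + b + c) + C₃ * (a + b + c) := by gcongr <;> linarith
    _ = (C₁ + C₂ + C₃) * (a + b + c) := by ring

/-! ### The Lie derivative -/

/-- The weighted norm `Σ_k (1 + |k|)^p |ξ̂(k)|` in which the size of a noise coefficient is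
measured. -/
def ell1Norm (p : ℕ) (ξ : FC) : ℝ := ∑' k, ‖ξ k‖ * bracket k ^ p

lemma norm_mul_bracket_pow_nonneg (c : FC) (p : ℕ) (k : ℤ) : 0 ≤ ‖c k‖ * bracket k ^ p :=
  mul_nonneg (norm_nonneg _) (pow_pos (bracket_pos k) p).le

lemma ell1Norm_nonneg (p : ℕ) (ξ : FC) : 0 ≤ ell1Norm p ξ :=
  tsum_nonneg (norm_mul_bracket_pow_nonneg ξ p)

lemma exists_ell1Norm_le_hsNorm (p : ℕ) : ∃ C : ℝ, ∀ ξ : FC, (∀ s : ℝ, 0 ≤ s → memHs s ξ) →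
    ell1Norm p ξ ≤ C * hsNorm (2 * (p + 2 : ℕ)) ξ := by
  refine ⟨2 ^ (p + 2) * ∑' k, wt (-1) k, fun ξ hξ => ?_⟩
  rw [mul_right_comm, ← tsum_mul_left]
  refine ((rapidDecay_of_memHs hξ).summable_mul_bracket_pow p).tsum_le_tsum (fun k => ?_)
    ((summable_wt (by norm_num)).mul_left _)
  exact mul_bracket_pow_le_mul_wt_neg_one (norm_nonneg _)
    ((hξ (2 * (p + 2 : ℕ)) (by positivity)).norm_mul_bracket_pow_le k)

lemma exists_hsNorm_sq_le_of_norm_mul_bracket_pow_le (σ : ℝ) : ∃ p : ℕ, ∃ C : ℝ,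
    ∀ (c : FC) (W : ℝ), (∀ k, ‖c k‖ * bracket k ^ p ≤ W) → hsNorm σ c ^ 2 ≤ C * W ^ 2 := by
  obtain ⟨q, hq⟩ := exists_wt_le_bracket_pow σ
  refine ⟨q + 2, ∑' k, wt (-1) k, fun c W hc => ?_⟩
  have hle : ∀ k, wt σ k * ‖c k‖ ^ 2 ≤ W ^ 2 * wt (-1) k := fun k => by
    have hb := one_le_bracket k
    have hW : ‖c k‖ ≤ W :=
      (le_mul_of_one_le_right (norm_nonneg _) (one_le_pow₀ hb)).trans (hc k)
    calc wt σ k * ‖c k‖ ^ 2 ≤ bracket k ^ q * ‖c k‖ ^ 2 := by gcongr; exact hq k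
      _ = ‖c k‖ * (‖c k‖ * bracket k ^ q) := by ring
      _ ≤ W * (W * wt (-1) k) := mul_le_mul hW
          (mul_bracket_pow_le_mul_wt_neg_one (norm_nonneg _) (hc k))
          (norm_mul_bracket_pow_nonneg c q k) ((norm_nonneg _).trans hW)
      _ = W ^ 2 * wt (-1) k := by ring
  have hdom : Summable fun k => W ^ 2 * wt (-1) k := (summable_wt (by norm_num)).mul_left _
  rw [hsNorm_sq, mul_comm, ← tsum_mul_left]
  exact (Summable.of_nonneg_of_le (wt_mul_norm_sq_nonneg σ c) hle hdom).tsum_le_tsum hle hdom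

section Lie

variable {ξ w : FC}

lemma summable_convolution (hξ : RapidDecay ξ) (hw : RapidDecay w) (k : ℤ) :
    Summable fun j => ξ j * w (k - j) := by
  obtain ⟨W, _hW, hw⟩ := hw.exists_norm_le
  refine .of_norm_bounded (hξ.summable.mul_right W) fun j => ?_
  rw [norm_mul]; gcongr; exact hw _

lemma lie_apply (hξ : RapidDecay ξ) (hw : RapidDecay w) (k : ℤ) :
    lie ξ w k = Complex.I * k * ∑' j, ξ j * w (k - j) := by
  unfold lie FC.mul
  rw [Pi.add_apply, ← tsum_mul_left,
    ← (summable_convolution hξ hw.D1 k).tsum_add (summable_convolution hξ.D1 hw k)]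
  refine tsum_congr fun j => ?_
  simp only [D1]; push_cast; ring

lemma lie_apply_sub (hξ : RapidDecay ξ) (hw : RapidDecay w) (k : ℤ) :
    lie ξ w k = Complex.I * k * ∑' l, ξ (k - l) * w l := by
  rw [lie_apply hξ hw, ← (Equiv.subLeft k).tsum_eq]
  simp only [Equiv.subLeft_apply, sub_sub_cancel]

lemma norm_lie_mul_bracket_pow_le (hξ : RapidDecay ξ) (hw : RapidDecay w) {p : ℕ} {W : ℝ}
    (h : ∀ k, ‖w k‖ * bracket k ^ (p + 1) ≤ W) (k : ℤ) :
    ‖lie ξ w k‖ * bracket k ^ p ≤ ell1Norm (p + 1) ξ * W := by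
  have hb := bracket_pos
  have hterm : ∀ j, ‖ξ j * w (k - j)‖ * bracket k ^ (p + 1)
      ≤ ‖ξ j‖ * bracket j ^ (p + 1) * W := fun j => by
    have hk : bracket k ≤ bracket j * bracket (k - j) := by
      simpa only [add_sub_cancel] using bracket_add_le_mul j (k - j)
    have := hb k; have := hb j
    calc ‖ξ j * w (k - j)‖ * bracket k ^ (p + 1)
        ≤ ‖ξ j‖ * ‖w (k - j)‖ * (bracket j * bracket (k - j)) ^ (p + 1) := by
          rw [norm_mul]; gcongr
      _ = ‖ξ j‖ * bracket j ^ (p + 1) * (‖w (k - j)‖ * bracket (k - j) ^ (p + 1)) := by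
          rw [mul_pow]; ring
      _ ≤ ‖ξ j‖ * bracket j ^ (p + 1) * W := by gcongr; exact h _
  have hnorm := (summable_convolution hξ hw k).norm
  have := hb k
  calc ‖lie ξ w k‖ * bracket k ^ p
      ≤ (∑' j, ‖ξ j * w (k - j)‖) * bracket k ^ (p + 1) := by
        rw [lie_apply hξ hw, norm_mul, norm_mul, Complex.norm_I, one_mul, Complex.norm_intCast,
          pow_succ', mul_comm |(k : ℝ)|, mul_assoc]
        gcongr
        exacts [norm_tsum_le_tsum_norm hnorm, abs_le_bracket k]
    _ ≤ ell1Norm (p + 1) ξ * W := by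
        rw [ell1Norm, ← tsum_mul_right, ← tsum_mul_right]
        exact (hnorm.mul_right _).tsum_le_tsum hterm
          ((hξ.summable_mul_bracket_pow (p + 1)).mul_right W)

lemma rapidDecay_lie (hξ : RapidDecay ξ) (hw : RapidDecay w) : RapidDecay (lie ξ w) := fun p => by
  obtain ⟨W, hW⟩ := hw (p + 1)
  exact ⟨_, norm_lie_mul_bracket_pow_le hξ hw hW⟩

end Lie

/-! ### The noise form -/

lemma hasSum_mul_mul_sub_mul_sub {a ζ : ℤ → ℝ} (ha : Summable a) (hζ : Summable ζ)
    (ha0 : ∀ k, 0 ≤ a k) (hζ0 : ∀ k, 0 ≤ ζ k) :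
    HasSum (fun q : ℤ × ℤ × ℤ => a q.1 * (ζ (q.1 - q.2.1) * ζ (q.2.1 - q.2.2)))
      ((∑' k, a k) * ((∑' k, ζ k) * ∑' k, ζ k)) ∧
    HasSum (fun q : ℤ × ℤ × ℤ => a q.2.2 * (ζ (q.1 - q.2.1) * ζ (q.2.1 - q.2.2)))
      ((∑' k, a k) * ((∑' k, ζ k) * ∑' k, ζ k)) := by
  have hζζ := hζ.mul_of_nonneg hζ hζ0 hζ0
  have hprod := ha.hasSum.mul (hζ.hasSum.mul hζ.hasSum hζζ)
    (ha.mul_of_nonneg hζζ ha0 fun q => mul_nonneg (hζ0 _) (hζ0 _))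
  let fromFirst : ℤ × ℤ × ℤ ≃ ℤ × ℤ × ℤ :=
    ⟨fun q => (q.1, q.1 - q.2.1, q.2.1 - q.2.2), fun q => (q.1, q.1 - q.2.1, q.1 - q.2.1 - q.2.2),
      fun q => by simp, fun q => by simp⟩
  let fromLast : ℤ × ℤ × ℤ ≃ ℤ × ℤ × ℤ :=
    ⟨fun q => (q.2.2, q.1 - q.2.1, q.2.1 - q.2.2),
      fun q => (q.2.1 + (q.2.2 + q.1), q.2.2 + q.1, q.1), fun q => by simp, fun q => by simp⟩
  exact ⟨fromFirst.hasSum_iff.2 hprod, fromLast.hasSum_iff.2 hprod⟩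

/-- The summand of the `noiseForm`. -/
def noiseTerm (ξ w : FC) (k l m : ℤ) : ℂ :=
  (starRingEnd ℂ) (w k) * ξ (k - l) * ξ (l - m) * w m

/-- The form `Σ_{k,l,m} ŵ(k)* ξ̂(k-l) ξ̂(l-m) ŵ(m) G(k,l,m)` with symbol `G`. Both Itô terms, the
second order drift and the quadratic variation, are of this form. -/
def noiseForm (ξ w : FC) (G : ℤ → ℤ → ℤ → ℝ) : ℂ :=
  ∑' q : ℤ × ℤ × ℤ, noiseTerm ξ w q.1 q.2.1 q.2.2 * G q.1 q.2.1 q.2.2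

lemma summable_and_norm_noiseForm_le {ξ w : FC} {σ : ℝ} (hξ : RapidDecay ξ) (hw : memHs σ w)
    {G : ℤ → ℤ → ℤ → ℝ} {p : ℕ} {A : ℝ} (hA : 0 ≤ A) (hG : ∀ k l m, |G k l m|
      ≤ A * (wt (σ / 2) k * wt (σ / 2) m * (bracket (k - l) ^ p * bracket (l - m) ^ p))) :
    Summable (fun q : ℤ × ℤ × ℤ => noiseTerm ξ w q.1 q.2.1 q.2.2 * G q.1 q.2.1 q.2.2) ∧
      ‖noiseForm ξ w G‖ ≤ A * (ell1Norm p ξ ^ 2 * hsNorm σ w ^ 2) := by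
  set ζ : ℤ → ℝ := fun k => ‖ξ k‖ * bracket k ^ p with hζ
  have hζ0 : ∀ k, 0 ≤ ζ k := norm_mul_bracket_pow_nonneg ξ p
  obtain ⟨hfirst, hlast⟩ := hasSum_mul_mul_sub_mul_sub hw (hξ.summable_mul_bracket_pow p)
    (wt_mul_norm_sq_nonneg σ w) hζ0
  have hdom := (hfirst.add hlast).mul_left (A / 2)
  have hle : ∀ q : ℤ × ℤ × ℤ, ‖noiseTerm ξ w q.1 q.2.1 q.2.2 * G q.1 q.2.1 q.2.2‖
      ≤ A / 2 * (wt σ q.1 * ‖w q.1‖ ^ 2 * (ζ (q.1 - q.2.1) * ζ (q.2.1 - q.2.2))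
        + wt σ q.2.2 * ‖w q.2.2‖ ^ 2 * (ζ (q.1 - q.2.1) * ζ (q.2.1 - q.2.2))) := by
    rintro ⟨k, l, m⟩
    have hζζ : 0 ≤ A / 2 * (ζ (k - l) * ζ (l - m)) :=
      mul_nonneg (by positivity) (mul_nonneg (hζ0 _) (hζ0 _))
    calc ‖noiseTerm ξ w k l m * G k l m‖
        = ‖w k‖ * ‖ξ (k - l)‖ * ‖ξ (l - m)‖ * ‖w m‖ * |G k l m| := by
          simp only [noiseTerm, norm_mul, RCLike.norm_conj, Complex.norm_real, Real.norm_eq_abs]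
      _ ≤ ‖w k‖ * ‖ξ (k - l)‖ * ‖ξ (l - m)‖ * ‖w m‖
          * (A * (wt (σ / 2) k * wt (σ / 2) m * (bracket (k - l) ^ p * bracket (l - m) ^ p))) := by
          gcongr; exact hG k l m
      _ = A / 2 * (ζ (k - l) * ζ (l - m))
          * (2 * (wt (σ / 2) k * ‖w k‖) * (wt (σ / 2) m * ‖w m‖)) := by rw [hζ]; ring
      _ ≤ A / 2 * (ζ (k - l) * ζ (l - m))
          * ((wt (σ / 2) k * ‖w k‖) ^ 2 + (wt (σ / 2) m * ‖w m‖) ^ 2) :=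
          mul_le_mul_of_nonneg_left (two_mul_le_add_sq _ _) hζζ
      _ = _ := by rw [mul_pow, mul_pow, wt_half_sq, wt_half_sq]; ring
  refine ⟨.of_norm_bounded hdom.summable hle, (tsum_of_norm_bounded hdom hle).trans_eq ?_⟩
  rw [hsNorm_sq, ell1Norm]; ring

/-- Symbols of polynomial growth. Their noise forms converge absolutely, which legitimizes the
symmetrizations below. -/
def PolyBounded (G : ℤ → ℤ → ℤ → ℝ) : Prop :=
  ∃ A : ℝ, 0 ≤ A ∧ ∃ p : ℕ, ∀ k l m, |G k l m| ≤ A * (bracket k * bracket l * bracket m) ^ p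

namespace PolyBounded

variable {G H : ℤ → ℤ → ℤ → ℝ} {ξ w : FC}

lemma one_le_bracket_mul (k l m : ℤ) : 1 ≤ bracket k * bracket l * bracket m :=
  one_le_mul_of_one_le_of_one_le
    (one_le_mul_of_one_le_of_one_le (one_le_bracket k) (one_le_bracket l)) (one_le_bracket m)

lemma neg (hG : PolyBounded G) : PolyBounded fun k l m => -G k l m := by
  simpa only [PolyBounded, abs_neg] using hG

lemma add (hG : PolyBounded G) (hH : PolyBounded H) :
    PolyBounded fun k l m => G k l m + H k l m := by
  obtain ⟨A, hA, p, hp⟩ := hG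
  obtain ⟨B, hB, r, hr⟩ := hH
  refine ⟨A + B, by positivity, p + r, fun k l m => ?_⟩
  have h := one_le_bracket_mul k l m
  rw [add_mul]
  exact (abs_add_le _ _).trans (add_le_add
    ((hp k l m).trans (mul_le_mul_of_nonneg_left (pow_le_pow_right₀ h (by omega)) hA))
    ((hr k l m).trans (mul_le_mul_of_nonneg_left (pow_le_pow_right₀ h (by omega)) hB)))

lemma mul (hG : PolyBounded G) (hH : PolyBounded H) :
    PolyBounded fun k l m => G k l m * H k l m := by
  obtain ⟨A, hA, p, hp⟩ := hG
  obtain ⟨B, hB, r, hr⟩ := hH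
  refine ⟨A * B, by positivity, p + r, fun k l m => ?_⟩
  have h := one_pos.trans_le (one_le_bracket_mul k l m)
  rw [abs_mul, pow_add, mul_mul_mul_comm]
  exact mul_le_mul (hp k l m) (hr k l m) (abs_nonneg _) (by positivity)

lemma reverse (hG : PolyBounded G) : PolyBounded fun k l m => G m l k := by
  obtain ⟨A, hA, p, hp⟩ := hG
  exact ⟨A, hA, p, fun k l m => (hp m l k).trans_eq (by ring)⟩

lemma reflect (hG : PolyBounded G) : PolyBounded fun k l m => G k (k + m - l) m := by
  obtain ⟨A, hA, p, hp⟩ := hG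
  refine ⟨A, hA, 2 * p, fun k l m => (hp _ _ _).trans ?_⟩
  have := bracket_pos k; have := bracket_pos m; have := bracket_pos (k + m - l)
  have hl := one_le_bracket l
  have hreflect : bracket (k + m - l) ≤ bracket k * bracket m * bracket l :=
    (bracket_sub_le_mul _ _).trans (by gcongr; exact bracket_add_le_mul k m)
  rw [pow_mul]
  gcongr
  calc bracket k * bracket (k + m - l) * bracket m
      ≤ bracket k * (bracket k * bracket m * bracket l) * bracket m := by gcongr
    _ ≤ bracket k * (bracket k * bracket m * bracket l) * bracket m * bracket l :=
        le_mul_of_one_le_right (by positivity) hl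
    _ = (bracket k * bracket l * bracket m) ^ 2 := by ring

lemma middle {Q : ℤ → ℝ} {A : ℝ} {p : ℕ} (hQ : ∀ l, |Q l| ≤ A * bracket l ^ p) :
    PolyBounded fun _ l _ => Q l := by
  have hA : 0 ≤ A := by simpa [bracket] using (abs_nonneg _).trans (hQ 0)
  refine ⟨A, hA, p, fun k l m => (hQ l).trans ?_⟩
  have := bracket_pos l
  gcongr
  rw [mul_right_comm]
  exact le_mul_of_one_le_left this.le
    (one_le_mul_of_one_le_of_one_le (one_le_bracket k) (one_le_bracket m))

lemma first {Q : ℤ → ℝ} {A : ℝ} {p : ℕ} (hQ : ∀ k, |Q k| ≤ A * bracket k ^ p) :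
    PolyBounded fun k _ _ => Q k := by
  have hA : 0 ≤ A := by simpa [bracket] using (abs_nonneg _).trans (hQ 0)
  refine ⟨A, hA, p, fun k l m => (hQ k).trans ?_⟩
  have := bracket_pos k
  gcongr
  rw [mul_assoc]
  exact le_mul_of_one_le_right this.le
    (one_le_mul_of_one_le_of_one_le (one_le_bracket l) (one_le_bracket m))

lemma summable_noiseTerm_mul (hG : PolyBounded G) (hξ : RapidDecay ξ) (hw : RapidDecay w) :
    Summable fun q : ℤ × ℤ × ℤ => noiseTerm ξ w q.1 q.2.1 q.2.2 * G q.1 q.2.1 q.2.2 := by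
  obtain ⟨A, hA, p, hp⟩ := hG
  refine (summable_and_norm_noiseForm_le (A := A * (2 ^ (2 * p) * 2 ^ (2 * p))) (p := p) hξ
    (hw.memHs (2 * (2 * p : ℕ))) (by positivity) fun k l m => (hp k l m).trans ?_).1
  rw [mul_div_cancel_left₀ _ two_ne_zero, mul_assoc A]
  refine mul_le_mul_of_nonneg_left ?_ hA
  have hl : bracket l ≤ bracket (l - m) * bracket m := by
    simpa only [sub_add_cancel] using bracket_add_le_mul (l - m) m
  have hk := one_le_bracket k; have hkl := one_le_bracket (k - l)
  have := bracket_pos l; have := bracket_pos m; have := bracket_pos (l - m)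
  calc (bracket k * bracket l * bracket m) ^ p
      ≤ (bracket k * bracket k * (bracket (l - m) * bracket m) * bracket m
          * bracket (k - l)) ^ p := by
        refine pow_le_pow_left₀ (by positivity) ?_ p
        calc _ ≤ bracket k * (bracket (l - m) * bracket m) * bracket m := by gcongr
          _ ≤ bracket k * (bracket k * (bracket (l - m) * bracket m) * bracket m) := by
            rw [mul_assoc]; exact le_mul_of_one_le_left (by positivity) hk
          _ ≤ bracket k * (bracket k * (bracket (l - m) * bracket m) * bracket m)
              * bracket (k - l) := le_mul_of_one_le_right (by positivity) hkl
          _ = _ := by ring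
    _ = bracket k ^ (2 * p) * bracket m ^ (2 * p)
        * (bracket (k - l) ^ p * bracket (l - m) ^ p) := by ring
    _ ≤ 2 ^ (2 * p) * wt (2 * p : ℕ) k * (2 ^ (2 * p) * wt (2 * p : ℕ) m)
        * (bracket (k - l) ^ p * bracket (l - m) ^ p) := by
        have := wt_pos (2 * p : ℕ) k
        gcongr <;> exact bracket_pow_le_wt _ _
    _ = _ := by ring

lemma noiseForm_add (hG : PolyBounded G) (hH : PolyBounded H) (hξ : RapidDecay ξ)
    (hw : RapidDecay w) :
    noiseForm ξ w (fun k l m => G k l m + H k l m) = noiseForm ξ w G + noiseForm ξ w H := by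
  rw [noiseForm, noiseForm, noiseForm,
    ← (hG.summable_noiseTerm_mul hξ hw).tsum_add (hH.summable_noiseTerm_mul hξ hw)]
  refine tsum_congr fun q => ?_
  push_cast; ring

end PolyBounded

lemma isReal.conj_sub {ξ : FC} (hξ : isReal ξ) (k m : ℤ) :
    (starRingEnd ℂ) (ξ (k - m)) = ξ (m - k) := by
  rw [← hξ, neg_sub]

lemma re_noiseForm_reverse {ξ : FC} (hreal : isReal ξ) (w : FC) (G : ℤ → ℤ → ℤ → ℝ) :
    (noiseForm ξ w fun k l m => G m l k).re = (noiseForm ξ w G).re := by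
  let reverse : ℤ × ℤ × ℤ ≃ ℤ × ℤ × ℤ :=
    ⟨fun q => (q.2.2, q.2.1, q.1), fun q => (q.2.2, q.2.1, q.1), fun _ => rfl, fun _ => rfl⟩
  rw [← Complex.conj_re (noiseForm ξ w G), noiseForm, noiseForm, Complex.conj_tsum,
    ← reverse.tsum_eq]
  congr 1
  refine tsum_congr fun q => ?_
  simp only [reverse, Equiv.coe_fn_mk, noiseTerm, map_mul, Complex.conj_conj, Complex.conj_ofReal,
    hreal.conj_sub]
  ring

lemma noiseForm_reflect (ξ w : FC) (G : ℤ → ℤ → ℤ → ℝ) :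
    (noiseForm ξ w fun k l m => G k (k + m - l) m) = noiseForm ξ w G := by
  let reflect : ℤ × ℤ × ℤ ≃ ℤ × ℤ × ℤ :=
    ⟨fun q => (q.1, q.1 + q.2.2 - q.2.1, q.2.2), fun q => (q.1, q.1 + q.2.2 - q.2.1, q.2.2),
      fun q => by simp, fun q => by simp⟩
  rw [noiseForm, noiseForm, ← reflect.tsum_eq]
  refine tsum_congr fun ⟨k, l, m⟩ => ?_
  have hfirst : k - (k + m - l) = l - m := by ring
  have hlast : k + m - l - m = k - l := by ring
  simp only [reflect, Equiv.coe_fn_mk, noiseTerm, hfirst, hlast, sub_sub_cancel]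
  ring

/-- The sum of a symbol over the orbit of `(k, l, m)` under the two involutions
`(k, l, m) ↦ (m, l, k)` and `(k, l, m) ↦ (k, k + m - l, m)`, which preserve the real part of the
noise form. -/
def symmetrize (G : ℤ → ℤ → ℤ → ℝ) (k l m : ℤ) : ℝ :=
  G k l m + G m l k + (G k (k + m - l) m + G m (k + m - l) k)

lemma PolyBounded.four_mul_re_noiseForm {G : ℤ → ℤ → ℤ → ℝ} (hG : PolyBounded G) {ξ w : FC}
    (hξ : RapidDecay ξ) (hreal : isReal ξ) (hw : RapidDecay w) :
    4 * (noiseForm ξ w G).re = (noiseForm ξ w (symmetrize G)).re := by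
  have hG₂ := hG.add hG.reverse
  have hsym : noiseForm ξ w (symmetrize G) = _ := hG₂.noiseForm_add hG₂.reflect hξ hw
  rw [hsym, noiseForm_reflect ξ w fun k l m => G k l m + G m l k,
    hG.noiseForm_add hG.reverse hξ hw]
  simp only [Complex.add_re, re_noiseForm_reverse hreal w G]
  ring

lemma tsum_mul_lie2_mul_conj {ξ w : FC} (hξ : RapidDecay ξ) (hw : RapidDecay w) (Q : ℤ → ℝ)
    (hs : Summable fun q : ℤ × ℤ × ℤ =>
      noiseTerm ξ w q.1 q.2.1 q.2.2 * (-(q.1 * q.2.1 * Q q.1) : ℝ)) :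
    ∑' k, (Q k : ℂ) * (lie2 ξ w k * (starRingEnd ℂ) (w k))
      = noiseForm ξ w fun k l _ => -(k * l * Q k) := by
  rw [noiseForm, hs.tsum_prod]
  refine tsum_congr fun k => ?_
  rw [(hs.prod_factor k).tsum_prod, lie2, lie_apply_sub hξ (rapidDecay_lie hξ hw)]
  simp only [lie_apply_sub hξ hw, ← tsum_mul_left, ← tsum_mul_right]
  refine tsum_congr fun l => tsum_congr fun m => ?_
  simp only [noiseTerm]
  push_cast
  linear_combination ((Q k : ℂ) * k * ξ (k - l) * l * ξ (l - m) * w m * (starRingEnd ℂ) (w k))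
    * Complex.I_mul_I

lemma tsum_mul_norm_lie_sq {ξ w : FC} (hξ : RapidDecay ξ) (hreal : isReal ξ) (hw : RapidDecay w)
    (Q : ℤ → ℝ) (hs : Summable fun q : ℤ × ℤ × ℤ =>
      noiseTerm ξ w q.1 q.2.1 q.2.2 * (q.2.1 ^ 2 * Q q.2.1 : ℝ)) :
    ((∑' k, Q k * ‖lie ξ w k‖ ^ 2 : ℝ) : ℂ) = noiseForm ξ w fun _ l _ => l ^ 2 * Q l := by
  let swap : ℤ × ℤ × ℤ ≃ ℤ × ℤ × ℤ :=
    ⟨fun q => (q.2.1, q.1, q.2.2), fun q => (q.2.1, q.1, q.2.2), fun _ => rfl, fun _ => rfl⟩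
  have hswap : Summable fun q : ℤ × ℤ × ℤ =>
      noiseTerm ξ w q.2.1 q.1 q.2.2 * (q.1 ^ 2 * Q q.1 : ℝ) := swap.summable_iff.2 hs
  have hform : (noiseForm ξ w fun _ l _ => l ^ 2 * Q l) = ∑' q : ℤ × ℤ × ℤ,
      noiseTerm ξ w q.2.1 q.1 q.2.2 * (q.1 ^ 2 * Q q.1 : ℝ) := (swap.tsum_eq _).symm
  rw [hform, hswap.tsum_prod, Complex.ofReal_tsum]
  refine tsum_congr fun l => ?_
  rw [(hswap.prod_factor l).tsum_prod]
  push_cast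
  rw [← Complex.conj_mul', lie_apply_sub hξ hw, map_mul, Complex.conj_tsum, mul_mul_mul_comm]
  simp only [← tsum_mul_right]
  simp only [← tsum_mul_left]
  refine tsum_congr fun k => tsum_congr fun m => ?_
  simp only [noiseTerm, map_mul, hreal.conj_sub, Complex.conj_I, map_intCast]
  linear_combination (-(Q l : ℂ) * l ^ 2 * ξ (k - l) * ξ (l - m) * w m * (starRingEnd ℂ) (w k))
    * Complex.I_mul_I

/-- The symbol of the sum of the second order drift energy and the quadratic variation energy of
the noise `𝓛_ξ`, for the multiplier weight `Q`. -/
def itoSymbol (Q : ℤ → ℝ) (k l _m : ℤ) : ℝ := -(k * l * Q k) + l ^ 2 * Q l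

lemma four_mul_re_tsum_mul_lie2_add {ξ w : FC} (hξ : RapidDecay ξ) (hreal : isReal ξ)
    (hw : RapidDecay w) {Q : ℤ → ℝ} {A : ℝ} {p : ℕ} (hQ : ∀ k, |Q k| ≤ A * bracket k ^ p) :
    4 * ((∑' k, (Q k : ℂ) * (lie2 ξ w k * (starRingEnd ℂ) (w k))).re
        + ∑' k, Q k * ‖lie ξ w k‖ ^ 2)
      = (noiseForm ξ w (symmetrize (itoSymbol Q))).re := by
  have hid : ∀ k : ℤ, |(k : ℝ)| ≤ 1 * bracket k ^ 1 := fun k => by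
    simpa using abs_le_bracket k
  have hdrift : PolyBounded fun k l _ => -(k * l * Q k) :=
    (((PolyBounded.first hid).mul (PolyBounded.middle hid)).mul (PolyBounded.first hQ)).neg
  have hvariation : PolyBounded fun _ l _ => l ^ 2 * Q l := by
    simpa only [pow_two] using
      ((PolyBounded.middle hid).mul (PolyBounded.middle hid)).mul (PolyBounded.middle hQ)
  have hadd : noiseForm ξ w (itoSymbol Q) = _ := hdrift.noiseForm_add hvariation hξ hw
  have hito : PolyBounded (itoSymbol Q) := hdrift.add hvariation
  rw [← hito.four_mul_re_noiseForm hξ hreal hw, hadd,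
    ← tsum_mul_lie2_mul_conj hξ hw Q (hdrift.summable_noiseTerm_mul hξ hw),
    ← tsum_mul_norm_lie_sq hξ hreal hw Q (hvariation.summable_noiseTerm_mul hξ hw),
    Complex.add_re, Complex.ofReal_re]

/-! ### Symbol estimates -/

lemma abs_sub_le_of_abs_deriv_le {F F' : ℝ → ℝ} {a b K : ℝ} (h : ∀ x, HasDerivAt F (F' x) x)
    (hK : ∀ x ∈ Set.uIcc a b, |F' x| ≤ K) : |F b - F a| ≤ K * |b - a| := by
  simpa only [Real.norm_eq_abs] using (convex_uIcc a b).norm_image_sub_le_of_norm_hasDerivWithin_le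
    (fun x _ => (h x).hasDerivWithinAt) hK Set.left_mem_uIcc Set.right_mem_uIcc

lemma abs_second_difference_le {F F' F'' : ℝ → ℝ} {m p q K : ℝ}
    (hF : ∀ x, HasDerivAt F (F' x) x) (hF' : ∀ x, HasDerivAt F' (F'' x) x)
    (hK : ∀ x, |x - m| ≤ |p| + |q| → |x - (m + p + q)| ≤ |p| + |q| → |F'' x| ≤ K) :
    |F (m + q) + F (m + p) - F (m + p + q) - F m| ≤ K * |p| * |q| := by
  have hinner : ∀ t ∈ Set.uIcc 0 q, |F' (m + p + t) - F' (m + t)| ≤ K * |p| := fun t ht => by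
    have hdiff := abs_sub_le_of_abs_deriv_le (a := 0) (b := p) (K := K)
      (fun s => (hF' (m + t + s)).comp_const_add (m + t) s) fun s hs => ?_
    · rw [add_zero, sub_zero] at hdiff
      rwa [add_right_comm]
    · have ht₁ := Set.abs_sub_left_of_mem_uIcc ht
      have ht₂ := Set.abs_sub_right_of_mem_uIcc ht
      have hs₁ := Set.abs_sub_left_of_mem_uIcc hs
      have hs₂ := Set.abs_sub_right_of_mem_uIcc hs
      simp only [sub_zero] at ht₁ ht₂ hs₁ hs₂
      refine hK _ ?_ ?_
      · rw [show m + t + s - m = s + t by ring]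
        exact (abs_add_le _ _).trans (add_le_add hs₁ ht₁)
      · rw [abs_sub_comm, show m + p + q - (m + t + s) = (p - s) + (q - t) by ring]
        exact (abs_add_le _ _).trans (add_le_add hs₂ ht₂)
  have houter := abs_sub_le_of_abs_deriv_le (a := 0) (b := q)
    (fun t => ((hF (m + p + t)).comp_const_add (m + p) t).sub ((hF (m + t)).comp_const_add m t))
    hinner
  rw [← abs_neg]
  convert houter using 2
  · simp only [Pi.sub_apply, add_zero]; ring
  · rw [sub_zero]

/-- `F` is a symbol of order `2a`, up to its second derivative: `|F⁽ⁱ⁾(x)| ≤ C (1 + x²)^(a - i/2)`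
for `i ≤ 2`. -/
def SymbolBound (a C : ℝ) (F : ℝ → ℝ) : Prop :=
  ∃ F' F'' : ℝ → ℝ, (∀ x, HasDerivAt F (F' x) x) ∧ (∀ x, HasDerivAt F' (F'' x) x) ∧
    ∀ x, |F x| ≤ C * (1 + x ^ 2) ^ a ∧ |F' x| ≤ C * (1 + x ^ 2) ^ (a - 1 / 2) ∧
      |F'' x| ≤ C * (1 + x ^ 2) ^ (a - 1)

lemma one_add_sq_rpow_pos (x a : ℝ) : 0 < (1 + x ^ 2) ^ a :=
  Real.rpow_pos_of_pos (by positivity) a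

lemma abs_le_one_add_sq_rpow_half (x : ℝ) : |x| ≤ (1 + x ^ 2) ^ (1 / 2 : ℝ) := by
  rw [← Real.sqrt_eq_rpow]
  exact Real.abs_le_sqrt (by linarith)

lemma abs_mul_le_mul_one_add_sq_rpow {a b c C D x y z : ℝ} (hy : |y| ≤ C * (1 + x ^ 2) ^ a)
    (hz : |z| ≤ D * (1 + x ^ 2) ^ b) (hab : a + b = c) : |y * z| ≤ C * D * (1 + x ^ 2) ^ c := by
  rw [abs_mul, ← hab, Real.rpow_add (by positivity), mul_mul_mul_comm]
  exact mul_le_mul hy hz (abs_nonneg z) ((abs_nonneg y).trans hy)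

lemma hasDerivAt_one_add_sq_rpow (a x : ℝ) :
    HasDerivAt (fun x : ℝ => (1 + x ^ 2) ^ a) (2 * a * (x * (1 + x ^ 2) ^ (a - 1))) x := by
  have hbase : HasDerivAt (fun x : ℝ => 1 + x ^ 2) (2 * x) x := by
    simpa using (hasDerivAt_pow 2 x).const_add 1
  convert hbase.rpow_const (p := a) (Or.inl (by positivity)) using 1
  ring

lemma exists_abs_dilation_le (f : SchwartzMap ℝ ℝ) (p : ℕ) : ∃ C : ℝ, ∀ ε ∈ Set.Ioo (0 : ℝ) 1,
    ∀ x, ε ^ p * |f (ε * x)| ≤ C * (1 + x ^ 2) ^ (-(p / 2) : ℝ) := by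
  obtain ⟨C, hdecay⟩ : ∃ C, ∀ x, (1 + |x|) ^ p * |f x| ≤ C := ⟨_, fun x => by
    simpa only [norm_iteratedFDeriv_zero, Real.norm_eq_abs] using
      SchwartzMap.one_add_le_sup_seminorm_apply (𝕜 := ℝ) (m := (p, 0)) le_rfl le_rfl f x⟩
  refine ⟨C, fun ε hε x => ?_⟩
  have hsqrt : √(1 + x ^ 2) ≤ 1 + |x| := by
    rw [Real.sqrt_le_left (by positivity)]
    nlinarith [abs_nonneg x, sq_abs x]
  have hscale : ε * (1 + |x|) ≤ 1 + |ε * x| := by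
    rw [abs_mul, abs_of_pos hε.1]
    linarith [hε.2]
  rw [Real.rpow_neg (by positivity), ← div_eq_mul_inv, le_div_iff₀ (one_add_sq_rpow_pos _ _),
    div_eq_inv_mul, Real.rpow_mul (by positivity), ← one_div, ← Real.sqrt_eq_rpow,
    Real.rpow_natCast]
  calc ε ^ p * |f (ε * x)| * √(1 + x ^ 2) ^ p
      = (ε * √(1 + x ^ 2)) ^ p * |f (ε * x)| := by rw [mul_pow]; ring
    _ ≤ (1 + |ε * x|) ^ p * |f (ε * x)| := by
        have := hε.1
        gcongr
        exact (mul_le_mul_of_nonneg_left hsqrt hε.1.le).trans hscale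
    _ ≤ C := hdecay (ε * x)

namespace SymbolBound

variable {a b C D : ℝ} {F G : ℝ → ℝ}

lemma nonneg (hF : SymbolBound a C F) : 0 ≤ C := by
  obtain ⟨F', F'', -, -, hbound⟩ := hF
  simpa using (abs_nonneg _).trans (hbound 0).1

lemma mul (hF : SymbolBound a C F) (hG : SymbolBound b D G) :
    SymbolBound (a + b) (4 * (C * D)) fun x => F x * G x := by
  have hCD : 0 ≤ C * D := mul_nonneg hF.nonneg hG.nonneg
  obtain ⟨F', F'', hF, hF', hFb⟩ := hF
  obtain ⟨G', G'', hG, hG', hGb⟩ := hG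
  refine ⟨fun x => F' x * G x + F x * G' x,
    fun x => (F'' x * G x + F' x * G' x) + (F' x * G' x + F x * G'' x),
    fun x => (hF x).mul (hG x),
    fun x => ((hF' x).mul (hG x)).add ((hF x).mul (hG' x)), fun x => ?_⟩
  obtain ⟨hF₀, hF₁, hF₂⟩ := hFb x
  obtain ⟨hG₀, hG₁, hG₂⟩ := hGb x
  have hpos : ∀ t : ℝ, 0 ≤ C * D * (1 + x ^ 2) ^ t :=
    fun t => mul_nonneg hCD (one_add_sq_rpow_pos x t).le
  refine ⟨?_, ?_, ?_⟩
  · have h := abs_mul_le_mul_one_add_sq_rpow hF₀ hG₀ (c := a + b) rfl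
    linarith [hpos (a + b)]
  · have h₁₀ := abs_mul_le_mul_one_add_sq_rpow hF₁ hG₀ (c := a + b - 1 / 2) (by ring)
    have h₀₁ := abs_mul_le_mul_one_add_sq_rpow hF₀ hG₁ (c := a + b - 1 / 2) (by ring)
    refine (abs_add_le _ _).trans ?_
    linarith [hpos (a + b - 1 / 2)]
  · have h₂₀ := abs_mul_le_mul_one_add_sq_rpow hF₂ hG₀ (c := a + b - 1) (by ring)
    have h₁₁ := abs_mul_le_mul_one_add_sq_rpow hF₁ hG₁ (c := a + b - 1) (by ring)
    have h₀₂ := abs_mul_le_mul_one_add_sq_rpow hF₀ hG₂ (c := a + b - 1) (by ring)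
    refine (abs_add_le _ _).trans ((add_le_add (abs_add_le _ _) (abs_add_le _ _)).trans ?_)
    linarith

lemma id_mul (hF : SymbolBound a C F) : SymbolBound (1 / 2 + a) (4 * C) fun x => x * F x := by
  have hid : SymbolBound (1 / 2) 1 fun x => x := by
    refine ⟨fun _ => 1, fun _ => 0, hasDerivAt_id, fun x => hasDerivAt_const x 1,
      fun x => ⟨?_, ?_, ?_⟩⟩
    · rw [one_mul]; exact abs_le_one_add_sq_rpow_half x
    · simp
    · rw [abs_zero, one_mul]; exact (one_add_sq_rpow_pos _ _).le
  simpa only [one_mul] using hid.mul hF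

end SymbolBound

lemma exists_symbolBound_one_add_sq_rpow (a : ℝ) :
    ∃ C, SymbolBound a C fun x => (1 + x ^ 2) ^ a := by
  refine ⟨1 + 2 * |a| + 4 * |a| * |a - 1|, fun x => 2 * a * (x * (1 + x ^ 2) ^ (a - 1)),
    fun x => 2 * a * (1 * (1 + x ^ 2) ^ (a - 1)
      + x * (2 * (a - 1) * (x * (1 + x ^ 2) ^ (a - 1 - 1)))),
    hasDerivAt_one_add_sq_rpow a, fun x =>
      ((hasDerivAt_id x).mul (hasDerivAt_one_add_sq_rpow (a - 1) x)).const_mul (2 * a),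
    fun x => ?_⟩
  have h₁ : 0 ≤ 4 * |a| * |a - 1| := by positivity
  have hx : |x| ≤ 1 * (1 + x ^ 2) ^ (1 / 2 : ℝ) := by
    rw [one_mul]; exact abs_le_one_add_sq_rpow_half x
  have hself : ∀ t : ℝ, |(1 + x ^ 2) ^ t| ≤ 1 * (1 + x ^ 2) ^ t := fun t => by
    rw [one_mul, abs_of_pos (one_add_sq_rpow_pos x t)]
  have hfirst : ∀ t : ℝ, |x * (1 + x ^ 2) ^ (t - 1)| ≤ 1 * 1 * (1 + x ^ 2) ^ (t - 1 / 2) :=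
    fun t => abs_mul_le_mul_one_add_sq_rpow hx (hself (t - 1)) (by ring)
  have hconst : |2 * (a - 1)| ≤ 2 * |a - 1| * (1 + x ^ 2) ^ (0 : ℝ) := by
    rw [Real.rpow_zero, mul_one, abs_mul, abs_two]
  have hsecond := abs_mul_le_mul_one_add_sq_rpow hx
    (abs_mul_le_mul_one_add_sq_rpow hconst (hfirst (a - 1)) rfl) (c := a - 1) (by ring)
  refine ⟨(hself a).trans ?_, ?_, ?_⟩
  · have := one_add_sq_rpow_pos x a
    gcongr
    linarith [abs_nonneg a]
  · have := one_add_sq_rpow_pos x (a - 1 / 2)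
    rw [abs_mul, abs_mul, abs_two]
    refine (mul_le_mul_of_nonneg_left (hfirst a) (by positivity)).trans ?_
    rw [one_mul, one_mul]
    gcongr
    linarith
  · have := one_add_sq_rpow_pos x (a - 1)
    rw [abs_mul, abs_mul, abs_two, one_mul]
    refine (mul_le_mul_of_nonneg_left ((abs_add_le _ _).trans (add_le_add (hself _) hsecond))
      (by positivity)).trans ?_
    linarith

lemma exists_symbolBound_dilation (j : SchwartzMap ℝ ℝ) : ∃ C, ∀ ε ∈ Set.Ioo (0 : ℝ) 1,
    SymbolBound 0 C fun x => j (ε * x) := by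
  have hderiv : ∀ (f : SchwartzMap ℝ ℝ) (ε x : ℝ),
      HasDerivAt (fun x => f (ε * x)) (ε * SchwartzMap.derivCLM ℝ ℝ f (ε * x)) x := fun f ε x => by
    have hscale : HasDerivAt (fun x => ε * x) ε x := by simpa using (hasDerivAt_id x).const_mul ε
    rw [SchwartzMap.derivCLM_apply, mul_comm]
    exact (f.differentiable (ε * x)).hasDerivAt.comp x hscale
  set j' := SchwartzMap.derivCLM ℝ ℝ j
  set j'' := SchwartzMap.derivCLM ℝ ℝ j'
  obtain ⟨C₀, h₀⟩ := exists_abs_dilation_le j 0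
  obtain ⟨C₁, h₁⟩ := exists_abs_dilation_le j' 1
  obtain ⟨C₂, h₂⟩ := exists_abs_dilation_le j'' 2
  refine ⟨max C₀ (max C₁ C₂), fun ε hε => ⟨fun x => ε * j' (ε * x), fun x => ε * (ε * j'' (ε * x)),
    hderiv j ε, fun x => (hderiv j' ε x).const_mul ε, fun x => ⟨?_, ?_, ?_⟩⟩⟩
  all_goals have hpos := fun t => (one_add_sq_rpow_pos x t).le
  · refine le_trans ?_ (mul_le_mul_of_nonneg_right (le_max_left C₀ _) (hpos _))
    simpa using h₀ ε hε x
  · refine le_trans ?_ (mul_le_mul_of_nonneg_right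
      ((le_max_left C₁ C₂).trans (le_max_right C₀ _)) (hpos _))
    simpa [abs_mul, abs_of_pos hε.1] using h₁ ε hε x
  · refine le_trans ?_ (mul_le_mul_of_nonneg_right
      ((le_max_right C₁ C₂).trans (le_max_right C₀ _)) (hpos _))
    simpa [abs_mul, abs_of_pos hε.1, pow_two, mul_assoc] using h₂ ε hε x

lemma exists_symbolBound_mul_dilation_sq (j : SchwartzMap ℝ ℝ) (a : ℝ) :
    ∃ C, ∀ ε ∈ Set.Ioo (0 : ℝ) 1, SymbolBound a C fun x => (1 + x ^ 2) ^ a * j (ε * x) ^ 2 := by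
  obtain ⟨A, hA⟩ := exists_symbolBound_one_add_sq_rpow a
  obtain ⟨B, hB⟩ := exists_symbolBound_dilation j
  refine ⟨4 * (A * (4 * (B * B))), fun ε hε => ?_⟩
  simpa only [add_zero, pow_two] using hA.mul ((hB ε hε).mul (hB ε hε))

lemma one_add_sq_rpow_le_of_abs_sub_le {σ : ℝ} {n : ℕ} (hσ : 0 ≤ σ) (hn : σ ≤ n) {x δ : ℝ}
    {k m : ℤ} (hk : |x - k| ≤ δ) (hm : |x - m| ≤ δ) :
    (1 + x ^ 2) ^ σ ≤ 2 ^ σ * (1 + δ) ^ (2 * n) * (wt (σ / 2) k * wt (σ / 2) m) := by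
  have hδ : 0 ≤ δ := (abs_nonneg _).trans hk
  have hhalf : ∀ l : ℤ, |x - l| ≤ δ →
      (1 + x ^ 2) ^ (σ / 2) ≤ (2 * (1 + δ) ^ 2) ^ (σ / 2) * wt (σ / 2) l := fun l hl => by
    rw [wt, ← Real.mul_rpow (by positivity) (one_add_sq_pos l).le]
    refine Real.rpow_le_rpow (by positivity) ?_ (by positivity)
    have hsq : (x - l) ^ 2 ≤ δ ^ 2 := sq_le_sq' (by linarith [(abs_le.1 hl).1]) (abs_le.1 hl).2
    nlinarith [sq_nonneg (x - 2 * l), mul_nonneg (sq_nonneg (l : ℝ)) (sq_nonneg δ),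
      mul_nonneg (sq_nonneg (l : ℝ)) hδ]
  have hsplit : ∀ y : ℝ, 0 < y → y ^ σ = y ^ (σ / 2) * y ^ (σ / 2) := fun y hy => by
    rw [← Real.rpow_add hy, add_halves]
  calc (1 + x ^ 2) ^ σ = (1 + x ^ 2) ^ (σ / 2) * (1 + x ^ 2) ^ (σ / 2) :=
        hsplit _ (by positivity)
    _ ≤ (2 * (1 + δ) ^ 2) ^ (σ / 2) * wt (σ / 2) k
        * ((2 * (1 + δ) ^ 2) ^ (σ / 2) * wt (σ / 2) m) :=
        mul_le_mul (hhalf k hk) (hhalf m hm) (one_add_sq_rpow_pos x _).le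
          ((one_add_sq_rpow_pos x _).le.trans (hhalf k hk))
    _ = 2 ^ σ * ((1 + δ) ^ 2) ^ σ * (wt (σ / 2) k * wt (σ / 2) m) := by
        rw [← Real.mul_rpow (by norm_num) (by positivity), hsplit _ (by positivity)]; ring
    _ ≤ 2 ^ σ * (1 + δ) ^ (2 * n) * (wt (σ / 2) k * wt (σ / 2) m) := by
        have hpow : ((1 + δ) ^ 2) ^ σ ≤ (1 + δ) ^ (2 * n) := by
          rw [pow_mul, ← Real.rpow_natCast _ n]
          have hδ2 : 1 ≤ (1 + δ) ^ 2 := one_le_pow₀ (by linarith)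
          exact Real.rpow_le_rpow_of_exponent_le hδ2 hn
        have := wt_pos (σ / 2) k
        have := wt_pos (σ / 2) m
        exact mul_le_mul_of_nonneg_right (mul_le_mul_of_nonneg_left hpow (by positivity))
          (by positivity)

namespace SymbolBound

variable {σ C : ℝ} {Q : ℝ → ℝ}

lemma abs_second_difference_sq_mul_le (hQ : SymbolBound σ C Q) {m p q K : ℝ}
    (hK : ∀ x, |x - m| ≤ |p| + |q| → |x - (m + p + q)| ≤ |p| + |q| → (1 + x ^ 2) ^ σ ≤ K) :
    |(m + q) ^ 2 * Q (m + q) + (m + p) ^ 2 * Q (m + p) - (m + p + q) ^ 2 * Q (m + p + q)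
      - m ^ 2 * Q m| ≤ 16 * C * K * |p| * |q| := by
  have hC := hQ.nonneg
  obtain ⟨F', F'', hF, hF', hbound⟩ := hQ.id_mul.id_mul
  simp only [pow_two, mul_assoc (_ : ℝ) (_ : ℝ) (Q _)]
  refine abs_second_difference_le hF hF' fun x hm hk => (hbound x).2.2.trans ?_
  rw [show 1 / 2 + (1 / 2 + σ) - 1 = σ by ring, show 4 * (4 * C) = 16 * C by ring]
  exact mul_le_mul_of_nonneg_left (hK x hm hk) (by positivity)

lemma abs_sub_mul_le (hQ : SymbolBound σ C Q) {k m K : ℝ}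
    (hK : ∀ x ∈ Set.uIcc m k, (1 + x ^ 2) ^ σ ≤ K) : |k * Q k - m * Q m| ≤ 4 * C * K * |k - m| := by
  have hC := hQ.nonneg
  obtain ⟨F', F'', hF, -, hbound⟩ := hQ.id_mul
  refine abs_sub_le_of_abs_deriv_le hF fun x hx => (hbound x).2.1.trans ?_
  rw [add_sub_cancel_left]
  exact mul_le_mul_of_nonneg_left (hK x hx) (by positivity)

-- Symmetrization turns the first order cancellation in `itoSymbol` into a mixed second
-- difference, which gains two derivatives.
lemma abs_symmetrize_itoSymbol_le {n : ℕ} (hσ : 0 ≤ σ) (hn : σ ≤ n) (hQ : SymbolBound σ C Q)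
    (k l m : ℤ) :
    |symmetrize (itoSymbol fun k => Q k) k l m| ≤ 36 * 2 ^ σ * C * (wt (σ / 2) k * wt (σ / 2) m
      * (bracket (k - l) ^ (2 * n + 2) * bracket (l - m) ^ (2 * n + 2))) := by
  have hC := hQ.nonneg
  set p : ℝ := k - l
  set q : ℝ := l - m
  set K : ℝ := 2 ^ σ * (1 + (|p| + |q|)) ^ (2 * n) * (wt (σ / 2) k * wt (σ / 2) m)
  have hk : (k : ℝ) = m + p + q := by simp only [p, q]; ring
  have hl : (l : ℝ) = m + q := by simp only [q]; ring
  have hK : ∀ x : ℝ, |x - m| ≤ |p| + |q| → |x - k| ≤ |p| + |q| → (1 + x ^ 2) ^ σ ≤ K :=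
    fun x hxm hxk => one_add_sq_rpow_le_of_abs_sub_le hσ hn hxk hxm
  have hkm : |(k : ℝ) - m| ≤ |p| + |q| := by
    rw [hk, add_assoc, add_sub_cancel_left]; exact abs_add_le p q
  have hsecond := hQ.abs_second_difference_sq_mul_le (m := m) (p := p) (q := q) (K := K)
    fun x hxm hxk => hK x hxm (hk ▸ hxk)
  have hfirst := hQ.abs_sub_mul_le (k := k) (m := m) (K := K) fun x hx =>
    hK x ((Set.abs_sub_left_of_mem_uIcc hx).trans hkm)
      ((abs_sub_comm _ _).trans_le ((Set.abs_sub_right_of_mem_uIcc hx).trans hkm))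
  have hw : 0 ≤ wt (σ / 2) k * wt (σ / 2) m := mul_nonneg (wt_pos _ k).le (wt_pos _ m).le
  have hK0 : 0 ≤ K := by positivity
  have hbracket : 1 + (|p| + |q|) ≤ bracket (k - l) * bracket (l - m) := by
    simp only [bracket, p, q]; push_cast
    nlinarith [abs_nonneg (k - l : ℝ), abs_nonneg (l - m : ℝ)]
  rw [← hk, ← hl] at hsecond
  calc |symmetrize (itoSymbol fun k => Q k) k l m|
      = |2 * (l ^ 2 * Q l + (m + p) ^ 2 * Q (m + p) - k ^ 2 * Q k - m ^ 2 * Q m)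
          + (k - m) * (k * Q k - m * Q m)| := by
        have hl' : ((k + m - l : ℤ) : ℝ) = m + p := by simp only [p]; push_cast; ring
        simp only [symmetrize, itoSymbol, hl']
        congr 1
        simp only [p]; ring
    _ ≤ 2 * (16 * C * K * |p| * |q|) + (|p| + |q|) * (4 * C * K * (|p| + |q|)) := by
        refine (abs_add_le _ _).trans ?_
        rw [abs_mul, abs_mul, abs_two]
        gcongr
        exact hfirst.trans (by gcongr)
    _ = C * K * (32 * (|p| * |q|) + 4 * (|p| + |q|) ^ 2) := by ring
    _ ≤ C * K * (36 * (1 + (|p| + |q|)) ^ 2) := by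
        gcongr
        nlinarith [mul_nonneg (abs_nonneg p) (abs_nonneg q), sq_nonneg |p|, sq_nonneg |q|,
          abs_nonneg p, abs_nonneg q]
    _ = 36 * 2 ^ σ * C * (wt (σ / 2) k * wt (σ / 2) m * (1 + (|p| + |q|)) ^ (2 * n + 2)) := by
        simp only [K]; ring
    _ ≤ _ := by rw [← mul_pow]; gcongr

end SymbolBound

/-! ### The energy of the noise -/

lemma SymbolBound.abs_le_mul_wt {σ D : ℝ} {Q : ℝ → ℝ} (hQ : SymbolBound σ D Q) (k : ℤ) :
    |Q k| ≤ D * wt σ k := by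
  obtain ⟨_, _, _, _, hbound⟩ := hQ
  exact (hbound k).1

lemma SymbolBound.exists_abs_le_mul_bracket_pow {σ D : ℝ} {Q : ℝ → ℝ} (hQ : SymbolBound σ D Q) :
    ∃ p : ℕ, ∀ k : ℤ, |Q k| ≤ D * bracket k ^ p := by
  obtain ⟨p, hp⟩ := exists_wt_le_bracket_pow σ
  exact ⟨p, fun k => (hQ.abs_le_mul_wt k).trans (mul_le_mul_of_nonneg_left (hp k) hQ.nonneg)⟩

lemma exists_re_tsum_mul_lie2_add_le {σ : ℝ} (hσ : 0 ≤ σ) : ∃ C : ℝ, ∃ p : ℕ,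
    ∀ (D : ℝ) (Q : ℝ → ℝ), SymbolBound σ D Q → ∀ ξ w : FC, RapidDecay ξ → isReal ξ →
      RapidDecay w →
      (∑' k : ℤ, (Q k : ℂ) * (lie2 ξ w k * (starRingEnd ℂ) (w k))).re
        + ∑' k : ℤ, Q k * ‖lie ξ w k‖ ^ 2 ≤ C * D * (ell1Norm p ξ ^ 2 * hsNorm σ w ^ 2) := by
  obtain ⟨n, hn⟩ := exists_nat_gt σ
  refine ⟨9 * 2 ^ σ, 2 * n + 2, fun D Q hQ ξ w hξ hreal hw => ?_⟩
  obtain ⟨p, hp⟩ := hQ.exists_abs_le_mul_bracket_pow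
  have hD := hQ.nonneg
  have hform := (summable_and_norm_noiseForm_le hξ (hw.memHs σ) (by positivity)
    (hQ.abs_symmetrize_itoSymbol_le hσ hn.le)).2
  have hsym := four_mul_re_tsum_mul_lie2_add hξ hreal hw hp
  linarith [Complex.re_le_norm (noiseForm ξ w (symmetrize (itoSymbol fun k => Q k)))]

section

variable {ξ : ℕ → FC} {w : FC} {σ D : ℝ} {Q : ℝ → ℝ}

lemma summable_ell1Norm_mul (hsum : ∀ p, Summable fun i => ell1Norm p (ξ i)) (p q : ℕ) :
    Summable fun i => ell1Norm p (ξ i) * ell1Norm q (ξ i) :=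
  .of_nonneg_of_le (fun _ => mul_nonneg (ell1Norm_nonneg _ _) (ell1Norm_nonneg _ _))
    (fun i => mul_le_mul_of_nonneg_right
      ((hsum p).le_tsum i fun _ _ => ell1Norm_nonneg _ _) (ell1Norm_nonneg _ _))
    ((hsum q).mul_left _)

lemma summable_tsum_mul_norm_lie_sq (hξ : ∀ i, RapidDecay (ξ i))
    (hsum : ∀ p, Summable fun i => ell1Norm p (ξ i)) (hw : RapidDecay w) (hQ : SymbolBound σ D Q) :
    Summable fun i => ∑' k : ℤ, Q k * ‖lie (ξ i) w k‖ ^ 2 := by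
  obtain ⟨p, C, hC⟩ := exists_hsNorm_sq_le_of_norm_mul_bracket_pow_le σ
  obtain ⟨W, hW⟩ := hw (p + 1)
  refine .of_norm_bounded ((summable_ell1Norm_mul hsum (p + 1) (p + 1)).mul_left
    (D * C * W ^ 2)) fun i => ?_
  have hlie : memHs σ (lie (ξ i) w) := (rapidDecay_lie (hξ i) hw).memHs σ
  have hterm : ∀ k : ℤ, ‖Q k * ‖lie (ξ i) w k‖ ^ 2‖ ≤ D * (wt σ k * ‖lie (ξ i) w k‖ ^ 2) :=
    fun k => by
      rw [norm_mul, Real.norm_eq_abs, Real.norm_of_nonneg (sq_nonneg _), ← mul_assoc]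
      exact mul_le_mul_of_nonneg_right (hQ.abs_le_mul_wt k) (sq_nonneg _)
  calc ‖∑' k : ℤ, Q k * ‖lie (ξ i) w k‖ ^ 2‖ ≤ D * hsNorm σ (lie (ξ i) w) ^ 2 := by
        rw [hsNorm_sq]
        exact tsum_of_norm_bounded (hlie.hasSum.mul_left D) hterm
    _ ≤ D * (C * (ell1Norm (p + 1) (ξ i) * W) ^ 2) := mul_le_mul_of_nonneg_left
        (hC _ _ (norm_lie_mul_bracket_pow_le (hξ i) hw hW)) hQ.nonneg
    _ = D * C * W ^ 2 * (ell1Norm (p + 1) (ξ i) * ell1Norm (p + 1) (ξ i)) := by ring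

lemma exists_norm_lie2_le (hξ : ∀ i, RapidDecay (ξ i)) (hw : RapidDecay w) :
    ∃ W, 0 ≤ W ∧ ∀ i k, ‖lie2 (ξ i) w k‖ ≤ ell1Norm 1 (ξ i) * ell1Norm 2 (ξ i) * W := by
  obtain ⟨W, hW⟩ := hw 2
  refine ⟨W, (norm_mul_bracket_pow_nonneg w 2 0).trans (hW 0), fun i k => ?_⟩
  have h := norm_lie_mul_bracket_pow_le (p := 0) (hξ i) (rapidDecay_lie (hξ i) hw)
    (norm_lie_mul_bracket_pow_le (hξ i) hw hW) k
  rwa [pow_zero, mul_one, ← mul_assoc] at h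

lemma summable_mul_lie2_mul_conj (hξ : ∀ i, RapidDecay (ξ i))
    (hsum : ∀ p, Summable fun i => ell1Norm p (ξ i)) (hw : RapidDecay w) (hQ : SymbolBound σ D Q) :
    Summable fun q : ℕ × ℤ => (Q q.2 : ℂ) * (lie2 (ξ q.1) w q.2 * (starRingEnd ℂ) (w q.2)) := by
  obtain ⟨W, hW0, hW⟩ := exists_norm_lie2_le hξ hw
  obtain ⟨p, hp⟩ := hQ.exists_abs_le_mul_bracket_pow
  have hdom : Summable fun q : ℕ × ℤ => ell1Norm 1 (ξ q.1) * ell1Norm 2 (ξ q.1) * W *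
      (D * (‖w q.2‖ * bracket q.2 ^ p)) :=
    ((summable_ell1Norm_mul hsum 1 2).mul_right W).mul_of_nonneg
      ((hw.summable_mul_bracket_pow p).mul_left D)
      (fun _ => mul_nonneg (mul_nonneg (ell1Norm_nonneg _ _) (ell1Norm_nonneg _ _)) hW0)
      (fun k => mul_nonneg hQ.nonneg (norm_mul_bracket_pow_nonneg w p k))
  refine .of_norm_bounded hdom fun q => ?_
  obtain ⟨i, k⟩ := q
  rw [norm_mul, norm_mul, Complex.norm_real, RCLike.norm_conj, Real.norm_eq_abs]
  calc |Q k| * (‖lie2 (ξ i) w k‖ * ‖w k‖)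
      ≤ D * bracket k ^ p * (ell1Norm 1 (ξ i) * ell1Norm 2 (ξ i) * W * ‖w k‖) :=
        mul_le_mul (hp k) (mul_le_mul_of_nonneg_right (hW i k) (norm_nonneg _))
          (mul_nonneg (norm_nonneg _) (norm_nonneg _)) ((abs_nonneg _).trans (hp k))
    _ = ell1Norm 1 (ξ i) * ell1Norm 2 (ξ i) * W * (D * (‖w k‖ * bracket k ^ p)) := by ring

lemma hasSum_mul_tsumFC_lie2_mul_conj (hξ : ∀ i, RapidDecay (ξ i))
    (hsum : ∀ p, Summable fun i => ell1Norm p (ξ i)) (hw : RapidDecay w) (hQ : SymbolBound σ D Q) :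
    HasSum (fun k : ℤ => (Q k : ℂ) * (tsumFC (fun i => lie2 (ξ i) w) k * (starRingEnd ℂ) (w k)))
      (∑' i, ∑' k : ℤ, (Q k : ℂ) * (lie2 (ξ i) w k * (starRingEnd ℂ) (w k))) := by
  have hs := summable_mul_lie2_mul_conj hξ hsum hw hQ
  obtain ⟨W, _, hW⟩ := exists_norm_lie2_le hξ hw
  have hinner : ∀ k : ℤ, ∑' i, (Q k : ℂ) * (lie2 (ξ i) w k * (starRingEnd ℂ) (w k))
      = (Q k : ℂ) * (tsumFC (fun i => lie2 (ξ i) w) k * (starRingEnd ℂ) (w k)) := fun k => by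
    have hlie2 : Summable fun i => lie2 (ξ i) w k :=
      .of_norm_bounded ((summable_ell1Norm_mul hsum 1 2).mul_right W) fun i => hW i k
    rw [tsum_mul_left, hlie2.tsum_mul_right, tsumFC]
  have hsum_inner : Summable fun k : ℤ =>
      ∑' i, (Q k : ℂ) * (lie2 (ξ i) w k * (starRingEnd ℂ) (w k)) := hs.prod_symm.prod
  have hswap : ∑' i, ∑' k : ℤ, (Q k : ℂ) * (lie2 (ξ i) w k * (starRingEnd ℂ) (w k))
      = ∑' k : ℤ, ∑' i, (Q k : ℂ) * (lie2 (ξ i) w k * (starRingEnd ℂ) (w k)) := hs.tsum_comm.symm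
  rw [hswap]
  exact (funext hinner) ▸ hsum_inner.hasSum

end

theorem exists_tsum_noise_energy_le {σ : ℝ} (hσ : 0 ≤ σ) {ξ : ℕ → FC}
    (hξ : ∀ i, RapidDecay (ξ i)) (hreal : ∀ i, isReal (ξ i))
    (hsum : ∀ p, Summable fun i => ell1Norm p (ξ i)) :
    ∃ C : ℝ, ∀ (D : ℝ) (Q : ℝ → ℝ), SymbolBound σ D Q → ∀ w : FC, RapidDecay w →
      (∑' k : ℤ, (Q k : ℂ) * (tsumFC (fun i => lie2 (ξ i) w) k * (starRingEnd ℂ) (w k))).re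
        + ∑' i, ∑' k : ℤ, Q k * ‖lie (ξ i) w k‖ ^ 2 ≤ C * D * hsNorm σ w ^ 2 := by
  obtain ⟨C, p, hC⟩ := exists_re_tsum_mul_lie2_add_le hσ
  refine ⟨C * ∑' i, ell1Norm p (ξ i) * ell1Norm p (ξ i), fun D Q hQ w hw => ?_⟩
  have hdrift : Summable fun i => ∑' k : ℤ, (Q k : ℂ) * (lie2 (ξ i) w k * (starRingEnd ℂ) (w k)) :=
    (summable_mul_lie2_mul_conj hξ hsum hw hQ).prod
  have hre : Summable fun i =>
      (∑' k : ℤ, (Q k : ℂ) * (lie2 (ξ i) w k * (starRingEnd ℂ) (w k))).re :=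
    Complex.reCLM.summable hdrift
  have hvariation := summable_tsum_mul_norm_lie_sq hξ hsum hw hQ
  rw [(hasSum_mul_tsumFC_lie2_mul_conj hξ hsum hw hQ).tsum_eq, Complex.re_tsum hdrift,
    ← hre.tsum_add hvariation]
  calc _ ≤ ∑' i, C * D * hsNorm σ w ^ 2 * (ell1Norm p (ξ i) * ell1Norm p (ξ i)) :=
        (hre.add hvariation).tsum_le_tsum
          (fun i => (hC D Q hQ (ξ i) w (hξ i) (hreal i) hw).trans_eq (by ring))
          ((summable_ell1Norm_mul hsum p p).mul_left _)
    _ = _ := by rw [tsum_mul_left]; ring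

/-! ### The mollified transport term -/

lemma tsum_transportTerm_Jmol (j : ℝ → ℝ) (σ ε : ℝ) (f v : FC) (k : ℤ) :
    ∑' m, transportTerm σ f (Jmol j ε v) k m
      = (wt σ k : ℂ) * (Jmol j ε (mul f (D1 (Jmol j ε v))) k * (starRingEnd ℂ) (v k)) := by
  have hmul : mul f (D1 (Jmol j ε v)) k = ∑' m, f (k - m) * D1 (Jmol j ε v) m := by
    rw [mul, ← (Equiv.subLeft k).tsum_eq]
    simp only [Equiv.subLeft_apply, sub_sub_cancel]
  have hself : Jmol j ε (mul f (D1 (Jmol j ε v))) k * (starRingEnd ℂ) (v k)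
      = (starRingEnd ℂ) (Jmol j ε v k) * mul f (D1 (Jmol j ε v)) k := by
    simp only [Jmol, mult, map_mul, Complex.conj_ofReal]
    ring
  rw [hself, hmul, ← mul_assoc, ← tsum_mul_left]
  exact tsum_congr fun m => mul_assoc _ _ _

lemma realityDefect_Jmol (j : ℝ → ℝ) (ε : ℝ) {u : FC} (hu : isReal u) :
    realityDefect (Jmol j ε u) = Jmol j ε u - Jmol j (-ε) u := by
  funext k
  simp only [realityDefect, Jmol, mult, Pi.sub_apply, map_mul, Complex.conj_ofReal, hu k,
    Complex.conj_conj, Int.cast_neg, mul_neg, neg_mul]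

lemma exists_sq_mul_hsNorm_sq_D1_Jmol_le (j : SchwartzMap ℝ ℝ) : ∃ C : ℝ, 0 ≤ C ∧
    ∀ ε : ℝ, 0 < ε → ∀ (σ : ℝ) (v : FC), memHs σ v →
      ε ^ 2 * hsNorm σ (D1 (Jmol j ε v)) ^ 2 ≤ C * hsNorm σ v ^ 2 := by
  obtain ⟨C, _, hC⟩ := exists_abs_pow_mul_abs_le j 1
  refine ⟨C ^ 2, sq_nonneg _, fun ε hε σ v hv => ?_⟩
  have hnorm : ∀ k : ℤ, ε * ‖D1 (Jmol j ε v) k‖ = |ε * k| * |j (ε * k)| * ‖v k‖ := fun k => by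
    rw [D1, norm_mul, norm_mul, Complex.norm_I, norm_Jmol, Complex.norm_intCast, abs_mul,
      abs_of_pos hε]
    ring
  have hcompare := (memHs_and_hsNorm_sq_le (a := σ) (c := D1 (Jmol j ε v)) (A := C ^ 2 / ε ^ 2)
    hv fun k => ?_).2
  · rwa [div_mul_eq_mul_div, le_div_iff₀' (by positivity)] at hcompare
  · rw [div_mul_eq_mul_div, le_div_iff₀ (by positivity)]
    have hk : |ε * k| * |j (ε * k)| ≤ C := by simpa only [pow_one] using hC (ε * k)
    calc wt σ k * ‖D1 (Jmol j ε v) k‖ ^ 2 * ε ^ 2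
        = (|ε * k| * |j (ε * k)|) ^ 2 * (wt σ k * ‖v k‖ ^ 2) := by
          rw [mul_assoc, ← mul_pow, mul_comm _ ε, hnorm]
          ring
      _ ≤ C ^ 2 * (wt σ k * ‖v k‖ ^ 2) :=
          mul_le_mul_of_nonneg_right (pow_le_pow_left₀ (by positivity) hk 2)
            (wt_mul_norm_sq_nonneg σ v k)

lemma exists_linfty_realityDefect_Jmol_mul_le (j : SchwartzMap ℝ ℝ) {σ : ℝ} (hσ : 3 / 2 < σ) :
    ∃ C : ℝ, 0 ≤ C ∧ ∀ ε : ℝ, 0 < ε → ∀ u v : FC, isReal u → memHs σ u → memHs σ v →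
      linfty (realityDefect (Jmol j ε u))
          * (ε * hsNorm σ (D1 (Jmol j ε v)) ^ 2 + ε⁻¹ * hsNorm σ (Jmol j ε v) ^ 2)
        ≤ C * (linfty (D1 u) * hsNorm σ v ^ 2) := by
  obtain ⟨B, _, hB⟩ := exists_abs_le j
  obtain ⟨C₁, hC₁, hdefect⟩ := exists_linfty_Jmol_sub_Jmol_neg_le j
  obtain ⟨C₂, hC₂, hderiv⟩ := exists_sq_mul_hsNorm_sq_D1_Jmol_le j
  refine ⟨C₁ * (C₂ + B ^ 2), by positivity, fun ε hε u v hreal hu hv => ?_⟩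
  have hU := linfty_nonneg (D1 u)
  have hodd : linfty (realityDefect (Jmol j ε u)) ≤ C₁ * ε * linfty (D1 u) := by
    simpa only [realityDefect_Jmol _ _ hreal, abs_of_pos hε]
      using hdefect ε u (hu.summable hσ) (hu.summable_D1 hσ)
  have hbalance : ε * (ε * hsNorm σ (D1 (Jmol j ε v)) ^ 2 + ε⁻¹ * hsNorm σ (Jmol j ε v) ^ 2)
      ≤ (C₂ + B ^ 2) * hsNorm σ v ^ 2 := by
    rw [mul_add, ← mul_assoc, ← mul_assoc, mul_inv_cancel₀ hε.ne', one_mul, ← pow_two, add_mul]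
    exact add_le_add (hderiv ε hε σ v hv) (hsNorm_sq_Jmol_le hB ε hv)
  calc linfty (realityDefect (Jmol j ε u)) * _ ≤ C₁ * ε * linfty (D1 u) * _ :=
        mul_le_mul_of_nonneg_right hodd (by positivity)
    _ = C₁ * linfty (D1 u) * (ε * _) := by ring
    _ ≤ C₁ * linfty (D1 u) * _ := mul_le_mul_of_nonneg_left hbalance (by positivity)
    _ = C₁ * (C₂ + B ^ 2) * (linfty (D1 u) * hsNorm σ v ^ 2) := by ring

lemma exists_abs_re_tsum_transportTerm_Jmol_le (j : SchwartzMap ℝ ℝ) {σ : ℝ} (hσ : 3 / 2 < σ) :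
    ∃ C : ℝ, 0 ≤ C ∧ ∀ ε : ℝ, 0 < ε → ∀ u v : FC, isReal u → memHs σ u → memHs σ v →
      |(∑' q : ℤ × ℤ, transportTerm σ (Jmol j ε u) (Jmol j ε v) q.1 q.2).re|
        ≤ C * (linfty (D1 u) + linfty (D1 v)) * (hsNorm σ u ^ 2 + hsNorm σ v ^ 2) := by
  obtain ⟨C, hC, htransport⟩ := exists_abs_re_tsum_transportTerm_le (σ := σ) (by linarith)
  obtain ⟨B, _, hB⟩ := exists_abs_le j
  obtain ⟨C₁, hC₁, hlinfty⟩ := exists_linfty_Jmol_le j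
  obtain ⟨C₂, hC₂, hdefect⟩ := exists_linfty_realityDefect_Jmol_mul_le j hσ
  refine ⟨C * (C₁ * B ^ 2 + C₂), by positivity, fun ε hε u v hreal hu hv => ?_⟩
  have hrapid : ∀ {w}, memHs σ w → RapidDecay (Jmol j ε w) := fun hw =>
    rapidDecay_Jmol j hε (hw.norm_le_hsNorm (by linarith))
  refine (htransport _ _ (hrapid hu) (hrapid hv) ε hε).trans ?_
  have hU := linfty_nonneg (D1 u)
  have hV := linfty_nonneg (D1 v)
  have hDu : linfty (D1 (Jmol j ε u)) ≤ C₁ * linfty (D1 u) :=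
    D1_Jmol j ε u ▸ hlinfty ε _ (hu.summable_D1 hσ)
  have hDv : linfty (D1 (Jmol j ε v)) ≤ C₁ * linfty (D1 v) :=
    D1_Jmol j ε v ▸ hlinfty ε _ (hv.summable_D1 hσ)
  have hJu := hsNorm_sq_Jmol_le hB ε hu
  have hJv := hsNorm_sq_Jmol_le hB ε hv
  have hterms := add_le_add_three (mul_le_mul hDu hJv (sq_nonneg _) (by positivity))
    (mul_le_mul hDv (add_le_add hJu hJv) (by positivity) (by positivity))
    (hdefect ε hε u v hreal hu hv)
  rw [mul_assoc C, mul_assoc C]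
  refine mul_le_mul_of_nonneg_left (hterms.trans ?_) hC
  have h₁ : 0 ≤ C₁ * B ^ 2 * (linfty (D1 u) * hsNorm σ u ^ 2) := by positivity
  have h₂ : 0 ≤ C₂ * (linfty (D1 u) * hsNorm σ u ^ 2
    + linfty (D1 v) * (hsNorm σ u ^ 2 + hsNorm σ v ^ 2)) := by positivity
  linarith

lemma summable_transportTerm_Jmol (j : SchwartzMap ℝ ℝ) {σ ε : ℝ} (hσ : 0 ≤ σ) (hε : 0 < ε)
    {u v : FC} (hu : memHs σ u) (hv : memHs σ v) :
    Summable (fun q : ℤ × ℤ => transportTerm σ (Jmol j ε u) (Jmol j ε v) q.1 q.2) := by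
  simpa only [one_mul] using summable_mul_transportTerm σ
    (rapidDecay_Jmol j hε (hu.norm_le_hsNorm hσ)) (rapidDecay_Jmol j hε (hv.norm_le_hsNorm hσ))
    (P := fun _ _ => 1) (A := 1) fun _ _ => norm_one.le

theorem exists_abs_hsInner_Jmol_mul_D1_le (j : SchwartzMap ℝ ℝ) {σ : ℝ} (hσ : 3 / 2 < σ) :
    ∃ C : ℝ, 0 ≤ C ∧ ∀ ε : ℝ, 0 < ε → ∀ u v : FC, isReal u → memHs σ u → memHs σ v →
      (Summable fun k => (wt σ k : ℂ) *
        (Jmol j ε (mul (Jmol j ε u) (D1 (Jmol j ε v))) k * (starRingEnd ℂ) (v k))) ∧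
      |hsInner σ (Jmol j ε (mul (Jmol j ε u) (D1 (Jmol j ε v)))) v|
        ≤ C * (linfty (D1 u) + linfty (D1 v)) * (hsNorm σ u ^ 2 + hsNorm σ v ^ 2) := by
  obtain ⟨C, hC, hbound⟩ := exists_abs_re_tsum_transportTerm_Jmol_le j hσ
  refine ⟨C, hC, fun ε hε u v hreal hu hv => ?_⟩
  have hsum := summable_transportTerm_Jmol j (by linarith) hε hu hv
  have hfibre := tsum_transportTerm_Jmol j σ ε (Jmol j ε u) v
  refine ⟨hsum.prod.congr hfibre, ?_⟩
  rw [hsInner, ← tsum_congr hfibre, ← hsum.tsum_prod]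
  exact hbound ε hε u v hreal hu hv

/-! ### The energy estimate -/

lemma two_mul_hsInner_neg_add_half_smul {σ : ℝ} {A B v : FC}
    (hA : Summable fun k => (wt σ k : ℂ) * (A k * (starRingEnd ℂ) (v k)))
    (hB : Summable fun k => (wt σ k : ℂ) * (B k * (starRingEnd ℂ) (v k))) :
    2 * hsInner σ (-A + (1 / 2 : ℝ) • B) v = -2 * hsInner σ A v + hsInner σ B v := by
  have hsplit : ∑' k, (wt σ k : ℂ) * ((-A + (1 / 2 : ℝ) • B) k * (starRingEnd ℂ) (v k))
      = -∑' k, (wt σ k : ℂ) * (A k * (starRingEnd ℂ) (v k))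
        + ((1 / 2 : ℝ) : ℂ) * ∑' k, (wt σ k : ℂ) * (B k * (starRingEnd ℂ) (v k)) := by
    rw [← tsum_neg, ← tsum_mul_left, ← hA.neg.tsum_add (hB.mul_left _)]
    refine tsum_congr fun k => ?_
    simp only [Pi.add_apply, Pi.neg_apply, Pi.smul_apply, Complex.real_smul]
    ring
  rw [hsInner, hsplit, Complex.add_re, Complex.neg_re, Complex.re_ofReal_mul]
  simp only [hsInner]
  ring

/-- The Itô correction `J_ε³ (1 - ∂ₓ²)^{-p} Σ_i 𝓛²_{ξ_i} (1 - ∂ₓ²)^p J_ε v`. The two components of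
the system correspond to `p = 1` and `p = 0`. -/
def itoCorrection (j : ℝ → ℝ) (ε p : ℝ) (ξ : ℕ → FC) (v : FC) : FC :=
  Jmol j ε (Jmol j ε (Jmol j ε
    (mult (wt (-p)) (tsumFC fun i => lie2 (ξ i) (mult (wt p) (Jmol j ε v))))))

/-- The noise coefficient `-J_ε (1 - ∂ₓ²)^{-p} 𝓛_ξ (1 - ∂ₓ²)^p J_ε v`, with `p` as in
`itoCorrection`. -/
def noiseCoefficient (j : ℝ → ℝ) (ε p : ℝ) (ξ v : FC) : FC :=
  -(Jmol j ε (mult (wt (-p)) (lie ξ (mult (wt p) (Jmol j ε v)))))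

lemma wt_sub_two_mul (σ p : ℝ) (k : ℤ) :
    wt (σ - 2 * p) k = wt σ k * wt (-p) k ^ 2 := by
  rw [pow_two, wt_mul_wt, wt_mul_wt]
  ring_nf

section

variable (j : ℝ → ℝ) (σ p ε : ℝ) (v : FC)

lemma wt_mul_itoCorrection_mul_conj (ξ : ℕ → FC) (k : ℤ) :
    (wt σ k : ℂ) * (itoCorrection j ε p ξ v k * (starRingEnd ℂ) (v k))
      = ((wt (σ - 2 * p) k * j (ε * k) ^ 2 : ℝ) : ℂ)
        * (tsumFC (fun i => lie2 (ξ i) (mult (wt p) (Jmol j ε v))) k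
          * (starRingEnd ℂ) (mult (wt p) (Jmol j ε v) k)) := by
  have hinv : (wt p k : ℂ) * wt (-p) k = 1 := by exact_mod_cast wt_mul_wt_neg p k
  rw [wt_sub_two_mul]
  set F := tsumFC fun i => lie2 (ξ i) (mult (wt p) (Jmol j ε v)) with hF
  rw [itoCorrection, ← hF]
  simp only [Jmol, mult, map_mul, Complex.conj_ofReal, Complex.ofReal_mul, Complex.ofReal_pow]
  linear_combination -(wt σ k * j (ε * k) ^ 3 * wt (-p) k * F k * (starRingEnd ℂ) (v k) : ℂ) * hinv

lemma hsNorm_sq_noiseCoefficient (ξ : FC) :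
    hsNorm σ (noiseCoefficient j ε p ξ v) ^ 2
      = ∑' k : ℤ, wt (σ - 2 * p) k * j (ε * k) ^ 2 * ‖lie ξ (mult (wt p) (Jmol j ε v)) k‖ ^ 2 := by
  rw [hsNorm_sq]
  refine tsum_congr fun k => ?_
  rw [wt_sub_two_mul, noiseCoefficient, Pi.neg_apply, norm_neg, norm_Jmol, mult, norm_mul,
    Complex.norm_real, Real.norm_eq_abs, mul_pow, mul_pow, sq_abs, sq_abs]
  ring

lemma hsNorm_sub_two_mul_mult_wt (c : FC) : hsNorm (σ - 2 * p) (mult (wt p) c) = hsNorm σ c := by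
  rw [hsNorm, hsNorm]
  congr 1
  refine tsum_congr fun k => ?_
  rw [mult, norm_mul, Complex.norm_real, Real.norm_eq_abs, mul_pow, sq_abs, wt_sub_two_mul]
  linear_combination wt σ k * ‖c k‖ ^ 2 * (wt p k * wt (-p) k + 1) * wt_mul_wt_neg p k

end

lemma exists_itoCorrection_energy_le (j : SchwartzMap ℝ ℝ) {σ p : ℝ} (hσ : 0 ≤ σ)
    (hp : 2 * p ≤ σ) {ξ : ℕ → FC} (hξ : ∀ i, RapidDecay (ξ i)) (hreal : ∀ i, isReal (ξ i))
    (hsum : ∀ q, Summable fun i => ell1Norm q (ξ i)) :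
    ∃ C : ℝ, ∀ ε ∈ Set.Ioo (0 : ℝ) 1, ∀ v : FC, memHs σ v →
      (Summable fun k => (wt σ k : ℂ) * (itoCorrection j ε p ξ v k * (starRingEnd ℂ) (v k))) ∧
      (Summable fun i => hsNorm σ (noiseCoefficient j ε p (ξ i) v) ^ 2) ∧
      hsInner σ (itoCorrection j ε p ξ v) v
        + ∑' i, hsNorm σ (noiseCoefficient j ε p (ξ i) v) ^ 2 ≤ C * hsNorm σ v ^ 2 := by
  obtain ⟨C, henergy⟩ := exists_tsum_noise_energy_le (sub_nonneg.2 hp) hξ hreal hsum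
  obtain ⟨D, hD⟩ := exists_symbolBound_mul_dilation_sq j (σ - 2 * p)
  obtain ⟨B, _, hB⟩ := exists_abs_le j
  refine ⟨max (C * D) 0 * B ^ 2, fun ε hε v hv => ?_⟩
  have hw : RapidDecay (mult (wt p) (Jmol j ε v)) :=
    (rapidDecay_Jmol j hε.1 (hv.norm_le_hsNorm hσ)).wt_mul p
  have hcorrection := wt_mul_itoCorrection_mul_conj j σ p ε v ξ
  have hdiffusion := fun i => hsNorm_sq_noiseCoefficient j σ p ε v (ξ i)
  refine ⟨((hasSum_mul_tsumFC_lie2_mul_conj hξ hsum hw (hD ε hε)).summable).congr fun k =>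
      (hcorrection k).symm,
    (summable_tsum_mul_norm_lie_sq hξ hsum hw (hD ε hε)).congr fun i => (hdiffusion i).symm, ?_⟩
  rw [hsInner, tsum_congr hcorrection, tsum_congr hdiffusion]
  refine (henergy D _ (hD ε hε) _ hw).trans ?_
  rw [hsNorm_sub_two_mul_mult_wt, mul_assoc _ (B ^ 2)]
  exact mul_le_mul (le_max_left _ _) (hsNorm_sq_Jmol_le hB ε hv) (sq_nonneg _) (le_max_right _ _)

theorem exists_transport_add_itoCorrection_energy_le (j : SchwartzMap ℝ ℝ) {σ p : ℝ}
    (hσ : 3 / 2 < σ) (hp : 2 * p ≤ σ) {ξ : ℕ → FC} (hξ : ∀ i, RapidDecay (ξ i))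
    (hreal : ∀ i, isReal (ξ i)) (hsum : ∀ q, Summable fun i => ell1Norm q (ξ i)) :
    ∃ C : ℝ, 0 ≤ C ∧ ∀ ε ∈ Set.Ioo (0 : ℝ) 1, ∀ u v : FC, isReal u → memHs σ u → memHs σ v →
      (Summable fun i => hsNorm σ (noiseCoefficient j ε p (ξ i) v) ^ 2) ∧
      2 * hsInner σ (-(Jmol j ε (mul (Jmol j ε u) (D1 (Jmol j ε v))))
            + (1 / 2 : ℝ) • itoCorrection j ε p ξ v) v
          + ∑' i, hsNorm σ (noiseCoefficient j ε p (ξ i) v) ^ 2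
        ≤ C * (1 + linfty (D1 u) + linfty (D1 v)) * (hsNorm σ u ^ 2 + hsNorm σ v ^ 2) := by
  obtain ⟨C₁, hC₁, htransport⟩ := exists_abs_hsInner_Jmol_mul_D1_le j hσ
  obtain ⟨C₂, hito⟩ := exists_itoCorrection_energy_le j (by linarith) hp hξ hreal hsum
  refine ⟨2 * C₁ + |C₂|, by positivity, fun ε hε u v hureal hu hv => ?_⟩
  obtain ⟨hsumA, hA⟩ := htransport ε hε.1 u v hureal hu hv
  obtain ⟨hsumB, hsumNoise, hB⟩ := hito ε hε v hv
  refine ⟨hsumNoise, ?_⟩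
  rw [two_mul_hsInner_neg_add_half_smul hsumA hsumB]
  have hU := linfty_nonneg (D1 u)
  have hV := linfty_nonneg (D1 v)
  have hnoise : C₂ * hsNorm σ v ^ 2
      ≤ |C₂| * (1 + linfty (D1 u) + linfty (D1 v)) * (hsNorm σ u ^ 2 + hsNorm σ v ^ 2) :=
    mul_le_mul ((le_abs_self _).trans (le_mul_of_one_le_right (abs_nonneg _) (by linarith)))
      (le_add_of_nonneg_left (sq_nonneg _)) (sq_nonneg _) (by positivity)
  have hspare : 0 ≤ 2 * C₁ * (hsNorm σ u ^ 2 + hsNorm σ v ^ 2) := by positivity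
  linarith [neg_abs_le (hsInner σ (Jmol j ε (mul (Jmol j ε u) (D1 (Jmol j ε v)))) v)]

lemma helm_eq_mult_wt : helm = mult (wt 1) := congrArg mult (funext fun k => (wt_one k).symm)

lemma helmInv_eq_mult_wt : helmInv = mult (wt (-1)) :=
  congrArg mult (funext fun k => (wt_neg_one k).symm)

lemma mult_wt_zero (c : FC) : mult (wt 0) c = c := by
  funext k
  rw [mult, wt_zero, Complex.ofReal_one, one_mul]

section

variable (j : ℝ → ℝ) (ε : ℝ) (ξ : ℕ → FC)

lemma gMol1_eq (u : FC) : gMol1 j ε ξ u = -(Jmol j ε (mul (Jmol j ε u) (D1 (Jmol j ε u))))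
    + (1 / 2 : ℝ) • itoCorrection j ε 1 ξ u := by
  rw [gMol1, itoCorrection, helm_eq_mult_wt, helmInv_eq_mult_wt]

lemma gMol2_eq (u η : FC) : gMol2 j ε ξ u η = -(Jmol j ε (mul (Jmol j ε u) (D1 (Jmol j ε η))))
    + (1 / 2 : ℝ) • itoCorrection j ε 0 ξ η := by
  simp only [gMol2, itoCorrection, neg_zero, mult_wt_zero]

lemma hMol1_eq (k : ℕ) (u : FC) : hMol1 j ε ξ k u = noiseCoefficient j ε 1 (ξ k) u := by
  rw [hMol1, noiseCoefficient, helm_eq_mult_wt, helmInv_eq_mult_wt]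

lemma hMol2_eq (k : ℕ) (η : FC) : hMol2 j ε ξ k η = noiseCoefficient j ε 0 (ξ k) η := by
  simp only [hMol2, noiseCoefficient, neg_zero, mult_wt_zero]

end

lemma summable_ell1Norm {ξ : ℕ → FC} (hmem : ∀ σ : ℝ, 0 ≤ σ → ∀ i, memHs σ (ξ i))
    (hsum : ∀ σ : ℝ, 0 ≤ σ → Summable fun i => hsNorm σ (ξ i)) (p : ℕ) :
    Summable fun i => ell1Norm p (ξ i) := by
  obtain ⟨C, hC⟩ := exists_ell1Norm_le_hsNorm p
  exact .of_nonneg_of_le (fun i => ell1Norm_nonneg p (ξ i))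
    (fun i => hC (ξ i) fun σ hσ => hmem σ hσ i) ((hsum _ (by positivity)).mul_left C)

end FC

theorem statement17_general (s : ℝ) (hs : 5 / 2 < s) (ξ : ℕ → FC)
    (hξmem : ∀ σ : ℝ, 0 ≤ σ → ∀ k : ℕ, FC.memHs σ (ξ k))
    (hξreal : ∀ k : ℕ, FC.isReal (ξ k))
    (hξsum : ∀ σ : ℝ, 0 ≤ σ → Summable fun k : ℕ => FC.hsNorm σ (ξ k))
    (jhat : SchwartzMap ℝ ℝ) :
    ∃ C > (0 : ℝ), ∀ ε : ℝ, ε ∈ Set.Ioo (0 : ℝ) 1 → ∀ u η : FC,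
      FC.memHs s u → FC.memHs (s - 1) η → FC.isReal u →
      Summable (fun k : ℕ =>
        FC.hsNorm s (hMol1 (⇑jhat) ε ξ k u) ^ 2
          + FC.hsNorm (s - 1) (hMol2 (⇑jhat) ε ξ k η) ^ 2) ∧
      2 * FC.pairInner s (s - 1) (gMol1 (⇑jhat) ε ξ u) (gMol2 (⇑jhat) ε ξ u η) u η
          + ∑' k : ℕ, (FC.hsNorm s (hMol1 (⇑jhat) ε ξ k u) ^ 2
              + FC.hsNorm (s - 1) (hMol2 (⇑jhat) ε ξ k η) ^ 2)
        ≤ C * (1 + FC.linfty (FC.D1 u) + FC.linfty (FC.D1 η))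
            * (FC.hsNorm s u ^ 2 + FC.hsNorm (s - 1) η ^ 2) := by
  have hrapid : ∀ i, FC.RapidDecay (ξ i) := fun i =>
    FC.rapidDecay_of_memHs fun σ hσ => hξmem σ hσ i
  have hsum := FC.summable_ell1Norm hξmem hξsum
  obtain ⟨C₁, hC₁, hvelocity⟩ := FC.exists_transport_add_itoCorrection_energy_le jhat
    (σ := s) (p := 1) (by linarith) (by linarith) hrapid hξreal hsum
  obtain ⟨C₂, hC₂, hdensity⟩ := FC.exists_transport_add_itoCorrection_energy_le jhat
    (σ := s - 1) (p := 0) (by linarith) (by linarith) hrapid hξreal hsum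
  refine ⟨4 * C₁ + C₂ + 1, by positivity, fun ε hε u η hu hη hureal => ?_⟩
  obtain ⟨hsumU, hleU⟩ := hvelocity ε hε u u hureal hu hu
  obtain ⟨hsumη, hleη⟩ := hdensity ε hε u η hureal (hu.mono (by linarith)) hη
  simp only [FC.pairInner, FC.gMol1_eq, FC.gMol2_eq, FC.hMol1_eq, FC.hMol2_eq]
  refine ⟨hsumU.add hsumη, ?_⟩
  rw [hsumU.tsum_add hsumη]
  have hu_mono := FC.hsNorm_sq_mono (show s - 1 ≤ s by linarith) hu
  set a := FC.linfty (FC.D1 u)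
  set b := FC.linfty (FC.D1 η)
  set N := FC.hsNorm s u ^ 2
  set M := FC.hsNorm (s - 1) η ^ 2
  have ha : 0 ≤ a := FC.linfty_nonneg _
  have hb : 0 ≤ b := FC.linfty_nonneg _
  have hM : 0 ≤ M := sq_nonneg _
  have hboundU : C₁ * (1 + a + a) * (N + N) ≤ C₁ * (2 * (1 + a + b)) * (2 * (N + M)) := by
    gcongr <;> linarith
  have hboundη : C₂ * (1 + a + b) * (FC.hsNorm (s - 1) u ^ 2 + M)
      ≤ C₂ * (1 + a + b) * (N + M) := by gcongr
  have hspare : 0 ≤ (1 + a + b) * (N + M) := by positivity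
  linarith

/-- Let `s > 11/2`, `Σ_k ‖ξ_k‖_{H^σ} < ∞` for all `σ ≥ 0`, and let `j` be a
fixed Schwartz mollifier (`ĵ` Schwartz, `0 ≤ ĵ ≤ 1`, `ĵ = 1` on `[-1,1]`).  Then there is
`C > 0`, independent of `ε`, such that for all `ε ∈ (0,1)` and `X = (u,η) ∈ H^s × H^{s-1}`:
`2 (g_ε(X), X)_{H^s×H^{s-1}} + Σ_k ‖h_ε^k(X)‖²_{H^s×H^{s-1}}`
`≤ C (1 + ‖∂ₓu‖_{L^∞} + ‖∂ₓη‖_{L^∞}) (‖u‖²_{H^s} + ‖η‖²_{H^{s-1}})`. -/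
theorem statement17 (s : ℝ) (hs : 11 / 2 < s) (ξ : ℕ → FC)
    (hξmem : ∀ σ : ℝ, 0 ≤ σ → ∀ k : ℕ, FC.memHs σ (ξ k))
    (hξreal : ∀ k : ℕ, FC.isReal (ξ k))
    (hξsum : ∀ σ : ℝ, 0 ≤ σ → Summable fun k : ℕ => FC.hsNorm σ (ξ k))
    (jhat : SchwartzMap ℝ ℝ)
    (hj0 : ∀ x : ℝ, 0 ≤ jhat x) (hj1 : ∀ x : ℝ, jhat x ≤ 1)
    (hjone : ∀ x : ℝ, |x| ≤ 1 → jhat x = 1) :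
    ∃ C > (0 : ℝ), ∀ ε : ℝ, ε ∈ Set.Ioo (0 : ℝ) 1 → ∀ u η : FC,
      FC.memHs s u → FC.memHs (s - 1) η → FC.isReal u → FC.isReal η →
      Summable (fun k : ℕ =>
        FC.hsNorm s (hMol1 (⇑jhat) ε ξ k u) ^ 2
          + FC.hsNorm (s - 1) (hMol2 (⇑jhat) ε ξ k η) ^ 2) ∧
      2 * FC.pairInner s (s - 1) (gMol1 (⇑jhat) ε ξ u) (gMol2 (⇑jhat) ε ξ u η) u η
          + ∑' k : ℕ, (FC.hsNorm s (hMol1 (⇑jhat) ε ξ k u) ^ 2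
              + FC.hsNorm (s - 1) (hMol2 (⇑jhat) ε ξ k η) ^ 2)
        ≤ C * (1 + FC.linfty (FC.D1 u) + FC.linfty (FC.D1 η))
            * (FC.hsNorm s u ^ 2 + FC.hsNorm (s - 1) η ^ 2) := by
  obtain ⟨C, hC, hbound⟩ := statement17_general s (by linarith) ξ hξmem hξreal hξsum jhat
  exact ⟨C, hC, fun ε hε u η hu hη hureal _ => hbound ε hε u η hu hη hureal⟩
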